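/- arXiv:2007.02059 — 11 statements merged into one kernel-verified Lean document; each statement's English description precedes it below -/
import Mathlib

section
/- For every positive integer k and every integer s with 0 ≤ s ≤ k, there exists a Gallai coloring of the complete graph on f(k,s) vertices with colors from {1,...,k} that contains no monochromatic copy of K4^+ in any color i ∈ {1,...,s} and no monochromatic copy of K3 in any color i ∈ {s+1,...,k}. -/
/-- A symmetric edge-coloring function on the complete graph on `Fin n`. -/
def IsSym {n : ℕ} {α : Type*} (c : Fin n → Fin n → α) : Prop :=
  ∀ u v : Fin n, c u v = c v u

/-- A Gallai coloring: no triangle whose three edges get three distinct colors. -/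
def NoRainbowTriangle {n : ℕ} {α : Type*} (c : Fin n → Fin n → α) : Prop :=
  ∀ u v w : Fin n, u ≠ v → u ≠ w → v ≠ w →
    c u v = c u w ∨ c u v = c v w ∨ c u w = c v w

/-- There is a monochromatic triangle in color `i`. -/
def HasMonoK3 {n : ℕ} {α : Type*} (c : Fin n → Fin n → α) (i : α) : Prop :=
  ∃ a b d : Fin n, a ≠ b ∧ a ≠ d ∧ b ≠ d ∧
    c a b = i ∧ c a d = i ∧ c b d = i

/-- There is a monochromatic copy of `K₄⁺ = K₁ ∨ (K₃ + K₁)` in color `i`: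
a vertex `x` joined to all of `a, b, d, e`, where `a b d` is a triangle
(equivalently `K₄` on `{x,a,b,d}` together with a pendant edge `x e`). -/
def HasMonoK4plus {n : ℕ} {α : Type*} (c : Fin n → Fin n → α) (i : α) : Prop :=
  ∃ x a b d e : Fin n,
    x ≠ a ∧ x ≠ b ∧ x ≠ d ∧ x ≠ e ∧ a ≠ b ∧ a ≠ d ∧ a ≠ e ∧ b ≠ d ∧ b ≠ e ∧ d ≠ e ∧
    c x a = i ∧ c x b = i ∧ c x d = i ∧ c x e = i ∧
    c a b = i ∧ c a d = i ∧ c b d = i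

/-- The function `f(k,s)` from the paper (for `1 ≤ k` and `s ≤ k`). -/
def f (k s : ℕ) : ℕ :=
  if Even s ∧ Even (k - s) then 17 ^ (s / 2) * 5 ^ ((k - s) / 2)
  else if Even s then 2 * 17 ^ (s / 2) * 5 ^ ((k - s - 1) / 2)
  else if s = k then 4 * 17 ^ ((k - 1) / 2)
  else if Odd (k - s) then 8 * 17 ^ ((s - 1) / 2) * 5 ^ ((k - s - 1) / 2)
  else 16 * 17 ^ ((s - 1) / 2) * 5 ^ ((k - s - 2) / 2)

/-- Existence of a good colouring on `n` vertices, with `A` the colours avoiding `K₄⁺` and `B` the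
colours avoiding triangles. -/
def Good (n : ℕ) (A B : Set ℕ) : Prop :=
  ∃ (V : Type) (_ : Fintype V) (c : V → V → ℕ), Fintype.card V = n ∧
    (∀ u v, c u v = c v u) ∧
    (∀ u v, u ≠ v → c u v ∈ A ∪ B) ∧
    (∀ u v w, u ≠ v → u ≠ w → v ≠ w → c u v = c u w ∨ c u v = c v w ∨ c u w = c v w) ∧
    (∀ i ∈ A, ∀ x a b d e, x ≠ a → x ≠ b → x ≠ d → x ≠ e → a ≠ b → a ≠ d → a ≠ e →
      b ≠ d → b ≠ e → d ≠ e → c x a = i → c x b = i → c x d = i → c x e = i →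
      c a b = i → c a d = i → c b d = i → False) ∧
    (∀ i ∈ B, ∀ a b d, a ≠ b → a ≠ d → b ≠ d → c a b = i → c a d = i → c b d = i → False)

/-- Substituting a good colouring into a base colouring using new colours. -/
theorem Good.subst {n : ℕ} {A B A' B' : Set ℕ} (h : Good n A B)
    (m : ℕ) (b : Fin m → Fin m → ℕ)
    (hsym : ∀ u v, b u v = b v u)
    (hcol : ∀ u v, u ≠ v → b u v ∈ A' ∪ B')
    (hdis : ∀ i ∈ A' ∪ B', i ∉ A ∪ B)
    (hgal : ∀ u v w, u ≠ v → u ≠ w → v ≠ w → b u v = b u w ∨ b u v = b v w ∨ b u w = b v w)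
    (h4 : ∀ i ∈ A', ∀ x y z w, x ≠ y → x ≠ z → x ≠ w → y ≠ z → y ≠ w → z ≠ w →
      b x y = i → b x z = i → b x w = i → b y z = i → b y w = i → b z w = i → False)
    (h3 : ∀ i ∈ B', ∀ x y z, x ≠ y → x ≠ z → y ≠ z →
      b x y = i → b x z = i → b y z = i → False) :
    Good (n * m) (A ∪ A') (B ∪ B') := by
  classical
  obtain ⟨V, _, c, hn, csym, ccol, cgal, c4, c3⟩ := h
  let C : Fin m × V → Fin m × V → ℕ := fun p q => if p.1 = q.1 then c p.2 q.2 else b p.1 q.1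
  have hold : ∀ p q i, p ≠ q → C p q = i → i ∈ A ∪ B → p.1 = q.1 ∧ p.2 ≠ q.2 ∧ c p.2 q.2 = i := by
    rintro ⟨p, u⟩ ⟨q, v⟩ i hne hc hi
    simp only [C] at hc
    split_ifs at hc with heq
    · refine ⟨heq, ?_, hc⟩
      rintro rfl
      exact hne (by simpa using heq)
    · exact absurd hi (hdis _ (hc ▸ hcol _ _ heq))
  have hnew : ∀ p q i, p ≠ q → C p q = i → i ∈ A' ∪ B' → p.1 ≠ q.1 ∧ b p.1 q.1 = i := by
    rintro ⟨p, u⟩ ⟨q, v⟩ i hne hc hi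
    simp only [C] at hc
    split_ifs at hc with heq
    · have : u ≠ v := by
        rintro rfl
        exact hne (by simpa using heq)
      exact absurd (hc ▸ ccol _ _ this) (hdis _ hi)
    · exact ⟨heq, hc⟩
  refine ⟨Fin m × V, inferInstance, C, ?_, ?_, ?_, ?_, ?_, ?_⟩
  · simp [hn, mul_comm]
  · rintro ⟨p, u⟩ ⟨q, v⟩
    simp only [C]
    rw [csym u v, hsym p q]
    simp only [eq_comm]
  · rintro ⟨p, u⟩ ⟨q, v⟩ hne
    simp only [C]
    split_ifs with heq
    · have : u ≠ v := by
        rintro rfl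
        exact hne (by simpa using heq)
      rcases ccol _ _ this with h | h
      · exact Or.inl (Or.inl h)
      · exact Or.inr (Or.inl h)
    · rcases hcol _ _ heq with h | h
      · exact Or.inl (Or.inr h)
      · exact Or.inr (Or.inr h)
  · rintro ⟨p, u⟩ ⟨q, v⟩ ⟨r, w⟩ h1 h2 h3
    simp only [C]
    by_cases e1 : p = q
    · subst e1
      by_cases e2 : p = r
      · subst e2
        simp only [if_true]
        exact cgal u v w (by simpa using h1) (by simpa using h2) (by simpa using h3)
      · simp [e2]
    · by_cases e2 : p = r
      · subst e2
        have : q ≠ p := fun h => e1 h.symm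
        simp [e1, this, hsym q p]
      · by_cases e3 : q = r
        · subst e3
          simp [e1]
        · simp only [e1, e2, e3, if_false]
          exact hgal p q r e1 e2 e3
  · rintro i (hi | hi) x a y d e n1 n2 n3 n4 n5 n6 n7 n8 n9 n10 k1 k2 k3 k4 k5 k6 k7
    · have hi' : i ∈ A ∪ B := Or.inl hi
      obtain ⟨p1, q1, r1⟩ := hold _ _ _ n1 k1 hi'
      obtain ⟨p2, q2, r2⟩ := hold _ _ _ n2 k2 hi'
      obtain ⟨p3, q3, r3⟩ := hold _ _ _ n3 k3 hi'
      obtain ⟨p4, q4, r4⟩ := hold _ _ _ n4 k4 hi'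
      obtain ⟨p5, q5, r5⟩ := hold _ _ _ n5 k5 hi'
      obtain ⟨p6, q6, r6⟩ := hold _ _ _ n6 k6 hi'
      obtain ⟨p7, q7, r7⟩ := hold _ _ _ n8 k7 hi'
      exact c4 i hi x.2 a.2 y.2 d.2 e.2 q1 q2 q3 q4 q5 q6
        (fun h => n7 (Prod.ext (p1.symm.trans p4) h)) q7
        (fun h => n9 (Prod.ext (p2.symm.trans p4) h))
        (fun h => n10 (Prod.ext (p3.symm.trans p4) h)) r1 r2 r3 r4 r5 r6 r7
    · have hi' : i ∈ A' ∪ B' := Or.inl hi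
      obtain ⟨p1, r1⟩ := hnew _ _ _ n1 k1 hi'
      obtain ⟨p2, r2⟩ := hnew _ _ _ n2 k2 hi'
      obtain ⟨p3, r3⟩ := hnew _ _ _ n3 k3 hi'
      obtain ⟨p5, r5⟩ := hnew _ _ _ n5 k5 hi'
      obtain ⟨p6, r6⟩ := hnew _ _ _ n6 k6 hi'
      obtain ⟨p7, r7⟩ := hnew _ _ _ n8 k7 hi'
      exact h4 i hi _ _ _ _ p1 p2 p3 p5 p6 p7 r1 r2 r3 r5 r6 r7
  · rintro i (hi | hi) x y z n1 n2 n3 k1 k2 k3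
    · have hi' : i ∈ A ∪ B := Or.inr hi
      obtain ⟨p1, q1, r1⟩ := hold _ _ _ n1 k1 hi'
      obtain ⟨p2, q2, r2⟩ := hold _ _ _ n2 k2 hi'
      obtain ⟨p3, q3, r3⟩ := hold _ _ _ n3 k3 hi'
      exact c3 i hi _ _ _ q1 q2 q3 r1 r2 r3
    · have hi' : i ∈ A' ∪ B' := Or.inr hi
      obtain ⟨p1, r1⟩ := hnew _ _ _ n1 k1 hi'
      obtain ⟨p2, r2⟩ := hnew _ _ _ n2 k2 hi'
      obtain ⟨p3, r3⟩ := hnew _ _ _ n3 k3 hi'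
      exact h3 i hi _ _ _ p1 p2 p3 r1 r2 r3

/-- Adjacency in the Paley graph on 17 vertices. -/
def paley (x y : Fin 17) : Bool := Nat.testBit 107286 ((x.val + 17 - y.val) % 17)

/-- Adjacency in the five-cycle. -/
def pent (x y : Fin 5) : Bool := Nat.testBit 18 ((x.val + 5 - y.val) % 5)

theorem paley_symm : ∀ x y, paley x y = paley y x := by decide +kernel

theorem paley_pos : ∀ x y, paley x y = true → ∀ z, paley x z = true → paley y z = true →
    ∀ w, paley x w = true → paley y w = true → paley z w = true → False := by decide +kernel

theorem paley_neg : ∀ x y, x ≠ y → paley x y = false → ∀ z, x ≠ z → y ≠ z →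
    paley x z = false → paley y z = false →
    ∀ w, x ≠ w → y ≠ w → z ≠ w →
    paley x w = false → paley y w = false → paley z w = false → False := by decide +kernel

theorem pent_symm : ∀ x y, pent x y = pent y x := by decide +kernel

theorem pent_pos : ∀ x y, pent x y = true → ∀ z, pent x z = true → pent y z = true → False := by
  decide +kernel

theorem pent_neg : ∀ x y, x ≠ y → pent x y = false → ∀ z, x ≠ z → y ≠ z →
    pent x z = false → pent y z = false → False := by decide +kernel

theorem two_col (p q : ℕ) (a b c : Bool) :
    (bif a then p else q) = (bif b then p else q) ∨ (bif a then p else q) = (bif c then p else q) ∨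
    (bif b then p else q) = (bif c then p else q) := by
  cases a <;> cases b <;> cases c <;> simp

theorem col_p {p q : ℕ} (h : p ≠ q) (a : Bool) : (bif a then p else q) = p ↔ a = true := by
  cases a <;> simp [h.symm]

theorem col_q {p q : ℕ} (h : p ≠ q) (a : Bool) : (bif a then p else q) = q ↔ a = false := by
  cases a <;> simp [h]

theorem Good.r17 {n : ℕ} {A B : Set ℕ} (h : Good n A B) (p q : ℕ) (hpq : p ≠ q)
    (hp : p ∉ A ∪ B) (hq : q ∉ A ∪ B) : Good (n * 17) (A ∪ {p, q}) B := by
  have := h.subst (A' := {p, q}) (B' := ∅) 17 (fun x y => bif paley x y then p else q)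
    (fun u v => by simp only [paley_symm u v])
    (fun u v _ => by cases h : paley u v <;> simp)
    (by rintro i ((rfl | rfl) | h) <;> [exact hp; exact hq; exact h.elim])
    (fun u v w _ _ _ => two_col p q _ _ _)
    (by
      rintro i (rfl | rfl) x y z w n1 n2 n3 n4 n5 n6
      · simp only [col_p hpq]
        intro k1 k2 k3 k4 k5 k6
        exact paley_pos x y k1 z k2 k4 w k3 k5 k6
      · simp only [col_q hpq]
        intro k1 k2 k3 k4 k5 k6
        exact paley_neg x y n1 k1 z n2 n4 k2 k4 w n3 n5 n6 k3 k5 k6)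
    (fun i hi => hi.elim)
  simpa using this

theorem Good.r5 {n : ℕ} {A B : Set ℕ} (h : Good n A B) (p q : ℕ) (hpq : p ≠ q)
    (hp : p ∉ A ∪ B) (hq : q ∉ A ∪ B) : Good (n * 5) A (B ∪ {p, q}) := by
  have := h.subst (A' := ∅) (B' := {p, q}) 5 (fun x y => bif pent x y then p else q)
    (fun u v => by simp only [pent_symm u v])
    (fun u v _ => by cases h : pent u v <;> simp)
    (by rintro i (h | (rfl | rfl)) <;> [exact h.elim; exact hp; exact hq])
    (fun u v w _ _ _ => two_col p q _ _ _)
    (fun i hi => hi.elim)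
    (by
      rintro i (rfl | rfl) x y z n1 n2 n3
      · simp only [col_p hpq]
        intro k1 k2 k3
        exact pent_pos x y k1 z k2 k3
      · simp only [col_q hpq]
        intro k1 k2 k3
        exact pent_neg x y n1 k1 z n2 n3 k2 k3)
  simpa using this

theorem Good.r2 {n : ℕ} {A B : Set ℕ} (h : Good n A B) (p : ℕ)
    (hp : p ∉ A ∪ B) : Good (n * 2) A (B ∪ {p}) := by
  have := h.subst (A' := ∅) (B' := {p}) 2 (fun x y => p)
    (fun u v => rfl)
    (fun u v _ => by simp)
    (by rintro i (h | rfl) <;> [exact h.elim; exact hp])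
    (fun u v w _ _ _ => Or.inl rfl)
    (fun i hi => hi.elim)
    (by
      intro i _ x y z n1 n2 n3
      omega)
  simpa using this

theorem good_one : Good 1 (Set.Icc 1 0) ∅ := by
  refine ⟨Fin 1, inferInstance, fun _ _ => 0, by simp, fun _ _ => rfl, ?_, ?_, ?_, ?_⟩
  · intro u v h
    exact absurd (Subsingleton.elim u v) h
  · intros
    exact Or.inl rfl
  · intro i hi
    simp at hi
  · intro i hi
    exact hi.elim

theorem good_four : Good 4 (Set.Icc 1 1) ∅ := by
  refine ⟨Fin 4, inferInstance, fun _ _ => 1, by simp, fun _ _ => rfl, ?_, ?_, ?_, ?_⟩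
  · intro u v h
    simp
  · intros
    exact Or.inl rfl
  · intro i hi x a b d e
    intros
    omega
  · intro i hi
    exact hi.elim

theorem Good.iter17 {n r : ℕ} (h : Good n (Set.Icc 1 r) ∅) (t : ℕ) :
    Good (n * 17 ^ t) (Set.Icc 1 (r + 2 * t)) ∅ := by
  induction t with
  | zero => simpa using h
  | succ t ih =>
    have := ih.r17 (r + 2 * t + 1) (r + 2 * t + 2) (by omega) (by simp) (by simp)
    convert this using 1
    · ring
    · ext i
      simp only [Set.mem_Icc, Set.mem_union, Set.mem_insert_iff, Set.mem_singleton_iff]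
      omega

theorem Good.iter5 {n s : ℕ} (h : Good n (Set.Icc 1 s) ∅) (t : ℕ) :
    Good (n * 5 ^ t) (Set.Icc 1 s) (Set.Icc (s + 1) (s + 2 * t)) := by
  induction t with
  | zero => simpa using h
  | succ t ih =>
    have := ih.r5 (s + 2 * t + 1) (s + 2 * t + 2) (by omega) (by simp only [Set.mem_union, Set.mem_Icc]; omega) (by simp only [Set.mem_union, Set.mem_Icc]; omega)
    convert this using 1
    · ring
    · ext i
      simp only [Set.mem_Icc, Set.mem_union, Set.mem_insert_iff, Set.mem_singleton_iff]
      omega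

theorem Good.step2 {n s k : ℕ} (hs : s ≤ k) (h : Good n (Set.Icc 1 s) (Set.Icc (s + 1) k)) :
    Good (n * 2) (Set.Icc 1 s) (Set.Icc (s + 1) (k + 1)) := by
  have := h.r2 (k + 1) (by simp; omega)
  convert this using 1
  ext i
  simp only [Set.mem_Icc, Set.mem_union, Set.mem_singleton_iff]
  omega

theorem good_f (k s : ℕ) (hs : s ≤ k) : Good (f k s) (Set.Icc 1 s) (Set.Icc (s + 1) k) := by
  obtain ⟨j, rfl⟩ := Nat.exists_eq_add_of_le hs
  rcases Nat.even_or_odd' s with ⟨a, rfl | rfl⟩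
  · have h0 : Good (17 ^ a) (Set.Icc 1 (2 * a)) ∅ := by simpa using good_one.iter17 a
    rcases Nat.even_or_odd' j with ⟨t, rfl | rfl⟩
    · have e : f (2 * a + 2 * t) (2 * a) = 17 ^ a * 5 ^ t := by simp [f]
      rw [e]
      exact h0.iter5 t
    · have e : f (2 * a + (2 * t + 1)) (2 * a) = 17 ^ a * 5 ^ t * 2 := by
        simp [f]
        ring
      rw [e]
      exact (h0.iter5 t).step2 (Nat.le_add_right _ _)
  · have h0 : Good (4 * 17 ^ a) (Set.Icc 1 (2 * a + 1)) ∅ := by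
      have := good_four.iter17 a
      rwa [add_comm] at this
    rcases Nat.even_or_odd' j with ⟨t, rfl | rfl⟩
    · rcases t with _ | t
      · have e : f (2 * a + 1 + 2 * 0) (2 * a + 1) = 4 * 17 ^ a := by
          simp [f]
        rw [e]
        simpa using h0
      · have e : f (2 * a + 1 + 2 * (t + 1)) (2 * a + 1) = 4 * 17 ^ a * 5 ^ t * 2 * 2 := by
          have : (2 * (t + 1) - 2) / 2 = t := by omega
          have ho : ¬ Odd (2 * (t + 1)) := by simp
          simp [f, ho, this]
          ring
        rw [e]
        have h1 := (h0.iter5 t).step2 (Nat.le_add_right _ _)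
        exact h1.step2 (k := 2 * a + 1 + 2 * t + 1) (by omega)
    · have e : f (2 * a + 1 + (2 * t + 1)) (2 * a + 1) = 4 * 17 ^ a * 5 ^ t * 2 := by
        simp [f]
        ring
      rw [e]
      exact (h0.iter5 t).step2 (Nat.le_add_right _ _)

theorem gallai_ramsey_lower_construction (k s : ℕ) (hk : 1 ≤ k) (hs : s ≤ k) :
    ∃ c : Fin (f k s) → Fin (f k s) → ℕ, IsSym c ∧
      (∀ u v : Fin (f k s), u ≠ v → c u v ∈ Finset.Icc 1 k) ∧
      NoRainbowTriangle c ∧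
      (∀ i ∈ Finset.Icc 1 s, ¬ HasMonoK4plus c i) ∧
      (∀ i ∈ Finset.Icc (s + 1) k, ¬ HasMonoK3 c i) := by
  obtain ⟨V, _, c, hn, csym, ccol, cgal, c4, c3⟩ := good_f k s hs
  let g : Fin (f k s) ≃ V := (Fintype.equivFinOfCardEq hn).symm
  have hg : ∀ {u v}, u ≠ v → g u ≠ g v := fun h => g.injective.ne h
  refine ⟨fun u v => c (g u) (g v), fun u v => csym _ _, ?_, ?_, ?_, ?_⟩
  · intro u v h
    have := ccol _ _ (hg h)
    simp only [Set.mem_union, Set.mem_Icc] at this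
    simp only [Finset.mem_Icc]
    omega
  · intro u v w h1 h2 h3
    exact cgal _ _ _ (hg h1) (hg h2) (hg h3)
  · rintro i hi ⟨x, a, b, d, e, n1, n2, n3, n4, n5, n6, n7, n8, n9, n10, k1, k2, k3, k4, k5, k6, k7⟩
    exact c4 i (by simpa using hi) _ _ _ _ _ (hg n1) (hg n2) (hg n3) (hg n4) (hg n5) (hg n6)
      (hg n7) (hg n8) (hg n9) (hg n10) k1 k2 k3 k4 k5 k6 k7
  · rintro i hi ⟨a, b, d, n1, n2, n3, k1, k2, k3⟩
    exact c3 i (by simpa using hi) _ _ _ (hg n1) (hg n2) (hg n3) k1 k2 k3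
end

section
/- For every positive integer k, the Gallai-Ramsey number gr_k(K3 : K4^+) equals 17^{k/2} + 1 if k is even, and 4·17^{(k−1)/2} + 1 if k is odd. -/
section GR
variable {α : Type*} [DecidableEq α]

def NoE (c : α → α → ℕ) (V : Finset α) (i : ℕ) : Prop :=
  ∀ a ∈ V, ∀ b ∈ V, a ≠ b → c a b ≠ i
def NoT (c : α → α → ℕ) (V : Finset α) (i : ℕ) : Prop :=
  ∀ a ∈ V, ∀ b ∈ V, ∀ d ∈ V, a ≠ b → a ≠ d → b ≠ d →
    c a b = i → c a d = i → c b d = i → False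
def NoF (c : α → α → ℕ) (V : Finset α) (i : ℕ) : Prop :=
  ∀ x ∈ V, ∀ a ∈ V, ∀ b ∈ V, ∀ d ∈ V, x ≠ a → x ≠ b → x ≠ d → a ≠ b → a ≠ d → b ≠ d →
    c x a = i → c x b = i → c x d = i → c a b = i → c a d = i → c b d = i → False
def NoP (c : α → α → ℕ) (V : Finset α) (i : ℕ) : Prop :=
  ∀ x ∈ V, ∀ a ∈ V, ∀ b ∈ V, ∀ d ∈ V, ∀ e ∈ V,
    x ≠ a → x ≠ b → x ≠ d → x ≠ e → a ≠ b → a ≠ d → a ≠ e → b ≠ d → b ≠ e → d ≠ e →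
    c x a = i → c x b = i → c x d = i → c x e = i → c a b = i → c a d = i → c b d = i → False

structure Gal (c : α → α → ℕ) : Prop where
  sym : ∀ u v, c u v = c v u
  tri : ∀ u v w, u ≠ v → u ≠ w → v ≠ w → c u v = c u w ∨ c u v = c v w ∨ c u w = c v w

/-! Gallai's structure theorem -/

/-- A partition of `V` given by fibres of `p`, with colors `r`, `b` between the parts. -/
structure GPart (c : α → α → ℕ) (V : Finset α) (r b : ℕ) (p : α → Finset α) : Prop where
  two : ∀ u ∈ V, ∀ v ∈ V, p u ≠ p v → c u v = r ∨ c u v = b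
  mod : ∀ u ∈ V, ∀ u' ∈ V, ∀ v ∈ V, p u = p u' → p u ≠ p v → c u v = c u' v
  ne : ∃ u ∈ V, ∃ v ∈ V, p u ≠ p v

lemma part_of_cut {c : α → α → ℕ} (hc : Gal c) {V X : Finset α} {r b : ℕ}
    (hX : X ⊆ V) (h0 : X.Nonempty) (h1 : X ≠ V)
    (h : ∀ x ∈ X, ∀ y ∈ V, y ∉ X → c x y = r ∨ c x y = b) :
    ∃ p, GPart c V r b p := by
  classical
  let O : α → α → Prop := fun u v => u ∈ V ∧ v ∈ V ∧ u ≠ v ∧ c u v ≠ r ∧ c u v ≠ b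
  have hO : Std.Symm O := by
    constructor
    rintro u v ⟨h1, h2, h3, h4, h5⟩
    exact ⟨h2, h1, h3.symm, hc.sym u v ▸ h4, hc.sym u v ▸ h5⟩
  let R := Relation.ReflTransGen O
  have hR : ∀ {u v}, R u v → R v u := fun h => (Relation.ReflTransGen.stdSymm (r := O)).symm _ _ h
  let p : α → Finset α := fun u => V.filter (fun v => R u v)
  have hp : ∀ u ∈ V, ∀ v ∈ V, (p u = p v ↔ R u v) := by
    intro u hu v hv
    constructor
    · intro e
      have : v ∈ p v := Finset.mem_filter.2 ⟨hv, Relation.ReflTransGen.refl⟩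
      rw [← e] at this
      exact (Finset.mem_filter.1 this).2
    · intro e
      ext w
      simp only [p, Finset.mem_filter]
      exact ⟨fun ⟨a, q⟩ => ⟨a, (hR e).trans q⟩, fun ⟨a, q⟩ => ⟨a, e.trans q⟩⟩
  have two : ∀ u ∈ V, ∀ v ∈ V, ¬ R u v → c u v = r ∨ c u v = b := by
    intro u hu v hv hn
    by_contra hcon
    push Not at hcon
    apply hn
    by_cases e : u = v
    · subst e; exact Relation.ReflTransGen.refl
    · exact Relation.ReflTransGen.single ⟨hu, hv, e, hcon.1, hcon.2⟩
  refine ⟨p, ?_, ?_, ?_⟩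
  · intro u hu v hv hne
    rw [Ne, hp u hu v hv] at hne
    exact two u hu v hv hne
  · intro u hu u' hu' v hv he hne
    rw [hp u hu u' hu'] at he
    rw [Ne, hp u hu v hv] at hne
    induction he with
    | refl => rfl
    | @tail x y hux hxy ih =>
      have h1 := ih hxy.1
      rw [h1]
      have hxv : ¬ R x v := fun q => hne (Relation.ReflTransGen.trans hux q)
      have hyv : ¬ R y v := fun q => hne (Relation.ReflTransGen.trans (hux.tail hxy) q)
      have a1 := two x hxy.1 v hv hxv
      have a2 := two y hxy.2.1 v hv hyv
      have n1 : x ≠ v := fun e => hxv (e ▸ Relation.ReflTransGen.refl)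
      have n2 : y ≠ v := fun e => hyv (e ▸ Relation.ReflTransGen.refl)
      have := hc.tri x y v hxy.2.2.1 n1 n2
      have b1 := hxy.2.2.2
      grind
  · obtain ⟨x, hx⟩ := h0
    obtain ⟨y, hy, hyX⟩ : ∃ y ∈ V, y ∉ X := by
      by_contra hcon
      push Not at hcon
      exact h1 (Finset.Subset.antisymm hX hcon)
    refine ⟨x, hX hx, y, hy, ?_⟩
    rw [Ne, hp x (hX hx) y hy]
    intro q
    have : y ∈ X := by
      clear hyX hy
      induction q with
      | refl => exact hx
      | @tail s t hs hst ih =>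
        by_contra ht
        have := h s ih t hst.2.1 ht
        have b1 := hst.2.2.2
        grind
    exact hyX this

lemma gallai_cut {c : α → α → ℕ} (hc : Gal c) (V : Finset α) : 2 ≤ V.card →
    ∃ r b, ∃ X ⊆ V, X.Nonempty ∧ X ≠ V ∧
      ∀ x ∈ X, ∀ y ∈ V, y ∉ X → c x y = r ∨ c x y = b := by
  classical
  induction V using Finset.induction_on with
  | empty => simp
  | @insert v V hv ih =>
    intro hcard
    rw [Finset.card_insert_of_notMem hv] at hcard
    -- a cut at v
    have cutv : ∀ r b, (∀ y ∈ V, c v y = r ∨ c v y = b) → ∃ r b, ∃ X ⊆ insert v V, X.Nonempty ∧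
        X ≠ insert v V ∧ ∀ x ∈ X, ∀ y ∈ insert v V, y ∉ X → c x y = r ∨ c x y = b := by
      intro r b h
      refine ⟨r, b, {v}, by simp, by simp, ?_, ?_⟩
      · intro e
        have := congrArg Finset.card e
        rw [Finset.card_insert_of_notMem hv] at this
        simp at this
        subst this
        simp at hcard
      · intro x hx y hy hyx
        simp only [Finset.mem_singleton] at hx hyx
        subst hx
        exact h y (by grind)
    by_cases h2 : 2 ≤ V.card
    · obtain ⟨r, b, X, hXV, hX0, hX1, hX⟩ := ih h2
      obtain ⟨p, hp⟩ := part_of_cut hc hXV hX0 hX1 hX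
      by_cases hcase : ∃ u ∈ V, ∀ w ∈ V, p u = p w → c v w = r ∨ c v w = b
      · obtain ⟨u, hu, hw⟩ := hcase
        refine ⟨r, b, V.filter (fun w => p u = p w), ?_, ⟨u, by simp [hu]⟩, ?_, ?_⟩
        · intro x; simp only [Finset.mem_filter, Finset.mem_insert]; tauto
        · intro e
          have : v ∈ V.filter (fun w => p u = p w) := by rw [e]; simp
          exact hv (Finset.mem_filter.1 this).1
        · intro x hx y hy hyx
          simp only [Finset.mem_filter, Finset.mem_insert] at hx hy hyx
          rcases hy with rfl | hy
          · rw [hc.sym]; exact hw x hx.1 hx.2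
          · apply hp.two x hx.1 y hy
            intro e; exact hyx ⟨hy, hx.2.trans e⟩
      · push Not at hcase
        -- any w has u in another class joined by an outer color
        obtain ⟨u0, hu0, u1, hu1, h01⟩ := hp.ne
        obtain ⟨w0, hw0, e0, n0⟩ := hcase u0 hu0
        obtain ⟨w1, hw1, e1, n1⟩ := hcase u1 hu1
        have nev : ∀ w ∈ V, v ≠ w := fun w hw e => hv (e ▸ hw)
        have key : ∀ w ∈ V, ∀ w' ∈ V, p w ≠ p w' → (c v w ≠ r ∧ c v w ≠ b) →
            c v w' = c v w ∨ c v w' = c w w' := by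
          intro w hw w' hw' hne hn
          have := hc.tri v w w' (nev w hw) (nev w' hw') (fun e => hne (e ▸ rfl))
          have := hp.two w hw w' hw' hne
          grind
        have hw01 : p w0 ≠ p w1 := by rw [← e0, ← e1]; exact h01
        have hα : c v w1 = c v w0 := by
          have := key w0 hw0 w1 hw1 hw01 n0
          have := hp.two w0 hw0 w1 hw1 hw01
          grind
        have hall : ∀ w ∈ V, c v w = c v w0 ∨ c v w = r ∨ c v w = b := by
          intro w hw
          by_cases e : p w0 = p w
          · have := key w1 hw1 w hw (by rw [← e]; exact hw01.symm) n1
            have := hp.two w1 hw1 w hw (by rw [← e]; exact hw01.symm)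
            grind
          · have := key w0 hw0 w hw e n0
            have := hp.two w0 hw0 w hw e
            grind
        -- outer edges all have the same color
        have hout : ∀ u ∈ V, ∃ w ∈ V, p u = p w ∧ c v w = c v w0 := by
          intro u hu
          obtain ⟨w, hw, e, n⟩ := hcase u hu
          exact ⟨w, hw, e, by have := hall w hw; grind⟩
        -- if v-w is r or b then all edges from class of w to another class have that color
        have hrb : ∀ w ∈ V, (c v w = r ∨ c v w = b) → ∀ u ∈ V, p w ≠ p u → c w u = c v w := by
          intro w hw hrb u hu hne
          obtain ⟨x, hx, e, hxc⟩ := hout u hu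
          have h1 : c u w = c x w := hp.mod u hu x hx w hw e hne.symm
          have h2 := key x hx w hw (by rw [← e]; exact hne.symm) (by rw [hxc]; exact n0)
          rw [hc.sym w u, h1]
          rw [hxc] at h2
          grind
        by_cases hr : ∃ w ∈ V, c v w = r
        · obtain ⟨w, hw, hwr⟩ := hr
          apply cutv (c v w0) r
          intro y hy
          by_contra hcon
          push Not at hcon
          have hyb : c v y = b := by have := hall y hy; grind
          by_cases e : p w = p y
          · obtain ⟨z, hz, hne⟩ : ∃ z ∈ V, p w ≠ p z := by
              by_cases q : p w = p w0
              · exact ⟨w1, hw1, by rw [q]; exact hw01⟩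
              · exact ⟨w0, hw0, q⟩
            have a1 := hrb w hw (Or.inl hwr) z hz hne
            have a2 := hrb y hy (Or.inr hyb) z hz (e ▸ hne)
            have a3 := hp.mod w hw y hy z hz e hne
            grind
          · have a1 := hrb w hw (Or.inl hwr) y hy e
            have a2 := hrb y hy (Or.inr hyb) w hw (Ne.symm e)
            have a3 := hc.sym w y
            grind
        · push Not at hr
          apply cutv (c v w0) b
          intro y hy
          have := hall y hy
          have := hr y hy
          tauto
    · have h1 : V.card = 1 := by omega
      obtain ⟨u, rfl⟩ := Finset.card_eq_one.1 h1
      exact cutv (c v u) (c v u) (by simp)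

/-! Ramsey numbers -/

lemma ram33 {c : α → α → ℕ} (hs : ∀ u v, c u v = c v u) {r b : ℕ} (S : Finset α)
    (h2 : ∀ u ∈ S, ∀ v ∈ S, u ≠ v → c u v = r ∨ c u v = b)
    (hr : NoT c S r) (hb : NoT c S b) : S.card ≤ 5 := by
  have clique : ∀ (r b : ℕ), (∀ u ∈ S, ∀ v ∈ S, u ≠ v → c u v = r ∨ c u v = b) → NoT c S r →
      NoT c S b → ∀ x ∈ S, (S.filter (fun y => y ≠ x ∧ c x y = r)).card ≤ 2 := by
    intro r b h2 hr hb x hx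
    by_contra hcon
    push Not at hcon
    obtain ⟨u, hu, v, hv, w, hw, huv, huw, hvw⟩ := Finset.two_lt_card.1 hcon
    simp only [Finset.mem_filter] at hu hv hw
    have e1 := h2 u hu.1 v hv.1 huv
    have e2 := h2 u hu.1 w hw.1 huw
    have e3 := h2 v hv.1 w hw.1 hvw
    have a1 := hr x hx u hu.1 v hv.1 hu.2.1.symm hv.2.1.symm huv hu.2.2 hv.2.2
    have a2 := hr x hx u hu.1 w hw.1 hu.2.1.symm hw.2.1.symm huw hu.2.2 hw.2.2
    have a3 := hr x hx v hv.1 w hw.1 hv.2.1.symm hw.2.1.symm hvw hv.2.2 hw.2.2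
    exact hb u hu.1 v hv.1 w hw.1 huv huw hvw (by tauto) (by tauto) (by tauto)
  rcases S.eq_empty_or_nonempty with rfl | ⟨x, hx⟩
  · simp
  have c1 := clique r b h2 hr hb x hx
  have c2 := clique b r (fun u hu v hv h => (h2 u hu v hv h).symm) hb hr x hx
  have : S ⊆ insert x (S.filter (fun y => y ≠ x ∧ c x y = r) ∪
      S.filter (fun y => y ≠ x ∧ c x y = b)) := by
    intro y hy
    have := h2 x hx y hy
    simp only [Finset.mem_insert, Finset.mem_union, Finset.mem_filter]
    by_cases e : y = x
    · tauto
    · have := this (Ne.symm e); tauto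
  have := Finset.card_le_card this
  have := Finset.card_insert_le x (S.filter (fun y => y ≠ x ∧ c x y = r) ∪
      S.filter (fun y => y ≠ x ∧ c x y = b))
  have := Finset.card_union_le (S.filter (fun y => y ≠ x ∧ c x y = r))
      (S.filter (fun y => y ≠ x ∧ c x y = b))
  omega

lemma even_sum_deg {c : α → α → ℕ} (hs : ∀ u v, c u v = c v u) {r : ℕ} (S : Finset α) :
    Even (∑ x ∈ S, (S.filter (fun y => y ≠ x ∧ c x y = r)).card) := by
  classical
  let G : SimpleGraph S := 
    { Adj := fun u v => (v : α) ≠ u ∧ c u v = r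
      symm := ⟨fun u v h => ⟨h.1.symm, by rw [hs]; exact h.2⟩⟩
      loopless := ⟨fun u h => h.1 rfl⟩ }
  have h := G.sum_degrees_eq_twice_card_edges
  rw [← Finset.sum_coe_sort]
  have : ∀ x : S, (S.filter (fun y => y ≠ (x : α) ∧ c x y = r)).card = G.degree x := by
    intro x
    rw [← SimpleGraph.card_neighborFinset_eq_degree]
    symm
    refine Finset.card_bij (fun (y : S) _ => (y : α)) ?_ ?_ ?_
    · intro y hy
      rw [SimpleGraph.mem_neighborFinset] at hy
      simp only [Finset.mem_filter]
      exact ⟨y.2, hy⟩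
    · intro y _ z _ e; exact Subtype.ext e
    · intro y hy
      simp only [Finset.mem_filter] at hy
      exact ⟨⟨y, hy.1⟩, by rw [SimpleGraph.mem_neighborFinset]; exact hy.2, rfl⟩
  rw [Finset.sum_congr rfl (fun x _ => this x), h]
  exact even_two_mul _

lemma split3 {c : α → α → ℕ} {r b : ℕ} (hrb : r ≠ b) (S : Finset α)
    (h2 : ∀ u ∈ S, ∀ v ∈ S, u ≠ v → c u v = r ∨ c u v = b) (x : α) (hx : x ∈ S) :
    S.card = 1 + (S.filter (fun y => y ≠ x ∧ c x y = r)).card +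
      (S.filter (fun y => y ≠ x ∧ c x y = b)).card := by
  have hd : Disjoint (S.filter (fun y => y ≠ x ∧ c x y = r))
      (S.filter (fun y => y ≠ x ∧ c x y = b)) := by
    rw [Finset.disjoint_left]; intro y; simp only [Finset.mem_filter]; grind
  have e : S = insert x (S.filter (fun y => y ≠ x ∧ c x y = r) ∪
      S.filter (fun y => y ≠ x ∧ c x y = b)) := by
    ext y
    have := h2 x hx y
    simp only [Finset.mem_insert, Finset.mem_union, Finset.mem_filter]
    by_cases e : y = x
    · subst e; tauto
    · have := fun h => this h (Ne.symm e); tauto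
  conv_lhs => rw [e]
  rw [Finset.card_insert_of_notMem (by simp), Finset.card_union_of_disjoint hd]
  omega

lemma ram34 {c : α → α → ℕ} (hs : ∀ u v, c u v = c v u) {r b : ℕ} (hrb : r ≠ b) (S : Finset α)
    (h2 : ∀ u ∈ S, ∀ v ∈ S, u ≠ v → c u v = r ∨ c u v = b)
    (hr : NoF c S r) (hb : NoT c S b) : S.card ≤ 8 := by
  by_contra hcon
  obtain ⟨T, hTS, hT⟩ := Finset.exists_subset_card_eq (show 9 ≤ S.card by omega)
  have h2' : ∀ u ∈ T, ∀ v ∈ T, u ≠ v → c u v = r ∨ c u v = b :=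
    fun u hu v hv => h2 u (hTS hu) v (hTS hv)
  have d5 : ∀ x ∈ T, (T.filter (fun y => y ≠ x ∧ c x y = r)).card = 5 := by
    intro x hx
    have h1 := split3 hrb T h2' x hx
    have h3 : (T.filter (fun y => y ≠ x ∧ c x y = r)).card ≤ 5 := by
      apply ram33 hs (r := r) (b := b)
      · intro u hu v hv
        exact h2' u (Finset.mem_filter.1 hu).1 v (Finset.mem_filter.1 hv).1
      · intro u hu v hv w hw
        simp only [Finset.mem_filter] at hu hv hw
        have := hr x (hTS hx) u (hTS hu.1) v (hTS hv.1) w (hTS hw.1)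
        grind
      · intro u hu v hv w hw
        exact hb u (hTS (Finset.mem_filter.1 hu).1) v (hTS (Finset.mem_filter.1 hv).1)
          w (hTS (Finset.mem_filter.1 hw).1)
    have h4 : (T.filter (fun y => y ≠ x ∧ c x y = b)).card ≤ 3 := by
      by_contra h4
      obtain ⟨U, hU, hU4⟩ := Finset.exists_subset_card_eq
        (show 4 ≤ (T.filter (fun y => y ≠ x ∧ c x y = b)).card by omega)
      obtain ⟨p, q, s, t, n1, n2, n3, n4, n5, n6, rfl⟩ := Finset.card_eq_four.1 hU4
      have hmem : ∀ y ∈ ({p, q, s, t} : Finset α), y ∈ S ∧ y ≠ x ∧ c x y = b := by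
        intro y hy; have := Finset.mem_filter.1 (hU hy); exact ⟨hTS this.1, this.2⟩
      have red : ∀ y ∈ ({p, q, s, t} : Finset α), ∀ z ∈ ({p, q, s, t} : Finset α), y ≠ z →
          c y z = r := by
        intro y hy z hz hne
        obtain ⟨a1, a2, a3⟩ := hmem y hy
        obtain ⟨b1, b2, b3⟩ := hmem z hz
        have := hb x (hTS hx) y a1 z b1 a2.symm b2.symm hne a3 b3
        have := h2 y a1 z b1 hne
        tauto
      exact hr p (hmem p (by simp)).1 q (hmem q (by simp)).1 s (hmem s (by simp)).1
        t (hmem t (by simp)).1 n1 n2 n3 n4 n5 n6 (red _ (by simp) _ (by simp) n1)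
        (red _ (by simp) _ (by simp) n2) (red _ (by simp) _ (by simp) n3)
        (red _ (by simp) _ (by simp) n4) (red _ (by simp) _ (by simp) n5)
        (red _ (by simp) _ (by simp) n6)
    omega
  have := even_sum_deg hs (r := r) T
  rw [Finset.sum_congr rfl d5, Finset.sum_const, hT] at this
  exact absurd this (by decide)

lemma ram44 {c : α → α → ℕ} (hs : ∀ u v, c u v = c v u) {r b : ℕ} (hrb : r ≠ b) (S : Finset α)
    (h2 : ∀ u ∈ S, ∀ v ∈ S, u ≠ v → c u v = r ∨ c u v = b)
    (hr : NoF c S r) (hb : NoF c S b) : S.card ≤ 17 := by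
  rcases S.eq_empty_or_nonempty with rfl | ⟨x, hx⟩
  · simp
  have key : ∀ (r b : ℕ), r ≠ b → (∀ u ∈ S, ∀ v ∈ S, u ≠ v → c u v = r ∨ c u v = b) →
      NoF c S r → NoF c S b → (S.filter (fun y => y ≠ x ∧ c x y = b)).card ≤ 8 := by
    intro r b hrb h2 hr hb
    apply ram34 hs hrb
    · intro u hu v hv
      exact h2 u (Finset.mem_filter.1 hu).1 v (Finset.mem_filter.1 hv).1
    · intro u hu v hv w hw z hz
      exact hr u (Finset.mem_filter.1 hu).1 v (Finset.mem_filter.1 hv).1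
          w (Finset.mem_filter.1 hw).1 z (Finset.mem_filter.1 hz).1
    · intro u hu v hv w hw
      simp only [Finset.mem_filter] at hu hv hw
      have := hb x hx u hu.1 v hv.1 w hw.1
      grind
  have h1 := split3 hrb S h2 x hx
  have := key r b hrb h2 hr hb
  have := key b r hrb.symm (fun u hu v hv h => (h2 u hu v hv h).symm) hb hr
  omega

end GR

/-! The bounding functions -/

def fA : ℕ → ℕ
  | 0 => 1
  | 1 => 4
  | (p + 2) => 17 * fA p

def fB : ℕ → ℕ
  | 0 => 1
  | 1 => 2
  | (q + 2) => 5 * fB q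

lemma fA_lo : ∀ p, 4 * fA p ≤ fA (p + 1)
  | 0 => by simp [fA]
  | 1 => by simp [fA]
  | (p + 2) => by have := fA_lo p; simp only [fA] at *; omega
lemma fA_hi : ∀ p, 4 * fA (p + 1) ≤ 17 * fA p
  | 0 => by simp [fA]
  | 1 => by simp [fA]
  | (p + 2) => by have := fA_hi p; simp only [fA] at *; omega
lemma fB_lo : ∀ p, 2 * fB p ≤ fB (p + 1)
  | 0 => by simp [fB]
  | 1 => by simp [fB]
  | (p + 2) => by have := fB_lo p; simp only [fB] at *; omega
lemma fB_hi : ∀ p, 2 * fB (p + 1) ≤ 5 * fB p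
  | 0 => by simp [fB]
  | 1 => by simp [fB]
  | (p + 2) => by have := fB_hi p; simp only [fB] at *; omega
lemma fA_pos : ∀ p, 1 ≤ fA p
  | 0 => by simp [fA]
  | 1 => by simp [fA]
  | (p + 2) => by have := fA_pos p; simp only [fA] at *; omega
lemma fB_pos : ∀ p, 1 ≤ fB p
  | 0 => by simp [fB]
  | 1 => by simp [fB]
  | (p + 2) => by have := fB_pos p; simp only [fB] at *; omega

section GR2
variable {α : Type*} [DecidableEq α]

structure Adm (c : α → α → ℕ) (V : Finset α) (P Q : Finset ℕ) : Prop where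
  disj : Disjoint P Q
  col : ∀ u ∈ V, ∀ v ∈ V, u ≠ v → c u v ∈ P ∨ c u v ∈ Q
  hP : ∀ i ∈ P, NoP c V i
  hQ : ∀ i ∈ Q, NoT c V i

def Bd (c : α → α → ℕ) (V : Finset α) : Prop :=
  ∀ P Q, Adm c V P Q → V.card ≤ fA P.card * fB Q.card

lemma NoE.mono {c : α → α → ℕ} {V W : Finset α} {i : ℕ} (h : NoE c V i) (hW : W ⊆ V) :
    NoE c W i := fun a ha b hb => h a (hW ha) b (hW hb)
lemma NoT.mono {c : α → α → ℕ} {V W : Finset α} {i : ℕ} (h : NoT c V i) (hW : W ⊆ V) :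
    NoT c W i := fun a ha b hb d hd => h a (hW ha) b (hW hb) d (hW hd)
lemma NoF.mono {c : α → α → ℕ} {V W : Finset α} {i : ℕ} (h : NoF c V i) (hW : W ⊆ V) :
    NoF c W i := fun a ha b hb d hd e he => h a (hW ha) b (hW hb) d (hW hd) e (hW he)
lemma NoP.mono {c : α → α → ℕ} {V W : Finset α} {i : ℕ} (h : NoP c V i) (hW : W ⊆ V) :
    NoP c W i := fun a ha b hb d hd e he f hf =>
      h a (hW ha) b (hW hb) d (hW hd) e (hW he) f (hW hf)
lemma Adm.mono {c : α → α → ℕ} {V W : Finset α} {P Q : Finset ℕ} (h : Adm c V P Q)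
    (hW : W ⊆ V) : Adm c W P Q :=
  ⟨h.disj, fun u hu v hv => h.col u (hW hu) v (hW hv), fun i hi => (h.hP i hi).mono hW,
    fun i hi => (h.hQ i hi).mono hW⟩

lemma Adm.dropP {c : α → α → ℕ} {V : Finset α} {P Q : Finset ℕ} (h : Adm c V P Q) {i : ℕ}
    (hE : NoE c V i) : Adm c V (P.erase i) Q :=
  ⟨h.disj.mono_left (Finset.erase_subset _ _), fun u hu v hv n => by
    have := h.col u hu v hv n
    have := hE u hu v hv n
    simp only [Finset.mem_erase]; tauto, fun j hj => h.hP j (Finset.mem_of_mem_erase hj), h.hQ⟩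

lemma Adm.dropQ {c : α → α → ℕ} {V : Finset α} {P Q : Finset ℕ} (h : Adm c V P Q) {i : ℕ}
    (hE : NoE c V i) : Adm c V P (Q.erase i) :=
  ⟨h.disj.mono_right (Finset.erase_subset _ _), fun u hu v hv n => by
    have := h.col u hu v hv n
    have := hE u hu v hv n
    simp only [Finset.mem_erase]; tauto, h.hP, fun j hj => h.hQ j (Finset.mem_of_mem_erase hj)⟩

lemma Adm.down {c : α → α → ℕ} {V : Finset α} {P Q : Finset ℕ} (h : Adm c V P Q) {i : ℕ}
    (hT : NoT c V i) : Adm c V (P.erase i) (insert i Q) := by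
  refine ⟨?_, ?_, fun j hj => h.hP j (Finset.mem_of_mem_erase hj), ?_⟩
  · rw [Finset.disjoint_insert_right]
    exact ⟨by simp, h.disj.mono_left (Finset.erase_subset _ _)⟩
  · intro u hu v hv n
    have := h.col u hu v hv n
    simp only [Finset.mem_erase, Finset.mem_insert]; tauto
  · intro j hj
    rcases Finset.mem_insert.1 hj with rfl | hj
    · exact hT
    · exact h.hQ j hj

section bounds
variable {c : α → α → ℕ} {W : Finset α} {P Q : Finset ℕ} {i : ℕ} {p q : ℕ}

lemma bEP (hB : Bd c W) (h : Adm c W P Q) (hi : i ∈ P) (hp : P.card = p + 1) (hq : Q.card = q)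
    (hE : NoE c W i) : W.card ≤ fA p * fB q := by
  have := hB _ _ (h.dropP hE)
  rwa [Finset.card_erase_of_mem hi, hp, hq] at this

lemma bEQ (hB : Bd c W) (h : Adm c W P Q) (hi : i ∈ Q) (hp : P.card = p) (hq : Q.card = q + 1)
    (hE : NoE c W i) : W.card ≤ fA p * fB q := by
  have := hB _ _ (h.dropQ hE)
  rwa [Finset.card_erase_of_mem hi, hp, hq] at this

lemma bTP (hB : Bd c W) (h : Adm c W P Q) (hi : i ∈ P) (hp : P.card = p + 1) (hq : Q.card = q)
    (hT : NoT c W i) : W.card ≤ fA p * fB (q + 1) := by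
  have := hB _ _ (h.down hT)
  rwa [Finset.card_erase_of_mem hi, hp,
    Finset.card_insert_of_notMem (Finset.disjoint_left.1 h.disj hi), hq] at this

end bounds

lemma cutP {c : α → α → ℕ} (hc : Gal c) {X Y : Finset α} {P Q : Finset ℕ} {i p q : ℕ}
    (hX : X.Nonempty) (hY : Y.Nonempty) (hd : Disjoint X Y)
    (hXY : ∀ x ∈ X, ∀ y ∈ Y, c x y = i) (hF : NoF c (X ∪ Y) i) (bX : Bd c X) (bY : Bd c Y)
    (h : Adm c (X ∪ Y) P Q) (hi : i ∈ P) (hp : P.card = p + 1) (hq : Q.card = q) :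
    X.card + Y.card ≤ fA p * (fB q + fB (q + 1)) := by
  have ne : ∀ x ∈ X, ∀ y ∈ Y, x ≠ y := fun x hx y hy e => Finset.disjoint_left.1 hd hx (e ▸ hy)
  have sX : X ⊆ X ∪ Y := Finset.subset_union_left
  have sY : Y ⊆ X ∪ Y := Finset.subset_union_right
  have tX : NoT c X i := by
    intro u hu v hv w hw
    obtain ⟨y, hy⟩ := hY
    have := hF u (sX hu) v (sX hv) w (sX hw) y (sY hy)
    have := hXY u hu y hy
    have := hXY v hv y hy
    have := hXY w hw y hy
    have := ne u hu y hy
    have := ne v hv y hy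
    have := ne w hw y hy
    tauto
  have tY : NoT c Y i := by
    intro u hu v hv w hw
    obtain ⟨x, hx⟩ := hX
    have := hF x (sX hx) u (sY hu) v (sY hv) w (sY hw)
    have := hXY x hx u hu
    have := hXY x hx v hv
    have := hXY x hx w hw
    have := ne x hx u hu
    have := ne x hx v hv
    have := ne x hx w hw
    tauto
  have or : NoE c X i ∨ NoE c Y i := by
    by_contra hcon
    unfold NoE at hcon
    push Not at hcon
    obtain ⟨⟨x, hx, x', hx', nx, ex⟩, ⟨y, hy, y', hy', ny, ey⟩⟩ := hcon
    exact hF x (sX hx) x' (sX hx') y (sY hy) y' (sY hy') nx (ne _ hx _ hy) (ne _ hx _ hy')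
      (ne _ hx' _ hy) (ne _ hx' _ hy') ny ex (hXY _ hx _ hy) (hXY _ hx _ hy')
      (hXY _ hx' _ hy) (hXY _ hx' _ hy') ey
  have h1 := bTP bX (h.mono sX) hi hp hq tX
  have h2 := bTP bY (h.mono sY) hi hp hq tY
  rw [mul_add]
  rcases or with e | e
  · have := bEP bX (h.mono sX) hi hp hq e
    omega
  · have := bEP bY (h.mono sY) hi hp hq e
    omega

lemma cutQ {c : α → α → ℕ} (hc : Gal c) {X Y : Finset α} {P Q : Finset ℕ} {i p q : ℕ}
    (hX : X.Nonempty) (hY : Y.Nonempty) (hd : Disjoint X Y)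
    (hXY : ∀ x ∈ X, ∀ y ∈ Y, c x y = i) (bX : Bd c X) (bY : Bd c Y)
    (h : Adm c (X ∪ Y) P Q) (hi : i ∈ Q) (hp : P.card = p) (hq : Q.card = q + 1) :
    X.card + Y.card ≤ 2 * (fA p * fB q) := by
  have ne : ∀ x ∈ X, ∀ y ∈ Y, x ≠ y := fun x hx y hy e => Finset.disjoint_left.1 hd hx (e ▸ hy)
  have sX : X ⊆ X ∪ Y := Finset.subset_union_left
  have sY : Y ⊆ X ∪ Y := Finset.subset_union_right
  have hT := h.hQ i hi
  have eX : NoE c X i := by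
    intro u hu v hv n e
    obtain ⟨y, hy⟩ := hY
    exact hT u (sX hu) v (sX hv) y (sY hy) n (ne _ hu _ hy) (ne _ hv _ hy) e (hXY _ hu _ hy)
      (hXY _ hv _ hy)
  have eY : NoE c Y i := by
    intro u hu v hv n e
    obtain ⟨x, hx⟩ := hX
    exact hT x (sX hx) u (sY hu) v (sY hv) (ne _ hx _ hu) (ne _ hx _ hv) n (hXY _ hx _ hu)
      (hXY _ hx _ hv) e
  have := bEQ bX (h.mono sX) hi hp hq eX
  have := bEQ bY (h.mono sY) hi hp hq eY
  omega

/-- Gallai partition in which both colors are connected. -/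
structure Ctx (c : α → α → ℕ) (V : Finset α) (r b : ℕ) (p : α → Finset α) : Prop
    extends GPart c V r b p where
  rb : r ≠ b
  conr : ∀ A ⊆ V, A.Nonempty → A ≠ V → ∃ a ∈ A, ∃ y ∈ V, y ∉ A ∧ c a y ≠ b
  conb : ∀ A ⊆ V, A.Nonempty → A ≠ V → ∃ a ∈ A, ∃ y ∈ V, y ∉ A ∧ c a y ≠ r

section ctx
variable {c : α → α → ℕ} {V : Finset α} {r b : ℕ} {p : α → Finset α}

lemma Ctx.swap (h : Ctx c V r b p) : Ctx c V b r p :=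
  { two := fun u hu v hv n => (h.two u hu v hv n).symm
    mod := h.mod
    ne := h.ne
    rb := h.rb.symm
    conr := h.conb
    conb := h.conr }

def cls (V : Finset α) (p : α → Finset α) (u : α) : Finset α := V.filter (fun y => p u = p y)
def nbr (c : α → α → ℕ) (V : Finset α) (p : α → Finset α) (r : ℕ) (u : α) : Finset α :=
  V.filter (fun y => p u ≠ p y ∧ c u y = r)

lemma mem_cls {u y : α} : y ∈ cls V p u ↔ y ∈ V ∧ p u = p y := by simp [cls]
lemma mem_nbr {u y : α} : y ∈ nbr c V p r u ↔ y ∈ V ∧ p u ≠ p y ∧ c u y = r := by simp [nbr]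

lemma cls_ss (h : Ctx c V r b p) (u : α) : cls V p u ⊂ V := by
  refine (Finset.filter_subset _ _).ssubset_of_ne ?_
  intro e
  obtain ⟨x, hx, y, hy, n⟩ := h.ne
  have h1 : x ∈ cls V p u := by unfold cls; rw [e]; exact hx
  have h2 : y ∈ cls V p u := by unfold cls; rw [e]; exact hy
  rw [mem_cls] at h1 h2
  exact n (h1.2.symm.trans h2.2)

lemma nbr_ss {u : α} (hu : u ∈ V) : nbr c V p r u ⊂ V := by
  refine (Finset.filter_subset _ _).ssubset_of_ne ?_
  intro e
  have h1 : u ∈ nbr c V p r u := by unfold nbr; rw [e]; exact hu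
  rw [mem_nbr] at h1
  exact h1.2.1 rfl

lemma sees (h : Ctx c V r b p) {u : α} (hu : u ∈ V) : ∃ v ∈ V, p u ≠ p v ∧ c u v = r := by
  obtain ⟨a, ha, y, hy, hyA, hn⟩ := h.conr (cls V p u) (cls_ss h u).1
    ⟨u, mem_cls.2 ⟨hu, rfl⟩⟩ (cls_ss h u).ne
  rw [mem_cls] at ha hyA
  have n : p u ≠ p y := fun e => hyA ⟨hy, e⟩
  refine ⟨y, hy, n, ?_⟩
  rw [h.mod u hu a ha.1 y hy ha.2 n]
  have := h.two a ha.1 y hy (ha.2 ▸ n)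
  tauto

lemma k4_out (hc : Gal c) (hP : NoP c V r) {A : Finset α} (hAV : A ⊆ V) (hA : A.card = 4)
    (hAr : ∀ u ∈ A, ∀ v ∈ A, u ≠ v → c u v = r) {a y : α} (ha : a ∈ A) (hy : y ∈ V)
    (hyA : y ∉ A) : c a y ≠ r := by
  intro e
  have : (A.erase a).card = 3 := by rw [Finset.card_erase_of_mem ha, hA]
  obtain ⟨u, v, w, n1, n2, n3, hE⟩ := Finset.card_eq_three.1 this
  have hu : u ∈ A.erase a := by rw [hE]; simp
  have hv : v ∈ A.erase a := by rw [hE]; simp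
  have hw : w ∈ A.erase a := by rw [hE]; simp
  rw [Finset.mem_erase] at hu hv hw
  have ny : ∀ z ∈ A, z ≠ y := fun z hz e => hyA (e ▸ hz)
  exact hP a (hAV ha) u (hAV hu.2) v (hAV hv.2) w (hAV hw.2) y hy hu.1.symm hv.1.symm hw.1.symm
    (ny _ ha) n1 n2 (ny _ hu.2) n3 (ny _ hv.2) (ny _ hw.2) (hAr _ ha _ hu.2 hu.1.symm)
    (hAr _ ha _ hv.2 hv.1.symm) (hAr _ ha _ hw.2 hw.1.symm) e (hAr _ hu.2 _ hv.2 n1)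
    (hAr _ hu.2 _ hw.2 n2) (hAr _ hv.2 _ hw.2 n3)

lemma exists_k4 (hc : Gal c) (h : ¬ NoF c V r) : ∃ A ⊆ V, A.card = 4 ∧
    ∀ u ∈ A, ∀ v ∈ A, u ≠ v → c u v = r := by
  unfold NoF at h
  push Not at h
  obtain ⟨x, hx, y, hy, z, hz, w, hw, n1, n2, n3, n4, n5, n6, e1, e2, e3, e4, e5, e6, -⟩ := h
  refine ⟨{x, y, z, w}, ?_, Finset.card_eq_four.2 ⟨x, y, z, w, n1, n2, n3, n4, n5, n6, rfl⟩, ?_⟩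
  · intro t; simp only [Finset.mem_insert, Finset.mem_singleton]
    rintro (rfl | rfl | rfl | rfl) <;> assumption
  · have s := hc.sym
    intro u hu v hv n
    simp only [Finset.mem_insert, Finset.mem_singleton] at hu hv
    rcases hu with rfl | rfl | rfl | rfl <;> rcases hv with rfl | rfl | rfl | rfl <;>
      first | exact absurd rfl n | assumption | (rw [s]; assumption)

lemma ctx_noF (hc : Gal c) (h : Ctx c V r b p) (hP : NoP c V r) : V.card ≤ 4 ∨ NoF c V r := by
  by_contra hcon
  push Not at hcon
  obtain ⟨A, hAV, hA, hAr⟩ := exists_k4 hc hcon.2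
  have hne : A ≠ V := by rintro rfl; omega
  have out := fun {a y : α} => k4_out hc hP hAV hA hAr (a := a) (y := y)
  obtain ⟨a, ha, y, hy, hyA, hn⟩ := h.conr A hAV (Finset.card_pos.1 (by omega)) hne
  have ny : ∀ z ∈ A, z ≠ y := fun z hz e => hyA (e ▸ hz)
  have hγ : ∀ a' ∈ A, c a' y = c a y := by
    intro a' ha'
    by_cases e : a = a'
    · rw [e]
    · have := hc.tri a a' y e (ny _ ha) (ny _ ha')
      have := hAr a ha a' ha' e
      have := out ha hy hyA
      have := out ha' hy hyA
      grind
  have hcl : ∀ a' ∈ A, p a' = p y := by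
    intro a' ha'
    by_contra n
    have := h.two a' (hAV ha') y hy n
    rw [hγ a' ha'] at this
    have := out ha hy hyA
    tauto
  obtain ⟨v, hv, nv, ev⟩ := sees h (hAV ha)
  refine out ha hv ?_ ev
  intro hvA
  exact nv ((hcl a ha).trans (hcl v hvA).symm)

lemma cls_noT (hc : Gal c) (h : Ctx c V r b p) (hF : NoF c V r) {u : α} (hu : u ∈ V) :
    NoT c (cls V p u) r := by
  obtain ⟨v, hv, nv, ev⟩ := sees h hu
  intro x hx y hy z hz n1 n2 n3 e1 e2 e3
  rw [mem_cls] at hx hy hz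
  have key : ∀ t ∈ V, p u = p t → t ≠ v ∧ c t v = r := fun t ht e =>
    ⟨fun q => nv (q ▸ e), by rw [← h.mod u hu t ht v hv e nv]; exact ev⟩
  have k1 := key x hx.1 hx.2
  have k2 := key y hy.1 hy.2
  have k3 := key z hz.1 hz.2
  exact hF x hx.1 y hy.1 z hz.1 v hv n1 n2 k1.1 n3 k2.1 k3.1 e1 e2 k1.2 e3 k2.2 k3.2

lemma cls_noE (hc : Gal c) (h : Ctx c V r b p) (hT : NoT c V r) {u : α} (hu : u ∈ V) :
    NoE c (cls V p u) r := by
  obtain ⟨v, hv, nv, ev⟩ := sees h hu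
  intro x hx y hy n1 e1
  rw [mem_cls] at hx hy
  have key : ∀ t ∈ V, p u = p t → t ≠ v ∧ c t v = r := fun t ht e =>
    ⟨fun q => nv (q ▸ e), by rw [← h.mod u hu t ht v hv e nv]; exact ev⟩
  have k1 := key x hx.1 hx.2
  have k2 := key y hy.1 hy.2
  exact hT x hx.1 y hy.1 v hv n1 k1.1 k2.1 e1 k1.2 k2.2

lemma nbr_noE (h : Ctx c V r b p) (hF : NoF c V r) {u : α} (hu : u ∈ V)
    (hE : ¬ NoE c (cls V p u) r) : NoE c (nbr c V p r u) r := by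
  unfold NoE at hE
  push Not at hE
  obtain ⟨x, hx, x', hx', nx, ex⟩ := hE
  intro y hy z hz n e
  rw [mem_cls] at hx hx'
  rw [mem_nbr] at hy hz
  have key : ∀ t ∈ V, p u = p t → ∀ y ∈ V, p u ≠ p y → c u y = r → t ≠ y ∧ c t y = r :=
    fun t ht e y hy n q =>
    ⟨fun q => n (q ▸ e), by rw [← h.mod u hu t ht y hy e n]; exact q⟩
  have k1 := key x hx.1 hx.2 y hy.1 hy.2.1 hy.2.2
  have k2 := key x' hx'.1 hx'.2 y hy.1 hy.2.1 hy.2.2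
  have k3 := key x hx.1 hx.2 z hz.1 hz.2.1 hz.2.2
  have k4 := key x' hx'.1 hx'.2 z hz.1 hz.2.1 hz.2.2
  exact hF x hx.1 x' hx'.1 y hy.1 z hz.1 nx k1.1 k3.1 k2.1 k4.1 n ex k1.2 k3.2 k2.2 k4.2 e

lemma nbr_noT (hF : NoF c V r) {u : α} (hu : u ∈ V) : NoT c (nbr c V p r u) r := by
  intro x hx y hy z hz n1 n2 n3 e1 e2 e3
  rw [mem_nbr] at hx hy hz
  exact hF u hu x hx.1 y hy.1 z hz.1 (fun e => hx.2.1 (e ▸ rfl)) (fun e => hy.2.1 (e ▸ rfl))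
    (fun e => hz.2.1 (e ▸ rfl)) n1 n2 n3 hx.2.2 hy.2.2 hz.2.2 e1 e2 e3

lemma nbr_noE' (hT : NoT c V r) {u : α} (hu : u ∈ V) : NoE c (nbr c V p r u) r := by
  intro x hx y hy n e
  rw [mem_nbr] at hx hy
  exact hT u hu x hx.1 y hy.1 (fun e => hx.2.1 (e ▸ rfl)) (fun e => hy.2.1 (e ▸ rfl))
    n hx.2.2 hy.2.2 e

lemma card_split (h : Ctx c V r b p) {u : α} (hu : u ∈ V) :
    V.card ≤ (cls V p u).card + (nbr c V p r u).card + (nbr c V p b u).card := by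
  have : V ⊆ cls V p u ∪ nbr c V p r u ∪ nbr c V p b u := by
    intro y hy
    simp only [Finset.mem_union, mem_cls, mem_nbr]
    by_cases e : p u = p y
    · tauto
    · have := h.two u hu y hy e
      tauto
  have := Finset.card_le_card this
  have := Finset.card_union_le (cls V p u ∪ nbr c V p r u) (nbr c V p b u)
  have := Finset.card_union_le (cls V p u) (nbr c V p r u)
  omega

/-- sets whose cross edges all have color `b` -/
lemma multi_P (hc : Gal c) (h : Ctx c V r b p) (hF : NoF c V b) {W : Finset α} (hW : W ⊂ V)
    (IH : ∀ W, W ⊂ V → Bd c W) (hE : NoE c W r) {P Q : Finset ℕ} {s t : ℕ} (hA : Adm c W P Q)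
    (hb : b ∈ P) (hs : P.card = s + 1) (ht : Q.card = t) :
    W.card ≤ fA s * (fB t + fB (t + 1)) := by
  rcases W.eq_empty_or_nonempty with rfl | ⟨w, hw⟩
  · simp
  have hwV := hW.1 hw
  have hu : W.filter (fun y => p w = p y) ∪ W.filter (fun y => ¬ p w = p y) = W :=
    Finset.filter_union_filter_not_eq _ _
  have hd := Finset.disjoint_filter_filter_not W W (fun y => p w = p y)
  rcases (W.filter (fun y => ¬ p w = p y)).eq_empty_or_nonempty with e | hne
  · rw [e, Finset.union_empty] at hu
    have hT : NoT c W b := by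
      rw [← hu]
      exact (cls_noT hc h.swap hF hwV).mono (Finset.filter_subset_filter _ hW.1)
    have := bTP (IH W hW) hA hb hs ht hT
    rw [mul_add]; omega
  · have := cutP hc (X := W.filter (fun y => p w = p y)) (Y := W.filter (fun y => ¬ p w = p y))
      (i := b) ⟨w, by simp [hw]⟩ hne hd ?_ (by rw [hu]; exact hF.mono hW.1)
      (IH _ ((Finset.filter_subset _ _).trans_ssubset hW))
      (IH _ ((Finset.filter_subset _ _).trans_ssubset hW)) (by rw [hu]; exact hA) hb hs ht
    · rwa [← Finset.card_union_of_disjoint hd, hu] at this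
    · intro x hx y hy
      rw [Finset.mem_filter] at hx hy
      have n : p x ≠ p y := by rw [← hx.2]; exact hy.2
      have := h.two x (hW.1 hx.1) y (hW.1 hy.1) n
      have := hE x hx.1 y hy.1 (fun e => n (e ▸ rfl))
      tauto

lemma multi_Q (hc : Gal c) (h : Ctx c V r b p) (hT : NoT c V b) {W : Finset α} (hW : W ⊂ V)
    (IH : ∀ W, W ⊂ V → Bd c W) (hE : NoE c W r) {P Q : Finset ℕ} {s t : ℕ} (hA : Adm c W P Q)
    (hb : b ∈ Q) (hs : P.card = s) (ht : Q.card = t + 1) :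
    W.card ≤ 2 * (fA s * fB t) := by
  rcases W.eq_empty_or_nonempty with rfl | ⟨w, hw⟩
  · simp
  have hwV := hW.1 hw
  have hu : W.filter (fun y => p w = p y) ∪ W.filter (fun y => ¬ p w = p y) = W :=
    Finset.filter_union_filter_not_eq _ _
  have hd := Finset.disjoint_filter_filter_not W W (fun y => p w = p y)
  rcases (W.filter (fun y => ¬ p w = p y)).eq_empty_or_nonempty with e | hne
  · rw [e, Finset.union_empty] at hu
    have hT : NoE c W b := by
      rw [← hu]
      exact (cls_noE hc h.swap hT hwV).mono (Finset.filter_subset_filter _ hW.1)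
    have := bEQ (IH W hW) hA hb hs ht hT
    omega
  · have := cutQ hc (X := W.filter (fun y => p w = p y)) (Y := W.filter (fun y => ¬ p w = p y))
      (i := b) ⟨w, by simp [hw]⟩ hne hd ?_
      (IH _ ((Finset.filter_subset _ _).trans_ssubset hW))
      (IH _ ((Finset.filter_subset _ _).trans_ssubset hW)) (by rw [hu]; exact hA) hb hs ht
    · rwa [← Finset.card_union_of_disjoint hd, hu] at this
    · intro x hx y hy
      rw [Finset.mem_filter] at hx hy
      have n : p x ≠ p y := by rw [← hx.2]; exact hy.2
      have := h.two x (hW.1 hx.1) y (hW.1 hy.1) n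
      have := hE x hx.1 y hy.1 (fun e => n (e ▸ rfl))
      tauto

lemma reps (V : Finset α) (p : α → Finset α) : ∃ S ⊆ V, (∀ u ∈ S, ∀ v ∈ S, u ≠ v → p u ≠ p v) ∧
    ∀ a, (∀ u ∈ V, (cls V p u).card ≤ a) → V.card ≤ a * S.card := by
  classical
  rcases V.eq_empty_or_nonempty with rfl | ⟨v0, hv0⟩
  · exact ⟨∅, by simp, by simp, by simp⟩
  haveI : Nonempty α := ⟨v0⟩
  choose! f hf hfp using fun (y : Finset α) (hy : y ∈ V.image p) => Finset.mem_image.1 hy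
  refine ⟨(V.image p).image f, ?_, ?_, ?_⟩
  · intro x hx
    obtain ⟨y, hy, rfl⟩ := Finset.mem_image.1 hx
    exact hf y hy
  · intro u hu v hv n e
    obtain ⟨y, hy, rfl⟩ := Finset.mem_image.1 hu
    obtain ⟨z, hz, rfl⟩ := Finset.mem_image.1 hv
    rw [hfp y hy, hfp z hz] at e
    exact n (e ▸ rfl)
  · intro a ha
    rw [Finset.card_image_of_injOn (fun y hy z hz e => by
      rw [← hfp y hy, ← hfp z hz]; exact congrArg p e)]
    apply Finset.card_le_mul_card_image
    intro y hy
    obtain ⟨u, hu, rfl⟩ := Finset.mem_image.1 hy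
    have := ha u hu
    unfold cls at this
    simpa [eq_comm] using this

variable {P Q : Finset ℕ}

lemma case_PP_edge (hc : Gal c) (h : Ctx c V r b p) (hA : Adm c V P Q)
    (IH : ∀ W, W ⊂ V → Bd c W) (hr : r ∈ P) (hb : b ∈ P) {s t : ℕ} (hs : P.card = s + 2)
    (ht : Q.card = t) (Fr : NoF c V r) (Fb : NoF c V b) {u : α} (hu : u ∈ V)
    (hE : ¬ NoE c (cls V p u) r) : V.card ≤ fA (s + 2) * fB t := by
  have hbe : b ∈ P.erase r := Finset.mem_erase.2 ⟨h.rb.symm, hb⟩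
  have hre : r ∈ P.erase b := Finset.mem_erase.2 ⟨h.rb, hr⟩
  have hse : (P.erase r).card = s + 1 := by rw [Finset.card_erase_of_mem hr, hs]; rfl
  have hse' : (P.erase b).card = s + 1 := by rw [Finset.card_erase_of_mem hb, hs]; rfl
  have hsp := card_split h hu
  have clV := (cls_ss h u)
  have nrV : nbr c V p r u ⊂ V := nbr_ss hu
  have nbV : nbr c V p b u ⊂ V := nbr_ss hu
  have nE := nbr_noE h Fr hu hE
  have n1 := multi_P hc h Fb nrV IH nE ((hA.mono nrV.1).dropP nE) hbe hse ht
  have aA1 := fA_hi s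
  have aB1 := fB_hi t
  have e1 : fA (s + 2) = 17 * fA s := rfl
  rw [e1]
  by_cases hEb : NoE c (cls V p u) b
  · have k1 := bTP (IH _ clV) ((hA.mono clV.1).dropP hEb) hre hse' ht (cls_noT hc h Fr hu)
    have k2 := bTP (IH _ nbV) (hA.mono nbV.1) hb hs ht (nbr_noT Fb hu)
    have m1 : fA s * fB (t + 1) * 2 ≤ 5 * (fA s * fB t) := by nlinarith [Nat.zero_le (fA s)]
    have m2 : fA (s + 1) * fB (t + 1) * 8 ≤ 85 * (fA s * fB t) := by
      calc fA (s + 1) * fB (t + 1) * 8 = (4 * fA (s + 1)) * (2 * fB (t + 1)) := by ring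
        _ ≤ (17 * fA s) * (5 * fB t) := Nat.mul_le_mul aA1 aB1
        _ = _ := by ring
    rw [mul_add] at n1
    rw [mul_assoc]
    omega
  · have nE' := nbr_noE h.swap Fb hu hEb
    have n2 := multi_P hc h.swap Fr nbV IH nE' ((hA.mono nbV.1).dropP nE') hre hse' ht
    have ad := (hA.mono clV.1).down (cls_noT hc h Fr hu)
    have k1 := bTP (IH _ clV) ad hbe hse rfl (cls_noT hc h.swap Fb hu)
    rw [Finset.card_insert_of_notMem (Finset.disjoint_left.1 hA.disj hr), ht] at k1
    have e2 : fB (t + 1 + 1) = 5 * fB t := rfl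
    rw [e2] at k1
    have m1 : fA s * fB (t + 1) * 2 ≤ 5 * (fA s * fB t) := by nlinarith [Nat.zero_le (fA s)]
    have e3 : fA s * (5 * fB t) = 5 * (fA s * fB t) := by ring
    rw [mul_add] at n1 n2
    rw [mul_assoc]
    omega

lemma case_PP (hc : Gal c) (h : Ctx c V r b p) (hA : Adm c V P Q)
    (IH : ∀ W, W ⊂ V → Bd c W) (hr : r ∈ P) (hb : b ∈ P) (Fr : NoF c V r) (Fb : NoF c V b) :
    V.card ≤ fA P.card * fB Q.card := by
  have hse : (P.erase r).card = P.card - 1 := Finset.card_erase_of_mem hr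
  have hbe : b ∈ P.erase r := Finset.mem_erase.2 ⟨h.rb.symm, hb⟩
  have h1 : 1 ≤ (P.erase r).card := Finset.card_pos.2 ⟨b, hbe⟩
  obtain ⟨s, hs⟩ : ∃ s, P.card = s + 2 := ⟨P.card - 2, by omega⟩
  rw [hs]
  by_cases hEr : ∃ u ∈ V, ¬ NoE c (cls V p u) r
  · obtain ⟨u, hu, hE⟩ := hEr
    exact case_PP_edge hc h hA IH hr hb hs rfl Fr Fb hu hE
  by_cases hEb : ∃ u ∈ V, ¬ NoE c (cls V p u) b
  · obtain ⟨u, hu, hE⟩ := hEb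
    exact case_PP_edge hc h.swap hA IH hb hr hs rfl Fb Fr hu hE
  push Not at hEr hEb
  obtain ⟨S, hSV, hS, hcard⟩ := reps V p
  have a1 := hcard (fA s * fB Q.card) (fun u hu =>
    bEP (IH _ (cls_ss h u)) ((hA.mono (cls_ss h u).1).dropP (hEr u hu)) hbe (by omega) rfl
      (hEb u hu))
  have a2 := ram44 hc.sym h.rb S (fun u hu v hv n => h.two u (hSV hu) v (hSV hv) (hS u hu v hv n))
    (Fr.mono hSV) (Fb.mono hSV)
  have e1 : fA (s + 2) = 17 * fA s := rfl
  rw [e1]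
  calc V.card ≤ fA s * fB Q.card * S.card := a1
    _ ≤ fA s * fB Q.card * 17 := Nat.mul_le_mul_left _ a2
    _ = _ := by ring

lemma case_PQ (hc : Gal c) (h : Ctx c V r b p) (hA : Adm c V P Q)
    (IH : ∀ W, W ⊂ V → Bd c W) (hr : r ∈ P) (hb : b ∈ Q) (Fr : NoF c V r) :
    V.card ≤ fA P.card * fB Q.card := by
  have Tb := hA.hQ b hb
  obtain ⟨s, hs⟩ : ∃ s, P.card = s + 1 :=
    ⟨P.card - 1, by have := Finset.card_pos.2 ⟨r, hr⟩; omega⟩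
  obtain ⟨t, ht⟩ : ∃ t, Q.card = t + 1 :=
    ⟨Q.card - 1, by have := Finset.card_pos.2 ⟨b, hb⟩; omega⟩
  have hse : (P.erase r).card = s := by rw [Finset.card_erase_of_mem hr, hs]; rfl
  have hte : (Q.erase b).card = t := by rw [Finset.card_erase_of_mem hb, ht]; rfl
  rw [hs, ht]
  have aA1 := fA_lo s
  have aB1 := fB_lo t
  have aB2 := fB_hi t
  have prod : 8 * (fA s * fB t) ≤ fA (s + 1) * fB (t + 1) := by
    calc 8 * (fA s * fB t) = (4 * fA s) * (2 * fB t) := by ring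
      _ ≤ _ := Nat.mul_le_mul aA1 aB1
  by_cases hEr : ∃ u ∈ V, ¬ NoE c (cls V p u) r
  · obtain ⟨u, hu, hE⟩ := hEr
    have hsp := card_split h hu
    have clV := (cls_ss h u)
    have nrV : nbr c V p r u ⊂ V := nbr_ss hu
    have nbV : nbr c V p b u ⊂ V := nbr_ss hu
    have nE := nbr_noE h Fr hu hE
    have n1 := multi_Q hc h Tb nrV IH nE ((hA.mono nrV.1).dropP nE) hb hse ht
    have n2 := bEQ (IH _ nbV) (hA.mono nbV.1) hb hs ht (nbr_noE' Tb hu)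
    have k1 := bTP (IH _ clV) ((hA.mono clV.1).dropQ (cls_noE hc h.swap Tb hu)) hr hs hte
      (cls_noT hc h Fr hu)
    have key : fA s * fB (t + 1) + 2 * (fA s * fB t) + fA (s + 1) * fB t ≤
        fA (s + 1) * fB (t + 1) := by
      obtain ⟨x, hx⟩ := Nat.exists_eq_add_of_le aA1
      obtain ⟨y, hy⟩ := Nat.exists_eq_add_of_le aB1
      rw [hx, hy]
      nlinarith [Nat.zero_le (x * y), Nat.zero_le (x * fB t), Nat.zero_le (y * fA s)]
    omega
  push Not at hEr
  obtain ⟨S, hSV, hS, hcard⟩ := reps V p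
  have a1 := hcard (fA s * fB t) (fun u hu =>
    bEP (IH _ (cls_ss h u)) ((hA.mono (cls_ss h u).1).dropQ (cls_noE hc h.swap Tb hu)) hr hs hte
      (hEr u hu))
  have a2 := ram34 hc.sym h.rb S (fun u hu v hv n => h.two u (hSV hu) v (hSV hv) (hS u hu v hv n))
    (Fr.mono hSV) (Tb.mono hSV)
  calc V.card ≤ fA s * fB t * S.card := a1
    _ ≤ fA s * fB t * 8 := Nat.mul_le_mul_left _ a2
    _ ≤ _ := by omega

lemma case_QQ (hc : Gal c) (h : Ctx c V r b p) (hA : Adm c V P Q)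
    (IH : ∀ W, W ⊂ V → Bd c W) (hr : r ∈ Q) (hb : b ∈ Q) :
    V.card ≤ fA P.card * fB Q.card := by
  have Tb := hA.hQ b hb
  have Tr := hA.hQ r hr
  have hse : (Q.erase r).card = Q.card - 1 := Finset.card_erase_of_mem hr
  have hbe : b ∈ Q.erase r := Finset.mem_erase.2 ⟨h.rb.symm, hb⟩
  have h1 : 1 ≤ (Q.erase r).card := Finset.card_pos.2 ⟨b, hbe⟩
  obtain ⟨t, ht⟩ : ∃ t, Q.card = t + 2 := ⟨Q.card - 2, by omega⟩
  obtain ⟨S, hSV, hS, hcard⟩ := reps V p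
  have a1 := hcard (fA P.card * fB t) (fun u hu =>
    bEQ (IH _ (cls_ss h u)) ((hA.mono (cls_ss h u).1).dropQ (cls_noE hc h Tr hu)) hbe rfl
      (by omega) (cls_noE hc h.swap Tb hu))
  have a2 := ram33 hc.sym S (fun u hu v hv n => h.two u (hSV hu) v (hSV hv) (hS u hu v hv n))
    (Tr.mono hSV) (Tb.mono hSV)
  rw [ht]
  have e1 : fB (t + 2) = 5 * fB t := rfl
  rw [e1]
  calc V.card ≤ fA P.card * fB t * S.card := a1
    _ ≤ fA P.card * fB t * 5 := Nat.mul_le_mul_left _ a2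
    _ = _ := by ring

lemma four_le {s t : ℕ} (hs : 1 ≤ s) : 4 ≤ fA s * fB t := by
  obtain ⟨s, rfl⟩ := Nat.exists_eq_add_of_le' hs
  have := fA_lo s
  have := fA_pos s
  have := fB_pos t
  calc 4 = 4 * 1 := rfl
    _ ≤ _ := Nat.mul_le_mul (by omega) this

lemma case_ctx (hc : Gal c) (h : Ctx c V r b p) (hA : Adm c V P Q)
    (IH : ∀ W, W ⊂ V → Bd c W) : V.card ≤ fA P.card * fB Q.card := by
  obtain ⟨u, hu, -⟩ := h.ne
  obtain ⟨v, hv, nv, ev⟩ := sees h hu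
  obtain ⟨w, hw, nw, ew⟩ := sees h.swap hu
  have hr := hA.col u hu v hv (fun e => nv (e ▸ rfl))
  have hb := hA.col u hu w hw (fun e => nw (e ▸ rfl))
  rw [ev] at hr
  rw [ew] at hb
  have big : (∃ i, i ∈ P) → 4 ≤ fA P.card * fB Q.card := fun hi => four_le (Finset.card_pos.2 hi)
  have fr : r ∈ P → V.card ≤ fA P.card * fB Q.card ∨ NoF c V r := fun hi => by
    have := big ⟨r, hi⟩
    rcases ctx_noF hc h (hA.hP r hi) with q | q
    · left; omega
    · right; exact q
  have fb : b ∈ P → V.card ≤ fA P.card * fB Q.card ∨ NoF c V b := fun hi => by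
    have := big ⟨b, hi⟩
    rcases ctx_noF hc h.swap (hA.hP b hi) with q | q
    · left; omega
    · right; exact q
  rcases hr with hr | hr <;> rcases hb with hb | hb
  · rcases fr hr with q | Fr
    · exact q
    rcases fb hb with q | Fb
    · exact q
    exact case_PP hc h hA IH hr hb Fr Fb
  · rcases fr hr with q | Fr
    · exact q
    exact case_PQ hc h hA IH hr hb Fr
  · rcases fb hb with q | Fb
    · exact q
    exact case_PQ hc h.swap hA IH hb hr Fb
  · exact case_QQ hc h hA IH hr hb

lemma case_cut (hc : Gal c) {X : Finset α} (hX : X ⊆ V) (h0 : X.Nonempty) (h1 : X ≠ V) {i : ℕ}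
    (hi : ∀ x ∈ X, ∀ y ∈ V, y ∉ X → c x y = i) (hA : Adm c V P Q)
    (IH : ∀ W, W ⊂ V → Bd c W) : V.card ≤ fA P.card * fB Q.card := by
  have hY0 : (V \ X).Nonempty := by
    rw [Finset.sdiff_nonempty]; exact fun q => h1 (Finset.Subset.antisymm hX q)
  have hXY : ∀ x ∈ X, ∀ y ∈ V \ X, c x y = i := fun x hx y hy =>
    hi x hx y (Finset.mem_sdiff.1 hy).1 (Finset.mem_sdiff.1 hy).2
  have hd : Disjoint X (V \ X) := Finset.disjoint_sdiff
  have hu : X ∪ (V \ X) = V := Finset.union_sdiff_of_subset hX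
  have bX := IH X (hX.ssubset_of_ne h1)
  have bY := IH (V \ X) (Finset.sdiff_ssubset hX h0)
  have hcard : V.card = X.card + (V \ X).card := by
    rw [← Finset.card_union_of_disjoint hd, hu]
  obtain ⟨x, hx⟩ := id h0
  obtain ⟨y, hy⟩ := id hY0
  have hcol := hA.col x (hX hx) y (Finset.mem_sdiff.1 hy).1
    (fun e => (Finset.mem_sdiff.1 hy).2 (e ▸ hx))
  rw [hXY x hx y hy] at hcol
  rcases hcol with hP | hQ
  · obtain ⟨s, hs⟩ : ∃ s, P.card = s + 1 :=
      ⟨P.card - 1, by have := Finset.card_pos.2 ⟨i, hP⟩; omega⟩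
    by_cases hF : NoF c V i
    · have := cutP hc h0 hY0 hd hXY (by rw [hu]; exact hF) bX bY (by rw [hu]; exact hA) hP hs rfl
      rw [hcard, hs]
      refine this.trans ?_
      have a1 := fA_lo s
      have a2 := fB_hi Q.card
      calc fA s * (fB Q.card + fB (Q.card + 1)) ≤ fA s * (4 * fB Q.card) :=
            Nat.mul_le_mul_left _ (by omega)
        _ = 4 * fA s * fB Q.card := by ring
        _ ≤ _ := Nat.mul_le_mul_right _ a1
    · obtain ⟨A, hAV, hA4, hAr⟩ := exists_k4 hc hF
      have out := fun {a y : α} => k4_out hc (hA.hP i hP) hAV hA4 hAr (a := a) (y := y)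
      have four := four_le (s := P.card) (t := Q.card) (by omega)
      suffices V ⊆ A by
        have := Finset.card_le_card this
        omega
      have toY : ∀ x ∈ A, x ∈ X → V \ X ⊆ A := by
        intro x hx hxX y hy
        by_contra hyA
        exact out hx (Finset.mem_sdiff.1 hy).1 hyA (hXY x hxX y hy)
      have toX : ∀ y ∈ A, y ∈ V \ X → X ⊆ A := by
        intro y hy hyY x hx
        by_contra hxA
        apply out hy (hX hx) hxA
        rw [hc.sym]
        exact hXY x hx y hyY
      have both : X ⊆ A ∧ V \ X ⊆ A := by
        obtain ⟨a, ha⟩ : A.Nonempty := Finset.card_pos.1 (by omega)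
        by_cases haX : a ∈ X
        · have q := toY a ha haX
          exact ⟨toX y (q hy) hy, q⟩
        · have q := toX a ha (Finset.mem_sdiff.2 ⟨hAV ha, haX⟩)
          exact ⟨q, toY x (q hx) hx⟩
      rw [← hu]
      exact Finset.union_subset both.1 both.2
  · obtain ⟨t, ht⟩ : ∃ t, Q.card = t + 1 :=
      ⟨Q.card - 1, by have := Finset.card_pos.2 ⟨i, hQ⟩; omega⟩
    have := cutQ hc h0 hY0 hd hXY bX bY (by rw [hu]; exact hA) hQ rfl ht
    rw [hcard, ht]
    refine this.trans ?_
    calc 2 * (fA P.card * fB t) = fA P.card * (2 * fB t) := by ring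
      _ ≤ _ := Nat.mul_le_mul_left _ (fB_lo t)

end ctx

theorem main_bound {c : α → α → ℕ} (hc : Gal c) (V : Finset α) : Bd c V := by
  induction V using Finset.strongInduction with
  | H V IH =>
    intro P Q hA
    by_cases h2 : 2 ≤ V.card
    · obtain ⟨r, b, X, hX, h0, h1, hrb⟩ := gallai_cut hc V h2
      by_cases cb : ∃ A ⊆ V, A.Nonempty ∧ A ≠ V ∧ ∀ a ∈ A, ∀ y ∈ V, y ∉ A → c a y = b
      · obtain ⟨A, q1, q2, q3, q4⟩ := cb
        exact case_cut hc q1 q2 q3 q4 hA IH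
      by_cases cr : ∃ A ⊆ V, A.Nonempty ∧ A ≠ V ∧ ∀ a ∈ A, ∀ y ∈ V, y ∉ A → c a y = r
      · obtain ⟨A, q1, q2, q3, q4⟩ := cr
        exact case_cut hc q1 q2 q3 q4 hA IH
      have hne : r ≠ b := by
        rintro rfl
        exact cb ⟨X, hX, h0, h1, fun x hx y hy n => by have := hrb x hx y hy n; tauto⟩
      obtain ⟨p, hp⟩ := part_of_cut hc hX h0 h1 hrb
      push Not at cb cr
      exact case_ctx hc (r := r) (b := b) (p := p)
        { two := hp.two, mod := hp.mod, ne := hp.ne, rb := hne, conr := cb, conb := cr } hA IH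
    · have : 1 * 1 ≤ fA P.card * fB Q.card := Nat.mul_le_mul (fA_pos _) (fB_pos _)
      omega

end GR2

/-! Lower bound construction -/

/-- A good coloring on an arbitrary type with colors `1..k`. -/
structure GoodCol (k : ℕ) (β : Type) (c : β → β → ℕ) : Prop where
  sym : ∀ u v, c u v = c v u
  rng : ∀ u v, u ≠ v → 1 ≤ c u v ∧ c u v ≤ k
  tri : ∀ u v w, u ≠ v → u ≠ w → v ≠ w → c u v = c u w ∨ c u v = c v w ∨ c u w = c v w
  noP : ∀ i, ∀ x a b d e : β,
    x ≠ a → x ≠ b → x ≠ d → x ≠ e → a ≠ b → a ≠ d → a ≠ e → b ≠ d → b ≠ e → d ≠ e →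
    c x a = i → c x b = i → c x d = i → c x e = i → c a b = i → c a d = i → c b d = i → False

/-- Quadratic residues modulo 17. -/
def pal (x : ZMod 17) : Bool := decide (x ^ 8 = 1)

lemma pal_neg : ∀ x : ZMod 17, pal (-x) = pal x := by decide +kernel

def palOk (t : Bool) (x : ZMod 17) : Bool := decide (x ≠ 0) && (pal x == t)

lemma pal_clique0 : ∀ t : Bool, ∀ x : ZMod 17, palOk t x = true → ∀ y : ZMod 17,
    (palOk t y && palOk t (x - y)) = true → ∀ z : ZMod 17,
    (palOk t z && palOk t (x - z) && palOk t (y - z)) = false := by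
  decide +kernel

lemma pal_clique (t : Bool) (x : ZMod 17) (h1 : x ≠ 0) (e1 : pal x = t) (y : ZMod 17) (h2 : y ≠ 0)
    (e2 : pal y = t) (h3 : x - y ≠ 0) (e3 : pal (x - y) = t) (z : ZMod 17) (h4 : z ≠ 0)
    (e4 : pal z = t) (h5 : x - z ≠ 0) (e5 : pal (x - z) = t) (h6 : y - z ≠ 0)
    (e6 : pal (y - z) = t) : False := by
  have ok : ∀ w : ZMod 17, w ≠ 0 → pal w = t → palOk t w = true := by
    intro w h e; simp [palOk, h, e]
  have := pal_clique0 t x (ok _ h1 e1) y (by rw [ok _ h2 e2, ok _ h3 e3]; rfl) z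
  rw [ok _ h4 e4, ok _ h5 e5, ok _ h6 e6] at this
  exact absurd this (by decide)

lemma pal_K4 (t : Bool) (x a b d : ZMod 17) (h1 : x ≠ a) (h2 : x ≠ b) (h3 : x ≠ d) (h4 : a ≠ b)
    (h5 : a ≠ d) (h6 : b ≠ d) (e1 : pal (x - a) = t) (e2 : pal (x - b) = t)
    (e3 : pal (x - d) = t) (e4 : pal (a - b) = t) (e5 : pal (a - d) = t) (e6 : pal (b - d) = t) :
    False := by
  have f4 : (x - a) - (x - b) = -(a - b) := by ring
  have f5 : (x - a) - (x - d) = -(a - d) := by ring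
  have f6 : (x - b) - (x - d) = -(b - d) := by ring
  refine pal_clique t (x - a) (sub_ne_zero.2 h1) e1 (x - b) (sub_ne_zero.2 h2) e2 ?_ ?_
    (x - d) (sub_ne_zero.2 h3) e3 ?_ ?_ ?_ ?_
  · rw [f4]; exact neg_ne_zero.2 (sub_ne_zero.2 h4)
  · rw [f4, pal_neg]; exact e4
  · rw [f5]; exact neg_ne_zero.2 (sub_ne_zero.2 h5)
  · rw [f5, pal_neg]; exact e5
  · rw [f6]; exact neg_ne_zero.2 (sub_ne_zero.2 h6)
  · rw [f6, pal_neg]; exact e6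

/-- Substitution of a coloring into the Paley coloring on 17 vertices. -/
def sub17 {β : Type} (k : ℕ) (c : β → β → ℕ) (u v : ZMod 17 × β) : ℕ :=
  if u.1 = v.1 then c u.2 v.2 else if pal (u.1 - v.1) = true then k + 1 else k + 2

lemma good_step {k : ℕ} {β : Type} {c : β → β → ℕ} (h : GoodCol k β c) :
    GoodCol (k + 2) (ZMod 17 × β) (sub17 k c) := by
  have inner : ∀ u v : ZMod 17 × β, u.1 = v.1 → sub17 k c u v = c u.2 v.2 := by
    intro u v e; simp [sub17, e]
  have ne2 : ∀ u v : ZMod 17 × β, u ≠ v → u.1 = v.1 → u.2 ≠ v.2 := by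
    intro u v n e e2; exact n (Prod.ext e e2)
  have outer : ∀ u v : ZMod 17 × β, u.1 ≠ v.1 →
      (pal (u.1 - v.1) = true ∧ sub17 k c u v = k + 1) ∨
      (pal (u.1 - v.1) = false ∧ sub17 k c u v = k + 2) := by
    intro u v n
    cases hq : pal (u.1 - v.1) <;> simp [sub17, n, hq]
  have cases' : ∀ u v : ZMod 17 × β, u ≠ v → (u.1 = v.1 ∧ sub17 k c u v ≤ k) ∨
      (u.1 ≠ v.1 ∧ k < sub17 k c u v) := by
    intro u v n
    by_cases e : u.1 = v.1
    · left; rw [inner u v e]; exact ⟨e, (h.rng _ _ (ne2 u v n e)).2⟩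
    · right; have := outer u v e; exact ⟨e, by omega⟩
  refine ⟨?_, ?_, ?_, ?_⟩
  · intro u v
    unfold sub17
    rw [h.sym u.2 v.2, ← pal_neg (u.1 - v.1), neg_sub]
    simp only [eq_comm]
  · intro u v n
    by_cases e : u.1 = v.1
    · rw [inner u v e]; have := h.rng _ _ (ne2 u v n e); omega
    · have := outer u v e; omega
  · intro u v w n1 n2 n3
    by_cases e1 : u.1 = v.1
    · by_cases e2 : u.1 = w.1
      · rw [inner u v e1, inner u w e2, inner v w (e1.symm.trans e2)]
        exact h.tri _ _ _ (ne2 _ _ n1 e1) (ne2 _ _ n2 e2) (ne2 _ _ n3 (e1.symm.trans e2))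
      · right; right
        have e3 : v.1 ≠ w.1 := e1 ▸ e2
        simp [sub17, e3, e1]
    · by_cases e2 : u.1 = w.1
      · right; left
        have e3 : v.1 ≠ w.1 := e2 ▸ (Ne.symm e1)
        unfold sub17
        rw [if_neg e1, if_neg e3, ← e2, ← pal_neg (u.1 - v.1), neg_sub]
      · by_cases e3 : v.1 = w.1
        · left; simp [sub17, e2, e3]
        · have := outer u v e1
          have := outer u w e2
          have := outer v w e3
          omega
  · intro i x a b d e n1 n2 n3 n4 n5 n6 n7 n8 n9 n10 q1 q2 q3 q4 q5 q6 q7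
    have c1 := cases' x a n1
    have c2 := cases' x b n2
    have c3 := cases' x d n3
    have c4 := cases' x e n4
    have c5 := cases' a b n5
    have c6 := cases' a d n6
    have c8 := cases' b d n8
    rw [q1] at c1
    rw [q2] at c2
    rw [q3] at c3
    rw [q4] at c4
    rw [q5] at c5
    rw [q6] at c6
    rw [q7] at c8
    by_cases hi : i ≤ k
    · have g : ∀ {s : Prop} {t : Prop}, (s ∧ i ≤ k) ∨ (t ∧ k < i) → s := by
        intro s t hh
        rcases hh with hh | hh
        · exact hh.1
        · omega
      have g1 := g c1
      have g2 := g c2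
      have g3 := g c3
      have g4 := g c4
      have g5 := g c5
      have g6 := g c6
      have g8 := g c8
      rw [inner _ _ g1] at q1
      rw [inner _ _ g2] at q2
      rw [inner _ _ g3] at q3
      rw [inner _ _ g4] at q4
      rw [inner _ _ g5] at q5
      rw [inner _ _ g6] at q6
      rw [inner _ _ g8] at q7
      exact h.noP i x.2 a.2 b.2 d.2 e.2 (ne2 _ _ n1 g1) (ne2 _ _ n2 g2) (ne2 _ _ n3 g3)
        (ne2 _ _ n4 g4) (ne2 _ _ n5 g5) (ne2 _ _ n6 g6) (ne2 _ _ n7 (g1.symm.trans g4))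
        (ne2 _ _ n8 g8) (ne2 _ _ n9 (g2.symm.trans g4)) (ne2 _ _ n10 (g3.symm.trans g4))
        q1 q2 q3 q4 q5 q6 q7
    · have g : ∀ {s : Prop} {t : Prop}, (s ∧ i ≤ k) ∨ (t ∧ k < i) → t := by
        intro s t hh
        rcases hh with hh | hh
        · omega
        · exact hh.1
      have g1 := g c1
      have g2 := g c2
      have g3 := g c3
      have g5 := g c5
      have g6 := g c6
      have g8 := g c8
      have o1 := outer _ _ g1
      have o2 := outer _ _ g2
      have o3 := outer _ _ g3
      have o5 := outer _ _ g5
      have o6 := outer _ _ g6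
      have o8 := outer _ _ g8
      rw [q1] at o1
      rw [q2] at o2
      rw [q3] at o3
      rw [q5] at o5
      rw [q6] at o6
      rw [q7] at o8
      by_cases hi1 : i = k + 1
      · have w : ∀ {s t : Prop}, (s ∧ i = k + 1) ∨ (t ∧ i = k + 2) → s := by
          intro s t hh
          rcases hh with hh | hh
          · exact hh.1
          · omega
        exact pal_K4 true _ _ _ _ g1 g2 g3 g5 g6 g8 (w o1) (w o2) (w o3) (w o5) (w o6) (w o8)
      · have w : ∀ {s t : Prop}, (s ∧ i = k + 1) ∨ (t ∧ i = k + 2) → t := by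
          intro s t hh
          rcases hh with hh | hh
          · omega
          · exact hh.1
        exact pal_K4 false _ _ _ _ g1 g2 g3 g5 g6 g8 (w o1) (w o2) (w o3) (w o5) (w o6) (w o8)

lemma good_exists : ∀ k, ∃ (β : Type) (_ : Fintype β) (c : β → β → ℕ),
    GoodCol k β c ∧ Fintype.card β = fA k
  | 0 => ⟨Unit, inferInstance, fun _ _ => 0,
      ⟨fun _ _ => rfl, fun u v n => absurd rfl n, fun u v _ n => absurd rfl n,
        fun _ x a _ _ _ n => absurd rfl n⟩, rfl⟩
  | 1 => ⟨Fin 4, inferInstance, fun _ _ => 1,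
      ⟨fun _ _ => rfl, fun u v n => ⟨le_rfl, le_rfl⟩, fun u v _ _ _ _ => Or.inl rfl, by
        intro i x a b d e
        omega⟩, rfl⟩
  | (k + 2) => by
      obtain ⟨β, _, c, h, hcard⟩ := good_exists k
      refine ⟨ZMod 17 × β, inferInstance, sub17 k c, good_step h, ?_⟩
      rw [Fintype.card_prod, hcard, ZMod.card]
      rfl

lemma fA_formula : ∀ k, fA k = if Even k then 17 ^ (k / 2) else 4 * 17 ^ ((k - 1) / 2)
  | 0 => by simp [fA]
  | 1 => by simp [fA]
  | (k + 2) => by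
      have ih := fA_formula k
      have e : fA (k + 2) = 17 * fA k := rfl
      rw [e, ih]
      by_cases hk : Even k
      · have h2 : Even (k + 2) := by rw [Nat.even_add]; simp [hk]
        rw [if_pos hk, if_pos h2]
        rw [show (k + 2) / 2 = k / 2 + 1 by omega, pow_succ]; ring
      · have h2 : ¬ Even (k + 2) := by rw [Nat.even_add]; simp [hk]
        rw [if_neg hk, if_neg h2]
        have : 1 ≤ k := by
          rcases Nat.eq_zero_or_pos k with rfl | h
          · exact absurd (by simp) hk
          · exact h
        rw [show (k + 2 - 1) / 2 = (k - 1) / 2 + 1 by omega, pow_succ]; ring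

theorem gallai_ramsey_K4plus (k : ℕ) (hk : 1 ≤ k) :
    IsLeast {n : ℕ |
        ∀ c : Fin n → Fin n → ℕ, IsSym c →
          (∀ u v : Fin n, u ≠ v → c u v ∈ Finset.Icc 1 k) →
          NoRainbowTriangle c →
          ∃ i ∈ Finset.Icc 1 k, HasMonoK4plus c i}
      (if Even k then 17 ^ (k / 2) + 1 else 4 * 17 ^ ((k - 1) / 2) + 1) := by
  have hf : (if Even k then 17 ^ (k / 2) + 1 else 4 * 17 ^ ((k - 1) / 2) + 1) = fA k + 1 := by
    rw [fA_formula]; split_ifs <;> rfl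
  rw [hf]
  constructor
  · intro c hs hcol htri
    by_contra hcon
    have hA : Adm c Finset.univ (Finset.Icc 1 k) ∅ := by
      refine ⟨Finset.disjoint_empty_right _, fun u _ v _ n => Or.inl (hcol u v n), ?_, by simp⟩
      intro i hi x _ a _ b _ d _ e _ n1 n2 n3 n4 n5 n6 n7 n8 n9 n10 q1 q2 q3 q4 q5 q6 q7
      exact hcon ⟨i, hi, x, a, b, d, e, n1, n2, n3, n4, n5, n6, n7, n8, n9, n10,
        q1, q2, q3, q4, q5, q6, q7⟩
    have := main_bound (c := c) ⟨hs, htri⟩ Finset.univ _ _ hA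
    simp [fB] at this
  · intro n hn
    by_contra hlt
    obtain ⟨β, _, c, h, hcard⟩ := good_exists k
    obtain ⟨f⟩ : Nonempty (Fin n ↪ β) :=
      Function.Embedding.nonempty_of_card_le (by rw [hcard, Fintype.card_fin]; omega)
    have ne : ∀ {u v : Fin n}, u ≠ v → f u ≠ f v := fun q e => q (f.injective e)
    obtain ⟨i, -, x, a, b, d, e, n1, n2, n3, n4, n5, n6, n7, n8, n9, n10, q1, q2, q3, q4, q5, q6,
      q7⟩ := hn (fun u v => c (f u) (f v)) (fun u v => h.sym _ _)
        (fun u v q => Finset.mem_Icc.2 (h.rng _ _ (ne q)))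
        (fun u v w a1 a2 a3 => h.tri _ _ _ (ne a1) (ne a2) (ne a3))
    exact h.noP i (f x) (f a) (f b) (f d) (f e) (ne n1) (ne n2) (ne n3) (ne n4) (ne n5) (ne n6)
      (ne n7) (ne n8) (ne n9) (ne n10) q1 q2 q3 q4 q5 q6 q7
end

section
/- For every positive integer k, the Gallai-Ramsey number gr_k(K3 : K3) equals 5^{k/2} + 1 if k is even, and 2·5^{(k−1)/2} + 1 if k is odd. -/
/-- The largest order of a Gallai coloring with `k` colors and no monochromatic triangle. -/
def grBound (k : ℕ) : ℕ := if Even k then 5 ^ (k / 2) else 2 * 5 ^ ((k - 1) / 2)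

theorem grBound_add_two (k : ℕ) : grBound (k + 2) = 5 * grBound k := by
  unfold grBound
  rcases Nat.even_or_odd' k with ⟨m, rfl | rfl⟩
  · have h1 : (2 * m + 2) / 2 = m + 1 := by omega
    have h2 : (2 * m) / 2 = m := by omega
    have e1 : Even (2 * m + 2) := ⟨m + 1, by ring⟩
    have e2 : Even (2 * m) := ⟨m, by ring⟩
    rw [if_pos e1, if_pos e2, h1, h2, pow_succ]
    ring
  · have h1 : (2 * m + 1 + 2 - 1) / 2 = m + 1 := by omega
    have h2 : (2 * m + 1 - 1) / 2 = m := by omega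
    have e1 : ¬ Even (2 * m + 1 + 2) := by
      rw [Nat.not_even_iff]; omega
    have e2 : ¬ Even (2 * m + 1) := by
      rw [Nat.not_even_iff]; omega
    rw [if_neg e1, if_neg e2, h1, h2, pow_succ]
    ring

theorem grBound_pos (k : ℕ) : 1 ≤ grBound k := by
  unfold grBound
  split_ifs
  · exact Nat.one_le_pow _ _ (by norm_num)
  · have := Nat.one_le_pow ((k - 1) / 2) 5 (by norm_num)
    omega

theorem grBound_succ (k : ℕ) : 2 * grBound k ≤ grBound (k + 1) := by
  induction k using Nat.twoStepInduction with
  | zero => decide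
  | one => decide
  | more n ih _ =>
    rw [grBound_add_two n, show n + 2 + 1 = (n + 1) + 2 by ring, grBound_add_two (n + 1)]
    omega

section Gallai

variable {α : Type*} [DecidableEq α] (c : α → α → ℕ)

/-- `p`-reachability inside `V`. -/
def GReach (p : ℕ) (V : Finset α) : α → α → Prop :=
  Relation.ReflTransGen (fun a b => a ∈ V ∧ b ∈ V ∧ c a b = p)

/-- The color class `p` is connected on `V`. -/
def GConn (p : ℕ) (V : Finset α) : Prop :=
  ∀ A ⊆ V, A.Nonempty → (V \ A).Nonempty → ∃ a ∈ A, ∃ b ∈ V \ A, c a b = p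

/-- The `p`-component of `x` inside `V`. -/
noncomputable def gComp (p : ℕ) (V : Finset α) (x : α) : Finset α :=
  open Classical in V.filter (fun y => GReach c p V x y)

/-- The colors seen by `v` inside `V`. -/
def gSeen (V : Finset α) (v : α) : Finset ℕ := (V.erase v).image (c v)

variable {c}

theorem mem_gSeen {V : Finset α} {v : α} {i : ℕ} :
    i ∈ gSeen c V v ↔ ∃ w ∈ V, w ≠ v ∧ c v w = i := by
  simp only [gSeen, Finset.mem_image, Finset.mem_erase]
  constructor
  · rintro ⟨w, ⟨h1, h2⟩, h3⟩
    exact ⟨w, h2, h1, h3⟩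
  · rintro ⟨w, h1, h2, h3⟩
    exact ⟨w, ⟨h2, h1⟩, h3⟩

theorem mem_gComp {p : ℕ} {V : Finset α} {x y : α} :
    y ∈ gComp c p V x ↔ y ∈ V ∧ GReach c p V x y := by
  simp [gComp]

theorem self_mem_gComp {p : ℕ} {V : Finset α} {x : α} (hx : x ∈ V) : x ∈ gComp c p V x :=
  mem_gComp.2 ⟨hx, Relation.ReflTransGen.refl⟩

/-- No `p`-edge leaves a `p`-component. -/
theorem gComp_out {p : ℕ} {V : Finset α} {x y z : α}
    (hy : y ∈ gComp c p V x) (hz : z ∈ V) (hz' : z ∉ gComp c p V x) : c y z ≠ p := by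
  intro h
  obtain ⟨h1, h2⟩ := mem_gComp.1 hy
  exact hz' (mem_gComp.2 ⟨hz, h2.tail ⟨h1, hz, h⟩⟩)

/-- A component is a module. -/
theorem gComp_module (hs : ∀ u v, c u v = c v u)
    (hg : ∀ u v w : α, u ≠ v → u ≠ w → v ≠ w →
      c u v = c u w ∨ c u v = c v w ∨ c u w = c v w)
    {p : ℕ} {V : Finset α} {x y z : α} (hx : x ∈ V)
    (hy : y ∈ gComp c p V x) (hz : z ∈ V) (hz' : z ∉ gComp c p V x) : c z y = c z x := by
  obtain ⟨h1, h2⟩ := mem_gComp.1 hy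
  clear h1 hy
  induction h2 with
  | refl => rfl
  | @tail a b hab hb ih =>
    rw [← ih]
    have ha' : a ∈ gComp c p V x := mem_gComp.2 ⟨hb.1, hab⟩
    have hb' : b ∈ gComp c p V x := mem_gComp.2 ⟨hb.2.1, hab.tail hb⟩
    by_cases e : a = b
    · rw [e]
    have na : a ≠ z := fun h => hz' (h ▸ ha')
    have nb : b ≠ z := fun h => hz' (h ▸ hb')
    have o1 := gComp_out ha' hz hz'
    have o2 := gComp_out hb' hz hz'
    have h3 := hb.2.2
    have := hg a b z e na nb
    have := hs a z
    have := hs b z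
    omega

theorem gallai_step (hs : ∀ u v, c u v = c v u)
    (hg : ∀ u v w : α, u ≠ v → u ≠ w → v ≠ w →
      c u v = c u w ∨ c u v = c v w ∨ c u w = c v w)
    {V : Finset α} {v : α} (hv : v ∈ V) {p q r : ℕ} (hpq : p ≠ q) (hpr : p ≠ r)
    (hqr : q ≠ r) (hp : GConn c p V) (hq : GConn c q V) (hr : GConn c r V)
    (h2 : (V.erase v).Nonempty) (hnp : ¬ GConn c p (V.erase v)) : False := by
  have hV' : V \ {v} = V.erase v := by ext; simp [and_comm]
  have key : ∀ x ∈ V.erase v, ∃ z ∈ gComp c p (V.erase v) x, c v z = p := by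
    intro x hx
    obtain ⟨a, ha, b, hb, hab⟩ := hp (gComp c p (V.erase v) x)
      (fun y hy => Finset.mem_of_mem_erase (mem_gComp.1 hy).1) ⟨x, self_mem_gComp hx⟩
      ⟨v, by
        rw [Finset.mem_sdiff]
        exact ⟨hv, fun h => by simpa using (mem_gComp.1 h).1⟩⟩
    rw [Finset.mem_sdiff] at hb
    by_cases e : b = v
    · subst e
      exact ⟨a, ha, by rw [hs]; exact hab⟩
    · exact absurd hab (gComp_out ha (Finset.mem_erase.2 ⟨e, hb.1⟩) hb.2)
  have sing : ∀ i, GConn c i V → ∃ x ∈ V.erase v, c v x = i := by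
    intro i hi
    obtain ⟨a, ha, b, hb, hab⟩ := hi {v} (by simpa using hv) ⟨v, by simp⟩ (by rw [hV']; exact h2)
    rw [Finset.mem_singleton] at ha
    subst ha
    exact ⟨b, by rw [← hV']; exact hb, hab⟩
  obtain ⟨x, hx, hvx⟩ := sing q hq
  obtain ⟨y, hy, hvy⟩ := sing r hr
  -- an edge from `v` of non-`p` color forces the color across components
  have cross : ∀ a ∈ V.erase v, ∀ b ∈ V.erase v, c v b = p → c v a ≠ p → c a b ≠ p →
      c a b = c v a := by
    intro a ha b hb h1 h3 h4
    have n1 := Finset.ne_of_mem_erase ha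
    have n2 := Finset.ne_of_mem_erase hb
    have n3 : a ≠ b := fun h => h3 (h ▸ h1)
    have := hg v a b n1.symm n2.symm n3
    omega
  by_cases hxy : y ∈ gComp c p (V.erase v) x
  · -- find another component
    have : ∃ w ∈ V.erase v, w ∉ gComp c p (V.erase v) x := by
      by_contra hcon
      push Not at hcon
      apply hnp
      intro A hA hA1 hA2
      by_contra hno
      push Not at hno
      -- membership in `A` is invariant along `p`-reachability
      have inv : ∀ w, GReach c p (V.erase v) x w → (x ∈ A ↔ w ∈ A) := by
        intro w hw
        induction hw with
        | refl => rfl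
        | @tail a b _ hb ih =>
          rw [ih]
          constructor
          · intro h
            by_contra h'
            exact hno a h b (Finset.mem_sdiff.2 ⟨hb.2.1, h'⟩) hb.2.2
          · intro h
            by_contra h'
            exact hno b h a (Finset.mem_sdiff.2 ⟨hb.1, h'⟩) (by rw [hs]; exact hb.2.2)
      obtain ⟨a, ha⟩ := hA1
      obtain ⟨b, hb⟩ := hA2
      rw [Finset.mem_sdiff] at hb
      have ia := inv a (mem_gComp.1 (hcon a (hA ha))).2
      have ib := inv b (mem_gComp.1 (hcon b hb.1)).2
      exact hb.2 (ib.1 (ia.2 ha))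
    obtain ⟨w, hw, hwx⟩ := this
    obtain ⟨z, hz, hvz⟩ := key w hw
    have hzV := (mem_gComp.1 hz).1
    have hzx : z ∉ gComp c p (V.erase v) x := by
      intro h
      -- `w` to `z` reach, `x` to `z` reach : use the module property the other way
      have symm' : ∀ a b, GReach c p (V.erase v) a b → GReach c p (V.erase v) b a := by
        intro a b hab
        induction hab with
        | refl => exact Relation.ReflTransGen.refl
        | tail _ h ih => exact Relation.ReflTransGen.head ⟨h.2.1, h.1, by rw [hs]; exact h.2.2⟩ ih
      exact hwx (mem_gComp.2 ⟨hw, (mem_gComp.1 h).2.trans (symm' _ _ (mem_gComp.1 hz).2)⟩)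
    have m := gComp_module hs hg hx hxy hzV hzx
    have c1 := cross x hx z hzV hvz (by omega) (gComp_out (self_mem_gComp hx) hzV hzx)
    have c2 := cross y hy z hzV hvz (by omega) (gComp_out hxy hzV hzx)
    have := hs x z
    have := hs y z
    omega
  · have symm' : ∀ a b, GReach c p (V.erase v) a b → GReach c p (V.erase v) b a := by
      intro a b hab
      induction hab with
      | refl => exact Relation.ReflTransGen.refl
      | tail _ h ih => exact Relation.ReflTransGen.head ⟨h.2.1, h.1, by rw [hs]; exact h.2.2⟩ ih
    obtain ⟨z, hz, hvz⟩ := key y hy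
    obtain ⟨w, hw, hvw⟩ := key x hx
    have hzV := (mem_gComp.1 hz).1
    have hwV := (mem_gComp.1 hw).1
    have hzx : z ∉ gComp c p (V.erase v) x := fun h =>
      hxy (mem_gComp.2 ⟨hy, (mem_gComp.1 h).2.trans (symm' _ _ (mem_gComp.1 hz).2)⟩)
    have hxy' : x ∉ gComp c p (V.erase v) y := fun h =>
      hxy (mem_gComp.2 ⟨hy, symm' _ _ (mem_gComp.1 h).2⟩)
    have c1 := cross x hx z hzV hvz (by omega) (gComp_out (self_mem_gComp hx) hzV hzx)
    have c2 := cross y hy w hwV hvw (by omega) (by rw [hs]; exact gComp_out hw hy hxy)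
    have m1 := gComp_module hs hg hx hw hy hxy
    have m2 := gComp_module hs hg hy hz hx hxy'
    have := hs x y
    omega

/-- At most two colors are connected in a Gallai coloring. -/
theorem gallai_conn (hs : ∀ u v, c u v = c v u)
    (hg : ∀ u v w : α, u ≠ v → u ≠ w → v ≠ w →
      c u v = c u w ∨ c u v = c v w ∨ c u w = c v w)
    (V : Finset α) : 2 ≤ V.card → ∀ {p q r : ℕ}, p ≠ q → p ≠ r → q ≠ r →
    GConn c p V → GConn c q V → GConn c r V → False := by
  induction V using Finset.strongInduction with
  | H V ih =>
  intro hV p q r hpq hpr hqr hp hq hr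
  obtain ⟨v, hv⟩ : V.Nonempty := Finset.card_pos.1 (by omega)
  have hcard := Finset.card_erase_of_mem hv
  have hne : (V.erase v).Nonempty := Finset.card_pos.1 (by omega)
  by_cases h3 : 2 ≤ (V.erase v).card
  · by_cases hp' : GConn c p (V.erase v)
    · by_cases hq' : GConn c q (V.erase v)
      · by_cases hr' : GConn c r (V.erase v)
        · exact ih _ (Finset.erase_ssubset hv) h3 hpq hpr hqr hp' hq' hr'
        · exact gallai_step hs hg hv hpr.symm hqr.symm hpq hr hp hq hne hr'
      · exact gallai_step hs hg hv hpq.symm hqr hpr hq hp hr hne hq'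
    · exact gallai_step hs hg hv hpq hpr hqr hp hq hr hne hp'
  · obtain ⟨w, hw⟩ := Finset.card_eq_one.1 (show (V.erase v).card = 1 by omega)
    have hV' : V \ {v} = {w} := by rw [← hw]; ext; simp [and_comm]
    have sing : ∀ i, GConn c i V → c v w = i := by
      intro i hi
      obtain ⟨a, ha, b, hb, hab⟩ := hi {v} (by simpa using hv) ⟨v, by simp⟩
        (by rw [hV']; simp)
      rw [hV'] at hb
      simp only [Finset.mem_singleton] at ha hb
      rw [ha, hb] at hab
      exact hab
    exact hpq ((sing p hp).symm.trans (sing q hq))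

theorem gallai_bound (hs : ∀ u v, c u v = c v u)
    (hg : ∀ u v w : α, u ≠ v → u ≠ w → v ≠ w →
      c u v = c u w ∨ c u v = c v w ∨ c u w = c v w)
    (hm : ∀ a b d : α, a ≠ b → a ≠ d → b ≠ d → ¬ (c a b = c a d ∧ c a b = c b d))
    (m : ℕ) : ∀ (V : Finset α) (S : Finset ℕ), V.card ≤ m →
    (∀ u ∈ V, gSeen c V u ⊆ S) →
    ∑ v ∈ V, grBound (S \ gSeen c V v).card ≤ grBound S.card := by
  induction m with
  | zero =>
    intro V S hV _
    have : V = ∅ := Finset.card_eq_zero.1 (by omega)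
    subst this
    simp
  | succ m ih =>
  intro V S hV hS
  by_cases hmod : ∃ A ⊆ V, ∃ a ∈ A, 2 ≤ A.card ∧ A.card < V.card ∧
      ∀ z ∈ V \ A, ∀ y ∈ A, c z y = c z a
  · obtain ⟨A, hAV, a, ha, hA2, hAc, hmd⟩ := hmod
    set O := (V \ A).image (c a) with hO
    have hOm : ∀ i, i ∈ O ↔ ∃ z ∈ V \ A, c z a = i := by
      intro i
      rw [hO, Finset.mem_image]
      simp only [hs a]
    have e1 : ∀ v ∈ A, S \ gSeen c V v = (S \ O) \ gSeen c A v := by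
      intro v hv
      ext i
      simp only [Finset.mem_sdiff, mem_gSeen, hOm]
      constructor
      · rintro ⟨h1, h2⟩
        refine ⟨⟨h1, ?_⟩, ?_⟩
        · rintro ⟨z, hz, hzi⟩
          refine h2 ⟨z, hz.1, fun h => hz.2 (h ▸ hv), ?_⟩
          rw [hs, hmd z (Finset.mem_sdiff.2 hz) v hv]
          exact hzi
        · rintro ⟨w, hw, h3⟩
          exact h2 ⟨w, hAV hw, h3⟩
      · rintro ⟨⟨h1, h2⟩, h3⟩
        refine ⟨h1, ?_⟩
        rintro ⟨w, hw, hwv, hi⟩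
        by_cases hwA : w ∈ A
        · exact h3 ⟨w, hwA, hwv, hi⟩
        · refine h2 ⟨w, ⟨hw, hwA⟩, ?_⟩
          rw [← hmd w (Finset.mem_sdiff.2 ⟨hw, hwA⟩) v hv, hs]
          exact hi
    have i1 := ih A (S \ O) (by omega) (by
      intro u hu i hi
      obtain ⟨w, hw, hwu, h⟩ := mem_gSeen.1 hi
      rw [Finset.mem_sdiff]
      refine ⟨hS u (hAV hu) (mem_gSeen.2 ⟨w, hAV hw, hwu, h⟩), ?_⟩
      rw [hOm]
      rintro ⟨z, hz, hzi⟩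
      have h1 := hmd z hz u hu
      have h2 := hmd z hz w hw
      have hzA := (Finset.mem_sdiff.1 hz).2
      exact hm z u w (fun h => hzA (h ▸ hu)) (fun h => hzA (h ▸ hw)) hwu.symm
        ⟨by omega, by omega⟩)
    have ha' : a ∉ V \ A := fun h => (Finset.mem_sdiff.1 h).2 ha
    have hsd := Finset.card_sdiff_add_card_eq_card hAV
    have sub : insert a (V \ A) ⊆ V := Finset.insert_subset (hAV ha) Finset.sdiff_subset
    have i2 := ih (insert a (V \ A)) S (by rw [Finset.card_insert_of_notMem ha']; omega) (by
      intro u hu i hi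
      obtain ⟨w, hw, hwu, h⟩ := mem_gSeen.1 hi
      exact hS u (sub hu) (mem_gSeen.2 ⟨w, sub hw, hwu, h⟩))
    rw [Finset.sum_insert ha'] at i2
    have e2 : gSeen c (insert a (V \ A)) a = O := by
      rw [gSeen, Finset.erase_insert ha']
    have e3 : ∀ v ∈ V \ A, gSeen c (insert a (V \ A)) v = gSeen c V v := by
      intro v hv
      ext i
      simp only [mem_gSeen]
      constructor
      · rintro ⟨w, hw, h⟩
        exact ⟨w, sub hw, h⟩
      · rintro ⟨w, hw, hwv, h⟩
        by_cases hwA : w ∈ A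
        · refine ⟨a, Finset.mem_insert_self _ _, fun e => ha' (e ▸ hv), ?_⟩
          rw [← hmd v hv w hwA]
          exact h
        · exact ⟨w, Finset.mem_insert_of_mem (Finset.mem_sdiff.2 ⟨hw, hwA⟩), hwv, h⟩
    rw [e2, Finset.sum_congr rfl (fun v hv => by rw [e3 v hv])] at i2
    rw [← Finset.sum_sdiff hAV, Finset.sum_congr rfl (fun v hv => by rw [e1 v hv] : ∀ v ∈ A,
      grBound (S \ gSeen c V v).card = grBound ((S \ O) \ gSeen c A v).card)]
    omega
  · -- every used color is connected
    by_cases hV2 : V.card ≤ 1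
    · rcases Nat.le_one_iff_eq_zero_or_eq_one.1 hV2 with h | h
      · rw [Finset.card_eq_zero.1 h]; simp
      · obtain ⟨x, rfl⟩ := Finset.card_eq_one.1 h
        simp [gSeen]
    have conn : ∀ x ∈ V, ∀ y ∈ V, x ≠ y → GConn c (c x y) V := by
      intro x hx y hy hxy A hA hA1 hA2
      by_contra hno
      push Not at hno
      apply hmod
      refine ⟨gComp c (c x y) V x, fun z hz => (mem_gComp.1 hz).1, x, self_mem_gComp hx, ?_, ?_, ?_⟩
      · apply Finset.one_lt_card.2
        exact ⟨x, self_mem_gComp hx, y, mem_gComp.2 ⟨hy, Relation.ReflTransGen.single ⟨hx, hy, rfl⟩⟩,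
          hxy⟩
      · apply Finset.card_lt_card
        rw [Finset.ssubset_iff_subset_ne]
        refine ⟨fun z hz => (mem_gComp.1 hz).1, fun heq => ?_⟩
        have inv : ∀ w, GReach c (c x y) V x w → (x ∈ A ↔ w ∈ A) := by
          intro w hw
          induction hw with
          | refl => rfl
          | @tail a b _ hb ih =>
            rw [ih]
            constructor
            · intro h
              by_contra h'
              exact hno a h b (Finset.mem_sdiff.2 ⟨hb.2.1, h'⟩) hb.2.2
            · intro h
              by_contra h'
              exact hno b h a (Finset.mem_sdiff.2 ⟨hb.1, h'⟩) (by rw [hs]; exact hb.2.2)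
        obtain ⟨a, ha⟩ := hA1
        obtain ⟨b, hb⟩ := hA2
        rw [Finset.mem_sdiff] at hb
        have ia := inv a (mem_gComp.1 (heq.symm.subset (hA ha))).2
        have ib := inv b (mem_gComp.1 (heq.symm.subset hb.1)).2
        exact hb.2 (ib.1 (ia.2 ha))
      · intro z hz w hw
        rw [Finset.mem_sdiff] at hz
        exact gComp_module hs hg hx hw hz.1 hz.2
    obtain ⟨x, hx⟩ : V.Nonempty := Finset.card_pos.1 (by omega)
    have seenOf : ∀ i v, v ∈ V → GConn c i V → i ∈ gSeen c V v := by
      intro i v hv hi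
      have hV' : V \ {v} = V.erase v := by ext; simp [and_comm]
      have hcard := Finset.card_erase_of_mem hv
      obtain ⟨a, ha, b, hb, hab⟩ := hi {v} (by simpa using hv) ⟨v, by simp⟩
        (by rw [hV']; exact Finset.card_pos.1 (by omega))
      rw [Finset.mem_singleton] at ha
      rw [hV', Finset.mem_erase] at hb
      subst ha
      exact mem_gSeen.2 ⟨b, hb.2, hb.1, hab⟩
    have seenConn : ∀ i v, v ∈ V → i ∈ gSeen c V v → GConn c i V := by
      intro i v hv hi
      obtain ⟨w, hw, hwv, h⟩ := mem_gSeen.1 hi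
      rw [← h]
      exact conn v hv w hw hwv.symm
    have same : ∀ v ∈ V, gSeen c V v = gSeen c V x := by
      intro v hv
      ext i
      exact ⟨fun h => seenOf i x hx (seenConn i v hv h), fun h => seenOf i v hv (seenConn i x hx h)⟩
    set U := gSeen c V x with hU
    have hUS : U ⊆ S := hS x hx
    have colU : ∀ a ∈ V, ∀ b ∈ V, a ≠ b → c a b ∈ U := by
      intro a ha b hb hab
      exact seenOf _ x hx (conn a ha b hb hab)
    have hU2 : U.card ≤ 2 := by
      by_contra h
      obtain ⟨p, hp, q, hq, r, hr, h1, h2, h3⟩ := Finset.two_lt_card.1 (by omega : 2 < U.card)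
      exact gallai_conn hs hg V (by omega) h1 h2 h3 (seenConn p x hx hp) (seenConn q x hx hq)
        (seenConn r x hx hr)
    rw [Finset.sum_congr rfl (fun v hv => by rw [same v hv]), Finset.sum_const, smul_eq_mul,
      Finset.card_sdiff_of_subset hUS]
    have hle := Finset.card_le_card hUS
    have hcard := Finset.card_erase_of_mem hx
    have hU1 : 1 ≤ U.card := by
      apply Finset.card_pos.2
      rw [hU, gSeen, Finset.image_nonempty]
      exact Finset.card_pos.1 (by omega)
    rcases (by omega : U.card = 1 ∨ U.card = 2) with h | h
    · obtain ⟨p, hp⟩ := Finset.card_eq_one.1 h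
      have : V.card ≤ 2 := by
        by_contra h3
        obtain ⟨a, ha, b, hb, d, hd, h1, h2, h3⟩ := Finset.two_lt_card.1 (by omega : 2 < V.card)
        have k1 := colU a ha b hb h1
        have k2 := colU a ha d hd h2
        have k3 := colU b hb d hd h3
        rw [hp, Finset.mem_singleton] at k1 k2 k3
        exact hm a b d h1 h2 h3 ⟨by omega, by omega⟩
      have h5 := grBound_succ (S.card - 1)
      rw [show S.card - 1 + 1 = S.card by omega] at h5
      rw [h]
      exact (Nat.mul_le_mul_right _ this).trans h5
    · obtain ⟨p, q, hpq, hU'⟩ := Finset.card_eq_two.1 h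
      have : V.card ≤ 5 := by
        have h4 : (V.erase x).card ≤ 2 * ((V.erase x).image (c x)).card := by
          apply Finset.card_le_mul_card_image
          intro i hi
          by_contra h3
          obtain ⟨a, ha, b, hb, d, hd, h1, h2, h3⟩ := Finset.two_lt_card.1 (not_le.1 h3)
          simp only [Finset.mem_filter, Finset.mem_erase] at ha hb hd
          have k1 := colU a ha.1.2 b hb.1.2 h1
          have k2 := colU a ha.1.2 d hd.1.2 h2
          have k3 := colU b hb.1.2 d hd.1.2 h3
          have k0 := colU x hx a ha.1.2 (Ne.symm ha.1.1)
          rw [hU', Finset.mem_insert, Finset.mem_singleton] at k0 k1 k2 k3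
          have l0 := hm a b d h1 h2 h3
          have l1 := hm x a b (Ne.symm ha.1.1) (Ne.symm hb.1.1) h1
          have l2 := hm x a d (Ne.symm ha.1.1) (Ne.symm hd.1.1) h2
          have l3 := hm x b d (Ne.symm hb.1.1) (Ne.symm hd.1.1) h3
          omega
        have h5 : ((V.erase x).image (c x)).card = 2 := h
        omega
      have h5 := grBound_add_two (S.card - 2)
      rw [show S.card - 2 + 2 = S.card by omega] at h5
      rw [h, h5]
      exact Nat.mul_le_mul_right _ this

end Gallai

/-- A good coloring exists: the lower bound construction's invariant. -/
def GoodColoring (k N : ℕ) : Prop :=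
  ∃ c : Fin N → Fin N → ℕ, (∀ u v, c u v = c v u) ∧ (∀ u v, u ≠ v → 1 ≤ c u v ∧ c u v ≤ k) ∧
    (∀ u v w, u ≠ v → u ≠ w → v ≠ w → c u v = c u w ∨ c u v = c v w ∨ c u w = c v w) ∧
    (∀ u v w, u ≠ v → u ≠ w → v ≠ w → ¬ (c u v = c u w ∧ c u v = c v w))

/-- The pentagon coloring. -/
def pentColor (a b : Fin 5) : ℕ := if b = a + 1 ∨ a = b + 1 then 1 else 2

theorem pent_symm_s4 : ∀ a b, pentColor a b = pentColor b a := by decide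
theorem pent_range (a b) : 1 ≤ pentColor a b ∧ pentColor a b ≤ 2 := by
  unfold pentColor; split_ifs <;> omega
theorem pent_mono : ∀ a b d, a ≠ b → a ≠ d → b ≠ d →
    ¬ (pentColor a b = pentColor a d ∧ pentColor a b = pentColor b d) := by decide

theorem good_step_s4 {k N : ℕ} (h : GoodColoring k N) : GoodColoring (k + 2) (5 * N) := by
  obtain ⟨c, hs, hr, hg, hm⟩ := h
  suffices H : ∃ d : Fin 5 × Fin N → Fin 5 × Fin N → ℕ, (∀ u v, d u v = d v u) ∧
      (∀ u v, u ≠ v → 1 ≤ d u v ∧ d u v ≤ k + 2) ∧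
      (∀ u v w, u ≠ v → u ≠ w → v ≠ w → d u v = d u w ∨ d u v = d v w ∨ d u w = d v w) ∧
      (∀ u v w, u ≠ v → u ≠ w → v ≠ w → ¬ (d u v = d u w ∧ d u v = d v w)) by
    obtain ⟨d, h1, h2, h3, h4⟩ := H
    let e := (finProdFinEquiv (m := 5) (n := N)).symm
    have he : ∀ {a b}, a ≠ b → e a ≠ e b := fun h h' => h (e.injective h')
    exact ⟨fun a b => d (e a) (e b), fun _ _ => h1 _ _, fun _ _ h => h2 _ _ (he h),
      fun _ _ _ x y z => h3 _ _ _ (he x) (he y) (he z),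
      fun _ _ _ x y z => h4 _ _ _ (he x) (he y) (he z)⟩
  refine ⟨fun u v => if u.1 = v.1 then c u.2 v.2 else k + pentColor u.1 v.1, ?_, ?_, ?_, ?_⟩
  · rintro ⟨a, x⟩ ⟨b, y⟩
    have := hs x y
    have := pent_symm_s4 a b
    simp only [eq_comm (a := b)]
    split_ifs <;> omega
  · rintro ⟨a, x⟩ ⟨b, y⟩ h
    have := pent_range a b
    dsimp only
    split_ifs with e
    · have := hr x y (fun h' => h (by rw [e, h']))
      omega
    · omega
  · rintro ⟨a, x⟩ ⟨b, y⟩ ⟨d, z⟩ h1 h2 h3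
    dsimp only
    by_cases e1 : a = b
    · by_cases e2 : a = d
      · subst e1; subst e2
        simpa using hg x y z (fun h => h1 (by rw [h])) (fun h => h2 (by rw [h]))
          (fun h => h3 (by rw [h]))
      · subst e1
        simp [e2]
    · by_cases e2 : a = d
      · subst e2
        have := pent_symm_s4 a b
        simp [e1, Ne.symm e1, this]
      · by_cases e3 : b = d
        · subst e3
          simp [e1]
        · have := pent_range a b
          have := pent_range a d
          have := pent_range b d
          simp only [e1, e2, e3, if_false]
          omega
  · rintro ⟨a, x⟩ ⟨b, y⟩ ⟨d, z⟩ h1 h2 h3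
    dsimp only
    by_cases e1 : a = b
    · by_cases e2 : a = d
      · subst e1; subst e2
        simpa using hm x y z (fun h => h1 (by rw [h])) (fun h => h2 (by rw [h]))
          (fun h => h3 (by rw [h]))
      · subst e1
        have := hr x y (fun h => h1 (by rw [h]))
        have := pent_range a d
        simp only [e2, if_true, if_false]
        omega
    · by_cases e2 : a = d
      · subst e2
        have := hr x z (fun h => h2 (by rw [h]))
        have := pent_range a b
        simp only [e1, if_true, if_false]
        omega
      · by_cases e3 : b = d
        · subst e3
          have := hr y z (fun h => h3 (by rw [h]))
          have := pent_range a b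
          simp only [e1, if_true, if_false]
          omega
        · have := pent_mono a b d e1 e2 e3
          simp only [e1, e2, e3, if_false]
          omega

theorem good_exists_s4 (k : ℕ) : GoodColoring k (grBound k) := by
  induction k using Nat.twoStepInduction with
  | zero =>
    refine ⟨fun _ _ => 1, fun _ _ => rfl, ?_, fun _ _ _ _ _ _ => Or.inl rfl, ?_⟩ <;> decide
  | one =>
    refine ⟨fun _ _ => 1, fun _ _ => rfl, ?_, fun _ _ _ _ _ _ => Or.inl rfl, ?_⟩ <;> decide
  | more n ih _ =>
    rw [grBound_add_two]
    exact good_step_s4 ih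

theorem gallai_ramsey_K3 (k : ℕ) (hk : 1 ≤ k) :
    IsLeast {n : ℕ |
        ∀ c : Fin n → Fin n → ℕ, IsSym c →
          (∀ u v : Fin n, u ≠ v → c u v ∈ Finset.Icc 1 k) →
          NoRainbowTriangle c →
          ∃ i ∈ Finset.Icc 1 k, HasMonoK3 c i}
      (if Even k then 5 ^ (k / 2) + 1 else 2 * 5 ^ ((k - 1) / 2) + 1) := by
  have hB : (if Even k then 5 ^ (k / 2) + 1 else 2 * 5 ^ ((k - 1) / 2) + 1) = grBound k + 1 := by
    unfold grBound
    split_ifs <;> rfl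
  rw [hB]
  constructor
  · intro c hs hr hg
    by_contra hno
    have hm : ∀ a b d : Fin (grBound k + 1), a ≠ b → a ≠ d → b ≠ d →
        ¬ (c a b = c a d ∧ c a b = c b d) := by
      rintro a b d h1 h2 h3 ⟨h4, h5⟩
      exact hno ⟨c a b, hr a b h1, a, b, d, h1, h2, h3, rfl, h4.symm, h5.symm⟩
    have key := gallai_bound (c := c) hs hg hm _ Finset.univ (Finset.Icc 1 k) le_rfl (by
      intro u _ i hi
      obtain ⟨w, _, hwu, h⟩ := mem_gSeen.1 hi
      rw [← h]
      exact hr u w hwu.symm)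
    have low := Finset.card_nsmul_le_sum (Finset.univ : Finset (Fin (grBound k + 1)))
      (fun v => grBound (Finset.Icc 1 k \ gSeen c Finset.univ v).card) 1
      (fun v _ => grBound_pos _)
    have := low.trans key
    simp at this
  · intro n hn
    by_contra hlt
    have hle : n ≤ grBound k := by omega
    obtain ⟨c, hs, hr, hg, hm⟩ := good_exists_s4 k
    have he : ∀ {a b : Fin n}, a ≠ b → Fin.castLE hle a ≠ Fin.castLE hle b :=
      fun h h' => h (Fin.castLE_injective hle h')
    obtain ⟨i, _, a, b, d, h1, h2, h3, h4, h5, h6⟩ :=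
      hn (fun a b => c (Fin.castLE hle a) (Fin.castLE hle b)) (fun _ _ => hs _ _)
        (fun u v h => Finset.mem_Icc.2 (hr _ _ (he h)))
        (fun _ _ _ x y z => hg _ _ _ (he x) (he y) (he z))
    exact hm _ _ _ (he h1) (he h2) (he h3) ⟨h4.trans h5.symm, h4.trans h6.symm⟩
end

section
/- For every Gallai coloring of a finite complete graph on at least two vertices, there exists a partition of the vertex set into at least two nonempty parts such that: for every pair of distinct parts, all edges between the two parts receive the same color, and at most two colors in total appear on edges between different parts. -/
/-- A nontrivial cut of `S` using only the colors `i` and `j`. -/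
def GCut {n : ℕ} {α : Type*} (c : Fin n → Fin n → α) (S : Finset (Fin n)) (i j : α) : Prop :=
  ∃ p : Fin n → Prop, (∃ a ∈ S, p a) ∧ (∃ b ∈ S, ¬ p b) ∧
    ∀ a ∈ S, ∀ b ∈ S, p a → ¬ p b → c a b = i ∨ c a b = j

/-- From a cut we obtain a homogeneous partition. -/
theorem GCut.setoid {n : ℕ} {α : Type*} {c : Fin n → Fin n → α} (hsym : IsSym c)
    (hG : NoRainbowTriangle c) {S : Finset (Fin n)} {i j : α} (h : GCut c S i j) :
    ∃ s : Setoid (Fin n), (∃ a ∈ S, ∃ b ∈ S, ¬ s a b) ∧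
      (∀ a ∈ S, ∀ b ∈ S, ¬ s a b → c a b = i ∨ c a b = j) ∧
      (∀ a b, s a b → ∀ z ∈ S, ¬ s a z → c a z = c b z) := by
  obtain ⟨p, ⟨a, ha, hpa⟩, ⟨b, hb, hpb⟩, hp⟩ := h
  let r : Fin n → Fin n → Prop := fun x y => x ∈ S ∧ y ∈ S ∧ x ≠ y ∧ c x y ≠ i ∧ c x y ≠ j
  have hcol : ∀ a ∈ S, ∀ b ∈ S, ¬ Relation.EqvGen r a b → c a b = i ∨ c a b = j := by
    intro a ha b hb hab
    by_contra hc
    push Not at hc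
    refine hab (Relation.EqvGen.rel _ _ ⟨ha, hb, ?_, hc.1, hc.2⟩)
    rintro rfl
    exact hab (Relation.EqvGen.refl _)
  refine ⟨Relation.EqvGen.setoid r, ⟨a, ha, b, hb, ?_⟩, hcol, ?_⟩
  · intro hab
    have key : ∀ x y, Relation.EqvGen r x y → (p x ↔ p y) := by
      intro x y hxy
      induction hxy with
      | rel x y h =>
        obtain ⟨hx, hy, hne, h1, h2⟩ := h
        have e1 := hp x hx y hy
        have e2 := hp y hy x hx
        rw [hsym y x] at e2
        tauto
      | refl x => rfl
      | symm x y _ ih => exact ih.symm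
      | trans x y z _ _ h1 h2 => exact h1.trans h2
    exact hpb ((key a b hab).1 hpa)
  · intro x y hxy
    change Relation.EqvGen r x y at hxy
    change ∀ z ∈ S, ¬ Relation.EqvGen r x z → _
    induction hxy with
    | rel x y h =>
      intro z hz hxz
      have hR := Relation.EqvGen.rel x y h
      have hyz : ¬ Relation.EqvGen r y z := fun h' => hxz (hR.trans _ _ _ h')
      have hxy' := h
      obtain ⟨hx, hy, hne, h1, h2⟩ := h
      have e1 := hcol x hx z hz hxz
      have e2 := hcol y hy z hz hyz
      have n1 : x ≠ z := by rintro rfl; exact hxz (Relation.EqvGen.refl _)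
      have n2 : y ≠ z := by rintro rfl; exact hyz (Relation.EqvGen.refl _)
      have := hG x y z hne n1 n2
      grind
    | refl x => intros; rfl
    | symm x y h ih =>
      intro z hz hyz
      exact (ih z hz (fun h' => hyz ((h.symm _ _).trans _ _ _ h'))).symm
    | trans x y w h h2 ih1 ih2 =>
      intro z hz hxz
      exact (ih1 z hz hxz).trans (ih2 z hz (fun h' => hxz (h.trans _ _ _ h')))

theorem gcut_star {n : ℕ} {α : Type*} {c : Fin n → Fin n → α}
    {S : Finset (Fin n)} {i j : α} {v : Fin n} (hv : v ∉ S) (hS : S.Nonempty)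
    (h : ∀ x ∈ S, c v x = i ∨ c v x = j) : GCut c (insert v S) i j := by
  obtain ⟨x, hx⟩ := hS
  refine ⟨fun y => y = v, ⟨v, by simp, rfl⟩, ⟨x, by simp [hx], ?_⟩, ?_⟩
  · rintro rfl; exact hv hx
  · intro a ha b hb h1 h2
    grind

theorem gcut_mono {n : ℕ} {α : Type*} {c : Fin n → Fin n → α} (hsym : IsSym c)
    (hG : NoRainbowTriangle c) {S : Finset (Fin n)} {i : α} {v : Fin n} (hv : v ∉ S)
    (h : GCut c S i i) : ∃ i j, GCut c (insert v S) i j := by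
  obtain ⟨p, ⟨a, ha, hpa⟩, ⟨b, hb, hpb⟩, hp⟩ := h
  by_cases hA : ∀ x ∈ S, p x → c v x = i
  · refine ⟨i, i, fun x => x ≠ v ∧ p x, ⟨a, ?_⟩, ⟨b, ?_⟩, ?_⟩
    · grind
    · grind
    · intro x hx y hy h1 h2
      have := hsym v x
      have := hp x
      grind
  by_cases hB : ∀ x ∈ S, ¬ p x → c v x = i
  · refine ⟨i, i, fun x => x = v ∨ p x, ⟨a, ?_⟩, ⟨b, ?_⟩, ?_⟩
    · grind
    · grind
    · intro x hx y hy h1 h2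
      have := hp x
      grind
  push Not at hA hB
  obtain ⟨x, hx, hpx, hcx⟩ := hA
  obtain ⟨y, hy, hpy, hcy⟩ := hB
  have key : ∀ x ∈ S, p x → c v x ≠ i → ∀ y ∈ S, ¬ p y → c v y ≠ i → c v x = c v y := by
    intro x hx hpx hcx y hy hpy hcy
    have := hp x hx y hy hpx hpy
    have := hG v x y (by grind) (by grind) (by grind)
    grind
  refine ⟨i, c v x, gcut_star hv ⟨a, ha⟩ ?_⟩
  intro z hz
  by_cases hcz : c v z = i
  · exact Or.inl hcz
  right
  by_cases hpz : p z
  · rw [key z hz hpz hcz y hy hpy hcy, key x hx hpx hcx y hy hpy hcy]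
  · exact (key x hx hpx hcx z hz hpz hcz).symm

theorem gcut_step {n : ℕ} {α : Type*} {c : Fin n → Fin n → α} (hsym : IsSym c)
    (hG : NoRainbowTriangle c) {S : Finset (Fin n)} {i j : α} {v : Fin n} (hv : v ∉ S)
    (h : GCut c S i j) : ∃ i j, GCut c (insert v S) i j := by
  obtain ⟨s, ⟨a, ha, b, hb, hab⟩, hcol, hhom⟩ := h.setoid hsym hG
  by_cases hT : ∃ x ∈ S, ∀ y ∈ S, s x y → c v y = i ∨ c v y = j
  · obtain ⟨x, hx, hT⟩ := hT
    refine ⟨i, j, fun y => y ≠ v ∧ s x y, ⟨x, by simp [hx], ?_, s.refl x⟩,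
      ⟨v, by simp, by simp⟩, ?_⟩
    · rintro rfl; exact hv hx
    · rintro y hy z hz ⟨h1, h2⟩ h3
      have hyS : y ∈ S := by grind
      by_cases hzv : z = v
      · subst hzv
        rw [hsym y z]
        exact hT y hyS h2
      · refine hcol y hyS z (by grind) fun h4 => h3 ⟨hzv, s.trans h2 h4⟩
  push Not at hT
  have key : ∀ x ∈ S, ∀ y ∈ S, ¬ s x y → c v x ≠ i → c v x ≠ j → c v y ≠ i → c v y ≠ j →
      c v x = c v y := by
    intro x hx y hy hxy h1 h2 h3 h4
    have := hcol x hx y hy hxy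
    have hne : x ≠ y := by rintro rfl; exact hxy (s.refl x)
    have := hG v x y (by grind) (by grind) hne
    grind
  obtain ⟨a', ha', haa, hai, haj⟩ := hT a ha
  obtain ⟨b', hb', hbb, hbi, hbj⟩ := hT b hb
  have hab' : ¬ s a' b' := fun h => hab (s.trans haa (s.trans h (s.symm hbb)))
  have hk : ∀ z ∈ S, c v z ≠ i → c v z ≠ j → c v z = c v a' := by
    intro z hz h1 h2
    by_cases hza : s z a'
    · have hzb : ¬ s z b' := fun h => hab' (s.trans (s.symm hza) h)
      rw [key z hz b' hb' hzb h1 h2 hbi hbj, key a' ha' b' hb' hab' hai haj hbi hbj]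
    · exact key z hz a' ha' hza h1 h2 hai haj
  by_cases hI : ∃ x ∈ S, c v x = i
  swap
  · refine ⟨j, c v a', gcut_star hv ⟨a, ha⟩ ?_⟩
    intro z hz
    have := hk z hz
    grind
  obtain ⟨x, hx, hxi⟩ := hI
  by_cases hij : ∀ z ∈ S, c v z ≠ j
  · refine ⟨i, c v a', gcut_star hv ⟨a, ha⟩ ?_⟩
    intro z hz
    have := hk z hz
    grind
  by_cases hji : i = j
  · refine ⟨i, c v a', gcut_star hv ⟨a, ha⟩ ?_⟩
    intro z hz
    have := hk z hz
    grind
  refine gcut_mono hsym hG hv (i := i) ⟨fun y => s x y, ⟨x, hx, s.refl x⟩, ?_, ?_⟩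
  · by_cases hxa : s x a
    · exact ⟨b, hb, fun h => hab (s.trans (s.symm hxa) h)⟩
    · exact ⟨a, ha, hxa⟩
  · intro w hw y hy hxw hxy
    obtain ⟨y', hy', hyy, hyi, hyj⟩ := hT y hy
    have hxy' : ¬ s x y' := fun h => hxy (s.trans h (s.symm hyy))
    have hne : x ≠ y' := by rintro rfl; exact hxy' (s.refl x)
    have e1 := hcol x hx y' hy' hxy'
    have e2 := hG v x y' (by grind) (by grind) hne
    have e3 : c x y' = i := by grind
    have e4 : c x y = c w y := hhom x w hxw y hy hxy
    have e5 : c y x = c y' x := hhom y y' hyy x hx (fun h => hxy (s.symm h))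
    rw [hsym y x, hsym y' x] at e5
    simp [← e4, e5, e3]

theorem gcut_exists {n : ℕ} {α : Type*} {c : Fin n → Fin n → α} (hsym : IsSym c)
    (hG : NoRainbowTriangle c) (S : Finset (Fin n)) : 2 ≤ S.card → ∃ i j, GCut c S i j := by
  induction S using Finset.induction_on with
  | empty => simp
  | insert v S hv ih =>
    intro h
    rw [Finset.card_insert_of_notMem hv] at h
    by_cases h2 : 2 ≤ S.card
    · obtain ⟨i, j, h3⟩ := ih h2
      exact gcut_step hsym hG hv h3
    · obtain ⟨x, rfl⟩ := Finset.card_eq_one.1 (show S.card = 1 by omega)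
      exact ⟨c v x, c v x, gcut_star hv ⟨x, by simp⟩ (by simp)⟩

theorem gallai_partition {n : ℕ} {α : Type*} (hn : 2 ≤ n)
    (c : Fin n → Fin n → α) (hsym : IsSym c) (hG : NoRainbowTriangle c) :
    ∃ P : Finpartition (Finset.univ : Finset (Fin n)),
      2 ≤ P.parts.card ∧
      (∀ A ∈ P.parts, ∀ B ∈ P.parts, A ≠ B →
        ∃ i : α, ∀ a ∈ A, ∀ b ∈ B, c a b = i) ∧
      (∃ i j : α, ∀ A ∈ P.parts, ∀ B ∈ P.parts, A ≠ B →
        ∀ a ∈ A, ∀ b ∈ B, c a b = i ∨ c a b = j) := by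
  classical
  obtain ⟨i, j, h⟩ := gcut_exists hsym hG Finset.univ (by simpa using hn)
  obtain ⟨s, ⟨a, -, b, -, hab⟩, hcol, hhom⟩ := h.setoid hsym hG
  let P := Finpartition.ofSetoid s
  have hs : ∀ x y, y ∈ P.part x ↔ s x y := fun x y =>
    Finpartition.mem_part_ofSetoid_iff_rel
  have hpart : ∀ A ∈ P.parts, ∀ x ∈ A, P.part x = A := fun A hA x hx =>
    P.part_eq_of_mem hA hx
  have hns : ∀ A ∈ P.parts, ∀ B ∈ P.parts, A ≠ B → ∀ x ∈ A, ∀ y ∈ B, ¬ s x y := by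
    intro A hA B hB hne x hx y hy hxy
    have h1 := (hs x y).2 hxy
    rw [hpart A hA x hx] at h1
    exact hne ((hpart A hA y h1).symm.trans (hpart B hB y hy))
  have hrel : ∀ A ∈ P.parts, ∀ x ∈ A, ∀ y ∈ A, s x y := by
    intro A hA x hx y hy
    rw [← hs, hpart A hA x hx]; exact hy
  refine ⟨P, ?_, ?_, i, j, ?_⟩
  · refine Finset.one_lt_card.2 ⟨P.part a, P.part_mem.2 (by simp), P.part b,
      P.part_mem.2 (by simp), fun h => hab ?_⟩
    rw [← hs, h, hs]
  · intro A hA B hB hne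
    obtain ⟨x, hx⟩ := P.nonempty_of_mem_parts hA
    obtain ⟨y, hy⟩ := P.nonempty_of_mem_parts hB
    refine ⟨c x y, fun a ha b hb => ?_⟩
    rw [hhom a x (hrel A hA a ha x hx) b (by simp) (hns A hA B hB hne a ha b hb), hsym x b,
      hhom b y (hrel B hB b hb y hy) x (by simp) (hns B hB A hA hne.symm b hb x hx), hsym]
  · intro A hA B hB hne a ha b hb
    exact hcol a (by simp) b (by simp) (hns A hA B hB hne a ha b hb)
end

section
/- The Ramsey number R(K4^+, K3) equals 9; that is, every 2-coloring of the edges of the complete graph on 9 vertices with red and blue contains a red copy of K4^+ or a blue triangle, and there exists a 2-coloring of the edges of the complete graph on 8 vertices with red and blue containing neither a red copy of K4^+ nor a blue triangle. -/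
/-- From a finset with at least `k` elements, extract `k` distinct elements. -/
theorem exists_inj_of_card {k : ℕ} (S : Finset (Fin 9)) (h : k ≤ S.card) :
    ∃ f : Fin k → Fin 9, Function.Injective f ∧ ∀ i, f i ∈ S := by
  obtain ⟨T, hT, hc⟩ := Finset.exists_subset_card_eq h
  exact ⟨T.orderEmbOfFin hc, (T.orderEmbOfFin hc).injective,
    fun i => hT (T.orderEmbOfFin_mem hc i)⟩

/-- With no blue triangle and no red `K₄⁺` on 9 vertices there is no red `K₄`. -/
theorem no_red_K4 (c : Fin 9 → Fin 9 → Bool) (hs : IsSym c)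
    (h4 : ¬ HasMonoK4plus c true) (h3 : ¬ HasMonoK3 c false)
    (x a b d : Fin 9) (hxa : x ≠ a) (hxb : x ≠ b) (hxd : x ≠ d) (hab : a ≠ b)
    (had : a ≠ d) (hbd : b ≠ d) (cxa : c x a = true) (cxb : c x b = true)
    (cxd : c x d = true) (cab : c a b = true) (cad : c a d = true)
    (cbd : c b d = true) : False := by
  have hcard : 5 ≤ (Finset.univ \ {x, a, b, d} : Finset (Fin 9)).card := by
    have h1 := Finset.le_card_sdiff ({x, a, b, d} : Finset (Fin 9)) Finset.univ
    have h2 : ({x, a, b, d} : Finset (Fin 9)).card ≤ 4 := Finset.card_le_four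
    simp only [Finset.card_univ, Fintype.card_fin] at h1
    omega
  obtain ⟨f, hf, hm⟩ := exists_inj_of_card _ hcard
  have hblue : ∀ i, x ≠ f i ∧ c x (f i) = false := by
    intro i
    have := hm i
    simp only [Finset.mem_sdiff, Finset.mem_univ, true_and, Finset.mem_insert,
      Finset.mem_singleton, not_or] at this
    obtain ⟨n1, n2, n3, n4⟩ := this
    refine ⟨Ne.symm n1, ?_⟩
    by_contra hc
    exact h4 ⟨x, a, b, d, f i, hxa, hxb, hxd, Ne.symm n1, hab, had, Ne.symm n2, hbd,
      Ne.symm n3, Ne.symm n4, cxa, cxb, cxd, by simpa using hc, cab, cad, cbd⟩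
  have hred : ∀ i j, i ≠ j → c (f i) (f j) = true := by
    intro i j hij
    by_contra hc
    exact h3 ⟨x, f i, f j, (hblue i).1, (hblue j).1, fun h => hij (hf h), (hblue i).2,
      (hblue j).2, by simpa using hc⟩
  have hne : ∀ i j, i ≠ j → f i ≠ f j := fun i j hij h => hij (hf h)
  refine h4 ⟨f 0, f 1, f 2, f 3, f 4, ?_, ?_, ?_, ?_, ?_, ?_, ?_, ?_, ?_, ?_,
    ?_, ?_, ?_, ?_, ?_, ?_, ?_⟩ <;> first
    | exact hne _ _ (by decide)
    | exact hred _ _ (by decide)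

/-- Every vertex has at most three blue neighbours. -/
theorem blue_le (c : Fin 9 → Fin 9 → Bool) (hs : IsSym c)
    (h4 : ¬ HasMonoK4plus c true) (h3 : ¬ HasMonoK3 c false) (x : Fin 9) :
    (Finset.univ.filter fun y => x ≠ y ∧ c x y = false).card ≤ 3 := by
  by_contra hlt
  obtain ⟨f, hf, hm⟩ := exists_inj_of_card (k := 4) _ (not_le.mp hlt)
  simp only [Finset.mem_filter, Finset.mem_univ, true_and] at hm
  have hred : ∀ i j, i ≠ j → c (f i) (f j) = true := by
    intro i j hij
    by_contra hc
    exact h3 ⟨x, f i, f j, (hm i).1, (hm j).1, fun h => hij (hf h), (hm i).2,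
      (hm j).2, by simpa using hc⟩
  have hne : ∀ i j, i ≠ j → f i ≠ f j := fun i j hij h => hij (hf h)
  refine no_red_K4 c hs h4 h3 (f 0) (f 1) (f 2) (f 3) ?_ ?_ ?_ ?_ ?_ ?_ ?_ ?_ ?_ ?_ ?_ ?_ <;>
    first
    | exact hne _ _ (by decide)
    | exact hred _ _ (by decide)

/-- Every vertex has at most five red neighbours. -/
theorem red_le (c : Fin 9 → Fin 9 → Bool) (hs : IsSym c)
    (h4 : ¬ HasMonoK4plus c true) (h3 : ¬ HasMonoK3 c false) (x : Fin 9) :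
    (Finset.univ.filter fun y => x ≠ y ∧ c x y = true).card ≤ 5 := by
  by_contra hlt
  set S := Finset.univ.filter fun y => x ≠ y ∧ c x y = true with hS
  have hSm : ∀ y, y ∈ S ↔ x ≠ y ∧ c x y = true := by simp [hS]
  obtain ⟨y, hy⟩ : S.Nonempty := Finset.card_pos.mp (by omega)
  have he := Finset.card_erase_of_mem hy
  have hsplit := Finset.card_filter_add_card_filter_not (s := S.erase y) (fun z => c y z = true)
  rcases (by omega : 3 ≤ ((S.erase y).filter fun z => c y z = true).card ∨
      3 ≤ ((S.erase y).filter fun z => ¬ c y z = true).card) with h | h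
  · obtain ⟨f, hf, hm⟩ := exists_inj_of_card _ h
    simp only [Finset.mem_filter, Finset.mem_erase, hSm] at hm
    rw [hSm] at hy
    have hne : ∀ i j, i ≠ j → f i ≠ f j := fun i j hij h => hij (hf h)
    have hb : ∀ i j, i ≠ j → c (f i) (f j) = false := by
      intro i j hij
      by_contra hc
      exact no_red_K4 c hs h4 h3 x y (f i) (f j) hy.1 (hm i).1.2.1 (hm j).1.2.1
        (hm i).1.1.symm (hm j).1.1.symm (hne i j hij) hy.2 (hm i).1.2.2 (hm j).1.2.2
        (hm i).2 (hm j).2 (by simpa using hc)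
    exact h3 ⟨f 0, f 1, f 2, hne _ _ (by decide), hne _ _ (by decide), hne _ _ (by decide),
      hb _ _ (by decide), hb _ _ (by decide), hb _ _ (by decide)⟩
  · obtain ⟨f, hf, hm⟩ := exists_inj_of_card _ h
    simp only [Finset.mem_filter, Finset.mem_erase, hSm, Bool.not_eq_true] at hm
    have hne : ∀ i j, i ≠ j → f i ≠ f j := fun i j hij h => hij (hf h)
    have hr : ∀ i j, i ≠ j → c (f i) (f j) = true := by
      intro i j hij
      by_contra hc
      exact h3 ⟨y, f i, f j, (hm i).1.1.symm, (hm j).1.1.symm, hne i j hij, (hm i).2,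
        (hm j).2, by simpa using hc⟩
    exact no_red_K4 c hs h4 h3 x (f 0) (f 1) (f 2) (hm 0).1.2.1 (hm 1).1.2.1 (hm 2).1.2.1
      (hne _ _ (by decide)) (hne _ _ (by decide)) (hne _ _ (by decide))
      (hm 0).1.2.2 (hm 1).1.2.2 (hm 2).1.2.2
      (hr _ _ (by decide)) (hr _ _ (by decide)) (hr _ _ (by decide))

/-- The blue graph of a colouring. -/
def blueGraph (c : Fin 9 → Fin 9 → Bool) (hs : IsSym c) : SimpleGraph (Fin 9) where
  Adj u v := u ≠ v ∧ c u v = false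
  symm := ⟨fun u v h => ⟨h.1.symm, by rw [hs v u]; exact h.2⟩⟩
  loopless := ⟨fun _ h => h.1 rfl⟩

theorem upper_bound (c : Fin 9 → Fin 9 → Bool) (hs : IsSym c) :
    HasMonoK4plus c true ∨ HasMonoK3 c false := by
  classical
  by_contra hcon
  rw [not_or] at hcon
  obtain ⟨h4, h3⟩ := hcon
  have hdeg : ∀ x, (blueGraph c hs).degree x = 3 := by
    intro x
    have hN : (blueGraph c hs).neighborFinset x =
        Finset.univ.filter fun y => x ≠ y ∧ c x y = false := by
      ext y
      rw [SimpleGraph.mem_neighborFinset, Finset.mem_filter]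
      exact ⟨fun h => ⟨Finset.mem_univ y, h⟩, fun h => h.2⟩
    rw [← SimpleGraph.card_neighborFinset_eq_degree, hN]
    have hb := blue_le c hs h4 h3 x
    have hr := red_le c hs h4 h3 x
    have hsplit := Finset.card_filter_add_card_filter_not
      (s := Finset.univ.erase x) (fun y => c x y = false)
    have e1 : ((Finset.univ.erase x).filter fun y => c x y = false) =
        Finset.univ.filter fun y => x ≠ y ∧ c x y = false := by
      ext y; simp [ne_comm (a := x)]
    have e2 : ((Finset.univ.erase x).filter fun y => ¬ c x y = false) =
        Finset.univ.filter fun y => x ≠ y ∧ c x y = true := by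
      ext y; simp [ne_comm (a := x)]
    rw [e1, e2, Finset.card_erase_of_mem (Finset.mem_univ x), Finset.card_univ,
      Fintype.card_fin] at hsplit
    omega
  have hsum := (blueGraph c hs).sum_degrees_eq_twice_card_edges
  simp only [hdeg, Finset.sum_const, Finset.card_univ, Fintype.card_fin, smul_eq_mul] at hsum
  omega

/-- The colouring of `K₈` whose blue graph is the Wagner graph. -/
def wagner (u v : Fin 8) : Bool :=
  !(u - v == 1 || u - v == 4 || u - v == 7)

set_option maxRecDepth 100000 in
theorem wagner_no_K4 : ∀ x a : Fin 8, x ≠ a → wagner x a = true → ∀ b, x ≠ b → a ≠ b →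
    wagner x b = true → wagner a b = true → ∀ d, x ≠ d → a ≠ d → b ≠ d →
    wagner x d = true → wagner a d = true → wagner b d = true → False := by
  decide +kernel

theorem wagner_no_K3 : ∀ a b : Fin 8, wagner a b = false → ∀ d,
    wagner a d = false → wagner b d = false → False := by
  decide +kernel

theorem ramsey_K4plus_K3 :
    (∀ c : Fin 9 → Fin 9 → Bool, IsSym c →
      HasMonoK4plus c true ∨ HasMonoK3 c false) ∧
    (∃ c : Fin 8 → Fin 8 → Bool, IsSym c ∧
      ¬ HasMonoK4plus c true ∧ ¬ HasMonoK3 c false) := by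
  refine ⟨upper_bound, wagner, ?_, ?_, ?_⟩
  · unfold IsSym
    decide +kernel
  · rintro ⟨x, a, b, d, e, hxa, hxb, hxd, -, hab, had, -, hbd, -, -, cxa, cxb, cxd, -, cab,
      cad, cbd⟩
    exact wagner_no_K4 x a hxa cxa b hxb hab cxb cab d hxd had hbd cxd cad cbd
  · rintro ⟨a, b, d, -, -, -, h1, h2, h3⟩
    exact wagner_no_K3 a b h1 d h2 h3
end

section
/- The Ramsey number R(K4^+, K4^+) equals 18; that is, every 2-coloring of the edges of the complete graph on 18 vertices with red and blue contains a monochromatic copy of K4^+, and there exists a 2-coloring of the edges of the complete graph on 17 vertices with red and blue containing no monochromatic copy of K4^+. -/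
namespace RamseyAux

variable {n : ℕ}

/-- `S` contains a clique of size `k` in color `i`. -/
def HasK (c : Fin n → Fin n → Bool) (k : ℕ) (i : Bool) (S : Finset (Fin n)) : Prop :=
  ∃ t ⊆ S, t.card = k ∧ ∀ u ∈ t, ∀ v ∈ t, u ≠ v → c u v = i

/-- The neighbours of `v` in `S` in color `i`. -/
def Nb (c : Fin n → Fin n → Bool) (i : Bool) (v : Fin n) (S : Finset (Fin n)) : Finset (Fin n) :=
  (S.erase v).filter (fun u => c v u = i)

/-- Every set of at least `m` vertices has a `k`-clique in color `i` or an `l`-clique in `!i`. -/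
def P (c : Fin n → Fin n → Bool) (k l m : ℕ) : Prop :=
  ∀ i S, m ≤ S.card → HasK c k i S ∨ HasK c l (!i) S

variable {c : Fin n → Fin n → Bool}

lemma HasK.mono {k : ℕ} {i : Bool} {S T : Finset (Fin n)} (h : HasK c k i S) (hST : S ⊆ T) :
    HasK c k i T := by
  obtain ⟨t, ht, h⟩ := h
  exact ⟨t, ht.trans hST, h⟩

lemma Nb_sub (i : Bool) (v : Fin n) (S : Finset (Fin n)) : Nb c i v S ⊆ S := fun u hu => by
  simp only [Nb, Finset.mem_filter, Finset.mem_erase] at hu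
  exact hu.1.2

lemma HasK.cons (hc : IsSym c) {k : ℕ} {i : Bool} {v : Fin n} {S : Finset (Fin n)} (hv : v ∈ S)
    (h : HasK c k i (Nb c i v S)) : HasK c (k+1) i S := by
  obtain ⟨t, ht, hk, hq⟩ := h
  have h1 : ∀ u ∈ t, u ≠ v ∧ c v u = i := fun u hu => by
    have := ht hu
    simp only [Nb, Finset.mem_filter, Finset.mem_erase] at this
    exact ⟨this.1.1, this.2⟩
  refine ⟨insert v t, ?_, ?_, ?_⟩
  · exact Finset.insert_subset hv (ht.trans (Nb_sub _ _ _))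
  · rw [Finset.card_insert_of_notMem (fun hvt => (h1 v hvt).1 rfl), hk]
  · intro a ha b hb hab
    rcases Finset.mem_insert.1 ha with rfl | ha2
    · rcases Finset.mem_insert.1 hb with rfl | hb
      · exact absurd rfl hab
      · exact (h1 b hb).2
    · rcases Finset.mem_insert.1 hb with rfl | hb
      · rw [hc]; exact (h1 a ha2).2
      · exact hq a ha2 b hb hab

lemma Nb_card (i : Bool) {v : Fin n} {S : Finset (Fin n)} (hv : v ∈ S) :
    (Nb c i v S).card + (Nb c (!i) v S).card + 1 = S.card := by
  have h := Finset.card_filter_add_card_filter_not (s := S.erase v) (fun u => c v u = i)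
  have h2 : Nb c (!i) v S = (S.erase v).filter (fun u => ¬ c v u = i) := by
    unfold Nb
    congr 1
    funext u
    cases c v u <;> cases i <;> simp
  rw [h2]
  have h3 := Finset.card_erase_add_one hv
  unfold Nb
  omega

lemma P.symm {k l m : ℕ} (h : P c k l m) : P c l k m := fun i S hS => by
  have := h (!i) S hS
  rw [Bool.not_not] at this
  exact this.symm

lemma P_two (hc : IsSym c) (l : ℕ) : P c 2 l l := fun i S hS => by
  by_cases h : ∃ u ∈ S, ∃ v ∈ S, u ≠ v ∧ c u v = i
  · left
    obtain ⟨u, hu, v, hv, huv, h⟩ := h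
    refine ⟨{u, v}, ?_, Finset.card_pair huv, ?_⟩
    · intro x hx
      simp only [Finset.mem_insert, Finset.mem_singleton] at hx
      rcases hx with rfl | rfl <;> assumption
    · intro a ha b hb hab
      simp only [Finset.mem_insert, Finset.mem_singleton] at ha hb
      rcases ha with rfl | rfl <;> rcases hb with rfl | rfl
      · exact absurd rfl hab
      · exact h
      · rw [hc]; exact h
      · exact absurd rfl hab
  · right
    obtain ⟨t, ht, htc⟩ := Finset.exists_subset_card_eq hS
    refine ⟨t, ht, htc, fun u hu v hv huv => ?_⟩
    have : c u v ≠ i := fun hh => h ⟨u, ht hu, v, ht hv, huv, hh⟩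
    revert this
    cases c u v <;> cases i <;> simp

lemma step1 (hc : IsSym c) {k l m : ℕ} (h : P c k (l+1) m) {i : Bool} {S : Finset (Fin n)}
    {v : Fin n} (hv : v ∈ S) (hm : m ≤ (Nb c i v S).card) :
    HasK c (k+1) i S ∨ HasK c (l+1) (!i) S := by
  rcases h i _ hm with h | h
  · exact Or.inl (h.cons hc hv)
  · exact Or.inr (h.mono (Nb_sub _ _ _))

lemma step2 (hc : IsSym c) {k l m : ℕ} (h : P c (k+1) l m) {i : Bool} {S : Finset (Fin n)}
    {v : Fin n} (hv : v ∈ S) (hm : m ≤ (Nb c (!i) v S).card) :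
    HasK c (k+1) i S ∨ HasK c (l+1) (!i) S := by
  rcases h i _ hm with h | h
  · exact Or.inl (h.mono (Nb_sub _ _ _))
  · exact Or.inr (h.cons hc hv)

lemma P.step (hc : IsSym c) {k l m m' : ℕ} (h : P c k (l+1) m) (h' : P c (k+1) l m')
    (h0 : 0 < m + m') : P c (k+1) (l+1) (m+m') := fun i S hS => by
  obtain ⟨v, hv⟩ := Finset.card_pos.1 (lt_of_lt_of_le h0 hS)
  have := Nb_card (c := c) i hv
  by_cases h1 : m ≤ (Nb c i v S).card
  · exact step1 hc h hv h1
  · exact step2 hc h' hv (by omega)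

lemma P33 (hc : IsSym c) : P c 3 3 6 :=
  P.step (k := 2) (l := 2) (m := 3) (m' := 3) hc (P_two hc 3) (P_two hc 3).symm (by norm_num)

lemma P34 (hc : IsSym c) : P c 3 4 9 := fun i S hS => by
  obtain ⟨T, hT, hTc⟩ := Finset.exists_subset_card_eq hS
  suffices HasK c 3 i T ∨ HasK c 4 (!i) T from this.imp (·.mono hT) (·.mono hT)
  by_contra hcon
  have hdeg : ∀ v ∈ T, (Nb c i v T).card = 3 := fun v hv => by
    have := Nb_card (c := c) i hv
    have h1 : ¬ 4 ≤ (Nb c i v T).card := fun h =>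
      hcon (step1 (k := 2) (l := 3) hc (P_two hc 4) hv h)
    have h2 : ¬ 6 ≤ (Nb c (!i) v T).card := fun h =>
      hcon (step2 (k := 2) (l := 3) hc (P33 hc) hv h)
    omega
  classical
  let G : SimpleGraph (Fin n) :=
    { Adj := fun u v => u ∈ T ∧ v ∈ T ∧ u ≠ v ∧ c u v = i
      symm := ⟨fun u v h => ⟨h.2.1, h.1, h.2.2.1.symm, by rw [hc]; exact h.2.2.2⟩⟩
      loopless := ⟨fun u h => h.2.2.1 rfl⟩ }
  have hG : ∀ v, G.degree v = if v ∈ T then 3 else 0 := fun v => by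
    split_ifs with hv
    · rw [← hdeg v hv, ← SimpleGraph.card_neighborFinset_eq_degree]
      congr 1
      ext u
      simp only [SimpleGraph.mem_neighborFinset, Nb, Finset.mem_filter, Finset.mem_erase, G]
      constructor
      · rintro ⟨_, h2, h3, h4⟩; exact ⟨⟨h3.symm, h2⟩, h4⟩
      · rintro ⟨⟨h3, h2⟩, h4⟩; exact ⟨hv, h2, h3.symm, h4⟩
    · rw [← SimpleGraph.card_neighborFinset_eq_degree, Finset.card_eq_zero]
      ext u
      simp [G, hv]
  have hs := G.sum_degrees_eq_twice_card_edges
  simp only [hG] at hs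
  rw [Finset.sum_ite_mem, Finset.univ_inter, Finset.sum_const, hTc] at hs
  simp only [smul_eq_mul] at hs
  omega

lemma P44 (hc : IsSym c) : P c 4 4 18 :=
  P.step (k := 3) (l := 3) (m := 9) (m' := 9) hc (P34 hc) (P34 hc).symm (by norm_num)

/-- A clique plus a further edge at a clique vertex gives `K₄⁺`. -/
lemma plus_of {i : Bool} {t : Finset (Fin n)} (ht : t.card = 4)
    (hq : ∀ u ∈ t, ∀ v ∈ t, u ≠ v → c u v = i) {x e : Fin n} (hx : x ∈ t) (he : e ∉ t)
    (hxe : c x e = i) : HasMonoK4plus c i := by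
  have h3 : (t.erase x).card = 3 := by rw [Finset.card_erase_of_mem hx, ht]
  obtain ⟨a, b, d, hab, had, hbd, h⟩ := Finset.card_eq_three.1 h3
  have ha : a ∈ t.erase x := by rw [h]; simp
  have hb : b ∈ t.erase x := by rw [h]; simp
  have hd : d ∈ t.erase x := by rw [h]; simp
  rw [Finset.mem_erase] at ha hb hd
  have ne : ∀ y ∈ t, y ≠ e := fun y hy h => he (h ▸ hy)
  exact ⟨x, a, b, d, e, ha.1.symm, hb.1.symm, hd.1.symm, ne x hx, hab, had, ne a ha.2, hbd,
    ne b hb.2, ne d hd.2, hq x hx a ha.2 ha.1.symm, hq x hx b hb.2 hb.1.symm,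
    hq x hx d hd.2 hd.1.symm, hxe, hq a ha.2 b hb.2 hab, hq a ha.2 d hd.2 had,
    hq b hb.2 d hd.2 hbd⟩

/-- Without `K₄⁺` in color `i`, all edges leaving a 4-clique of color `i` have the other color. -/
lemma out {i : Bool} (hn : ¬ HasMonoK4plus c i) {t : Finset (Fin n)} (ht : t.card = 4)
    (hq : ∀ u ∈ t, ∀ v ∈ t, u ≠ v → c u v = i) {x e : Fin n} (hx : x ∈ t) (he : e ∉ t) :
    c x e = !i := by
  have : c x e ≠ i := fun h => hn (plus_of ht hq hx he h)
  revert this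
  cases c x e <;> cases i <;> simp

/-- A triangle inside a large monochromatic neighbourhood gives `K₄⁺`. -/
lemma no_tri (hc : IsSym c) {j : Bool} (hn : ¬ HasMonoK4plus c j) {W : Finset (Fin n)} {x : Fin n}
    (hxW : x ∉ W) (hW : 4 ≤ W.card) (hx : ∀ w ∈ W, c x w = j) : ¬ HasK c 3 j W := by
  rintro ⟨t, htW, ht, hq⟩
  have hxt : x ∉ t := fun h => hxW (htW h)
  obtain ⟨e, heW, het⟩ := Finset.exists_mem_notMem_of_card_lt_card (s := t) (t := W) (by omega)
  refine hn (plus_of (t := insert x t) (x := x) (e := e) ?_ ?_ (by simp) ?_ (hx e heW))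
  · rw [Finset.card_insert_of_notMem hxt, ht]
  · intro a ha b hb hab
    rcases Finset.mem_insert.1 ha with rfl | ha2
    · rcases Finset.mem_insert.1 hb with rfl | hb
      · exact absurd rfl hab
      · exact hx b (htW hb)
    · rcases Finset.mem_insert.1 hb with rfl | hb
      · rw [hc]; exact hx a (htW ha2)
      · exact hq a ha2 b hb hab
  · rw [Finset.mem_insert]
    rintro (rfl | h)
    · exact hxW heW
    · exact het h

lemma upper_of {c : Fin 18 → Fin 18 → Bool} (hc : IsSym c) {i : Bool}
    (h1 : ¬ HasMonoK4plus c i) (h2 : ¬ HasMonoK4plus c (!i)) (hK : HasK c 4 i Finset.univ) :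
    False := by
  obtain ⟨t, -, ht, hq⟩ := hK
  obtain ⟨x, hx⟩ := Finset.card_pos.1 (by omega : 0 < t.card)
  have hW : tᶜ.card = 14 := by rw [Finset.card_compl, ht]; rfl
  have hntri : ¬ HasK c 3 (!i) tᶜ :=
    no_tri hc h2 (x := x) (by simpa using hx) (by omega)
      (fun w hw => out h1 ht hq hx (Finset.mem_compl.1 hw))
  -- a second 4-clique of color `i`, outside the first one
  obtain ⟨s, hs, hsc, hsq⟩ : HasK c 4 i tᶜ := by
    rcases P34 hc (!i) tᶜ (by omega) with h | h
    · exact absurd h hntri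
    · rwa [Bool.not_not] at h
  obtain ⟨y, hy⟩ := Finset.card_pos.1 (by omega : 0 < s.card)
  have hR : (tᶜ \ s).card = 10 := by rw [Finset.card_sdiff_of_subset hs, hW, hsc]
  have hsub : tᶜ \ s ⊆ Nb c (!i) y tᶜ := fun w hw => by
    rw [Finset.mem_sdiff] at hw
    simp only [Nb, Finset.mem_filter, Finset.mem_erase]
    exact ⟨⟨fun h => hw.2 (h ▸ hy), hw.1⟩, out h1 hsc hsq hy hw.2⟩
  rcases P_two hc 10 (!i) (tᶜ \ s) (by omega) with h | h
  · exact hntri ((h.mono hsub).cons hc (hs hy))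
  · rw [Bool.not_not] at h
    obtain ⟨r, -, hr, hrq⟩ := h
    obtain ⟨p, hp, hpc⟩ := Finset.exists_subset_card_eq (by omega : 4 ≤ r.card)
    obtain ⟨z, hz⟩ := Finset.card_pos.1 (by omega : 0 < p.card)
    obtain ⟨e, her, hep⟩ := Finset.exists_mem_notMem_of_card_lt_card (s := p) (t := r) (by omega)
    exact h1 (plus_of hpc (fun u hu v hv => hrq u (hp hu) v (hp hv)) hz hep
      (hrq z (hp hz) e her (fun h => hep (h ▸ hz))))

/-- Nonzero squares modulo 17. -/
def q (x : Fin 17) : Bool :=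
  x = 1 || x = 2 || x = 4 || x = 8 || x = 9 || x = 13 || x = 15 || x = 16

set_option maxRecDepth 100000 in
lemma paley : ∀ i : Bool, ∀ a : Fin 17, a ≠ 0 → q a = i → ∀ b : Fin 17, b ≠ 0 → q b = i →
    b ≠ a → q (b - a) = i → ∀ d : Fin 17, d ≠ 0 → q d = i → d ≠ a → d ≠ b →
    q (d - a) = i → q (d - b) = i → False := by
  decide +kernel

lemma lower (i : Bool) : ¬ HasMonoK4plus (fun u v : Fin 17 => q (v - u)) i := by
  rintro ⟨x, a, b, d, e, hxa, hxb, hxd, -, hab, had, -, hbd, -, -, h1, h2, h3, -, h4, h5, h6⟩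
  refine paley i (a - x) (sub_ne_zero.2 hxa.symm) h1 (b - x) (sub_ne_zero.2 hxb.symm) h2
    (fun h => hab (sub_left_injective h).symm) ?_ (d - x) (sub_ne_zero.2 hxd.symm) h3
    (fun h => had (sub_left_injective h).symm) (fun h => hbd (sub_left_injective h).symm) ?_ ?_
  · rw [sub_sub_sub_cancel_right]; exact h4
  · rw [sub_sub_sub_cancel_right]; exact h5
  · rw [sub_sub_sub_cancel_right]; exact h6

lemma q_symm : ∀ u v : Fin 17, q (v - u) = q (u - v) := by decide +kernel

end RamseyAux

theorem ramsey_K4plus_K4plus :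
    (∀ c : Fin 18 → Fin 18 → Bool, IsSym c →
      HasMonoK4plus c true ∨ HasMonoK4plus c false) ∧
    (∃ c : Fin 17 → Fin 17 → Bool, IsSym c ∧
      ¬ HasMonoK4plus c true ∧ ¬ HasMonoK4plus c false) := by
  refine ⟨fun c hc => ?_, fun u v => RamseyAux.q (v - u), RamseyAux.q_symm,
    RamseyAux.lower true, RamseyAux.lower false⟩
  by_contra hcon
  rw [not_or] at hcon
  rcases RamseyAux.P44 hc true Finset.univ (by simp) with h | h
  · exact RamseyAux.upper_of hc hcon.1 hcon.2 h
  · exact RamseyAux.upper_of hc (i := false) hcon.2 hcon.1 h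
end

section
/- For all integers k ≥ 2 and 1 ≤ s ≤ k, one has 16·f(k−1, s−1) ≤ 5·f(k, s). -/
theorem f_ineq_three (k s : ℕ) (hk : 2 ≤ k) (hs1 : 1 ≤ s) (hs2 : s ≤ k) :
    16 * f (k - 1) (s - 1) ≤ 5 * f k s := by
  obtain ⟨d, rfl⟩ := Nat.exists_eq_add_of_le hs2
  obtain ⟨t, rfl⟩ := Nat.exists_eq_add_of_le' hs1
  have e1 : t + 1 + d - 1 = t + d := by omega
  have e2 : t + 1 + d - (t + 1) = d := by omega
  have e3 : t + d - t = d := by omega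
  have e4 : t + 1 - 1 = t := by omega
  unfold f
  rw [e1, e4, e2, e3]
  rcases Nat.even_or_odd' t with ⟨a, rfl | rfl⟩ <;>
    rcases Nat.even_or_odd' d with ⟨b, rfl | rfl⟩
  · rcases b with _ | b
    · have h : ¬ Even (2 * a + 1) := by simp
      simp [h]
      have : 0 < 17 ^ a := by positivity
      omega
    · have h : ¬ Even (2 * a + 1) := by simp
      have h2 : Even (2 * (b + 1)) := by simp
      have h3 : ¬ Odd (2 * (b + 1)) := by simp
      have h4 : ¬ (2 * a + 1 = 2 * a + 1 + 2 * (b + 1)) := by omega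
      have h5 : (2 * (b + 1) - 2) / 2 = b := by omega
      have h6 : (2 * (b + 1)) / 2 = b + 1 := by omega
      have h7 : (2 * a) / 2 = a := by omega
      have h8 : Even (2 * a) := by simp
      simp only [h, h2, h3, h4, h5, h6, h7, h8, e4, and_self, and_true, if_true, if_false]
      apply le_of_eq; ring
  · have h : ¬ Even (2 * a + 1) := by simp
    have h2 : ¬ Even (2 * b + 1) := by simp
    have h3 : Odd (2 * b + 1) := by simp
    have h4 : ¬ (2 * a + 1 = 2 * a + 1 + (2 * b + 1)) := by omega
    have h5 : (2 * b + 1 - 1) / 2 = b := by omega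
    have h7 : (2 * a) / 2 = a := by omega
    have h8 : Even (2 * a) := by simp
    simp only [h, h2, h3, h4, h5, h7, h8, e4, and_false, false_and, if_true, if_false]
    have : 0 < 17 ^ a * 5 ^ b := by positivity
    nlinarith
  · have h : ¬ Even (2 * a + 1) := by simp
    have h8 : Even (2 * a + 1 + 1) := by rw [Nat.even_iff]; omega
    have h7 : (2 * a + 1 + 1) / 2 = a + 1 := by omega
    have h9 : (2 * a + 1 - 1) / 2 = a := by omega
    have h2 : Even (2 * b) := by simp
    have h3 : ¬ Odd (2 * b) := by simp
    have h6 : 2 * b / 2 = b := by omega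
    rcases b with _ | b
    · simp [h, h8, h7, h9]
      have : 0 < 17 ^ a := by positivity
      rw [pow_succ]
      omega
    · have h4 : ¬ (2 * a + 1 = 2 * a + 1 + 2 * (b + 1)) := by omega
      have h5 : (2 * (b + 1) - 2) / 2 = b := by omega
      simp only [h, h2, h3, h4, h5, h6, h7, h8, h9, and_self, false_and, if_true, if_false]
      have : 0 < 17 ^ a * 5 ^ b := by positivity
      rw [pow_succ, pow_succ]
      nlinarith
  · have h : ¬ Even (2 * a + 1) := by simp
    have h8 : Even (2 * a + 1 + 1) := by rw [Nat.even_iff]; omega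
    have h7 : (2 * a + 1 + 1) / 2 = a + 1 := by omega
    have h9 : (2 * a + 1 - 1) / 2 = a := by omega
    have h2 : ¬ Even (2 * b + 1) := by simp
    have h3 : Odd (2 * b + 1) := by simp
    have h4 : ¬ (2 * a + 1 = 2 * a + 1 + (2 * b + 1)) := by omega
    have h5 : (2 * b + 1 - 1) / 2 = b := by omega
    simp only [h, h2, h3, h4, h5, h7, h8, h9, and_false, if_true, if_false]
    have : 0 < 17 ^ a * 5 ^ b := by positivity
    rw [pow_succ]
    nlinarith
end

section
/- For all integers k ≥ 3 and 1 ≤ s ≤ k−1, one has 8·f(k−2, s−1) ≤ f(k, s). -/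
theorem f_ineq_four (k s : ℕ) (hk : 3 ≤ k) (hs1 : 1 ≤ s) (hs2 : s ≤ k - 1) :
    8 * f (k - 2) (s - 1) ≤ f k s := by
  obtain ⟨d, rfl⟩ : ∃ d, k = s + (d + 1) := ⟨k - s - 1, by omega⟩
  obtain ⟨t, rfl⟩ : ∃ t, s = t + 1 := ⟨s - 1, by omega⟩
  have e1 : t + 1 + (d + 1) - 2 = t + d := by omega
  have e2 : t + 1 - 1 = t := by omega
  have e3 : t + d - t = d := by omega
  have e4 : t + 1 + (d + 1) - (t + 1) = d + 1 := by omega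
  have e5 : t + 1 ≠ t + 1 + (d + 1) := by omega
  unfold f
  rw [e1, e2, e3, e4, if_neg e5]
  rcases Nat.even_or_odd' t with ⟨a, rfl | rfl⟩ <;> rcases Nat.even_or_odd' d with ⟨b, rfl | rfl⟩
  · have h1 : Even (2 * a) := by simp
    have h2 : Even (2 * b) := by simp
    have h3 : ¬ Even (2 * a + 1) := by simp
    have h4 : Odd (2 * b + 1) := by simp
    simp only [h1, h2, h3, h4, and_self, false_and, if_true, if_false]
    have g1 : 2 * a / 2 = a := by omega
    have g2 : 2 * b / 2 = b := by omega
    simp only [Nat.add_sub_cancel, g1, g2]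
    exact le_of_eq (by ring)
  · have h1 : Even (2 * a) := by simp
    have h2 : ¬ Even (2 * b + 1) := by simp
    have h3 : ¬ Even (2 * a + 1) := by simp
    have h4 : ¬ Odd (2 * b + 1 + 1) := by simp [Nat.even_add_one]
    simp only [h1, h2, h3, h4, and_false, false_and, if_true, if_false]
    have g1 : 2 * a / 2 = a := by omega
    have g2 : 2 * b / 2 = b := by omega
    have g3 : 2 * b + 1 + 1 - 2 = 2 * b := by omega
    simp only [Nat.add_sub_cancel, g1, g2, g3]
    exact le_of_eq (by ring)
  · have h1 : ¬ Even (2 * a + 1) := by simp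
    have h2 : ¬ Odd (2 * b) := by simp
    have h3 : Even (2 * a + 1 + 1) := by simp [Nat.even_add_one]
    have h4 : ¬ Even (2 * b + 1) := by simp
    simp only [h1, h2, h3, h4, and_false, false_and, if_true, if_false]
    have g1 : 2 * a / 2 = a := by omega
    have g2 : (2 * a + 1 + 1) / 2 = a + 1 := by omega
    have g3 : 2 * b / 2 = b := by omega
    have hp := Nat.zero_le (17 ^ a)
    rcases b with _ | c
    · simp only [Nat.mul_zero, Nat.add_zero, if_true, Nat.add_sub_cancel, g1, g2, pow_succ]
      norm_num
      omega
    · have g4 : 2 * a + 1 ≠ 2 * a + 1 + 2 * (c + 1) := by omega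
      have g5 : (2 * (c + 1) - 2) / 2 = c := by omega
      simp only [g4, if_false, Nat.add_sub_cancel, g1, g2, g3, g5, pow_succ]
      nlinarith [Nat.zero_le (17 ^ a * 5 ^ c)]
  · have h1 : ¬ Even (2 * a + 1) := by simp
    have h2 : Odd (2 * b + 1) := by simp
    have h3 : Even (2 * a + 1 + 1) := by simp [Nat.even_add_one]
    have h4 : Even (2 * b + 1 + 1) := by simp [Nat.even_add_one]
    have h5 : 2 * a + 1 ≠ 2 * a + 1 + (2 * b + 1) := by omega
    simp only [h1, h2, h3, h4, h5, and_self, false_and, if_true, if_false]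
    have g1 : 2 * a / 2 = a := by omega
    have g2 : (2 * a + 1 + 1) / 2 = a + 1 := by omega
    have g3 : 2 * b / 2 = b := by omega
    have g4 : (2 * b + 1 + 1) / 2 = b + 1 := by omega
    simp only [Nat.add_sub_cancel, g1, g2, g3, g4, pow_succ]
    nlinarith [Nat.zero_le (17 ^ a * 5 ^ b)]
end

section
/- For all integers k ≥ 2 and 1 ≤ s ≤ k, one has f(k, s−1) + f(k−1, s−1) ≤ f(k, s). -/
theorem f_ee (m e : ℕ) : f (2*m+2*e) (2*m) = 17^m * 5^e := by
  have h : 2*m+2*e-2*m = 2*e := by omega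
  simp [f, h]

theorem f_eo (m e : ℕ) : f (2*m+2*e+1) (2*m) = 2 * 17^m * 5^e := by
  have h : 2*m+2*e+1-2*m = 2*e+1 := by omega
  simp [f, h]

theorem f_oz (m : ℕ) : f (2*m+1) (2*m+1) = 4 * 17^m := by
  simp [f]

theorem f_oo (m e : ℕ) : f (2*m+2*e+2) (2*m+1) = 8 * 17^m * 5^e := by
  have h : 2*m+2*e+2-(2*m+1) = 2*e+1 := by omega
  have h2 : ¬ (2*m+1 = 2*m+2*e+2) := by omega
  simp only [f, h, h2]
  simp

theorem f_oe (m e : ℕ) : f (2*m+2*e+3) (2*m+1) = 16 * 17^m * 5^e := by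
  have h : 2*m+2*e+3-(2*m+1) = 2*(e+1) := by omega
  have h2 : ¬ (2*m+1 = 2*m+2*e+3) := by omega
  have h3 : ¬ Odd (2*(e+1)) := by simp
  have h4 : (2*(e+1) - 2)/2 = e := by omega
  simp only [f, h, h2, h3, h4]
  simp

theorem f_ineq_five (k s : ℕ) (hk : 2 ≤ k) (hs1 : 1 ≤ s) (hs2 : s ≤ k) :
    f k (s - 1) + f (k - 1) (s - 1) ≤ f k s := by
  obtain ⟨d, rfl⟩ := Nat.exists_eq_add_of_le hs2
  obtain ⟨t, rfl⟩ := Nat.exists_eq_add_of_le hs1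
  have e1 : 1 + t - 1 = t := by omega
  have e2 : 1 + t + d - 1 = t + d := by omega
  rw [e1, e2]
  have hd : d = 0 ∨ (∃ e, d = 2*e+1) ∨ ∃ e, d = 2*e+2 := by
    rcases Nat.even_or_odd' d with ⟨e, h | h⟩
    · rcases e with _ | e
      · left; omega
      · right; right; exact ⟨e, by omega⟩
    · right; left; exact ⟨e, h⟩
  obtain ⟨m, rfl | rfl⟩ := Nat.even_or_odd' t
  · rcases hd with rfl | ⟨e, rfl⟩ | ⟨e, rfl⟩
    · have a := f_eo m 0
      have b := f_ee m 0
      have c := f_oz m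
      rw [show 1+2*m+0 = 2*m+2*0+1 by ring, a, show 2*m+0 = 2*m+2*0 by ring, b,
        show 2*m+2*0+1 = 2*m+1 by ring, show 1+2*m = 2*m+1 by ring, c]
      simp only [pow_zero]; omega
    · rw [show 1+2*m+(2*e+1) = 2*m+2*e+2 by ring, show 1+2*m = 2*m+1 by ring, f_oo,
        show 2*m+2*e+2 = 2*m+2*(e+1) by ring, f_ee, show 2*m+(2*e+1) = 2*m+2*e+1 by ring, f_eo]
      have := Nat.zero_le (17^m*5^e)
      rw [pow_succ]; nlinarith
    · rw [show 1+2*m+(2*e+2) = 2*m+2*e+3 by ring, show 1+2*m = 2*m+1 by ring, f_oe,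
        show 2*m+2*e+3 = 2*m+2*(e+1)+1 by ring, f_eo, show 2*m+(2*e+2) = 2*m+2*(e+1) by ring, f_ee]
      have := Nat.zero_le (17^m*5^e)
      rw [pow_succ]; nlinarith
  · rcases hd with rfl | ⟨e, rfl⟩ | ⟨e, rfl⟩
    · have a := f_oo m 0
      have b := f_oz m
      have c := f_ee (m+1) 0
      simp only [mul_zero, add_zero, pow_zero, mul_one] at a c ⊢
      rw [show 1+(2*m+1) = 2*m+2 by ring, a, b, show 2*m+2 = 2*(m+1) by ring, c, pow_succ]
      omega
    · rw [show 1+(2*m+1)+(2*e+1) = 2*m+2*e+3 by ring, f_oe,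
        show 2*m+1+(2*e+1) = 2*m+2*e+2 by ring, f_oo,
        show 2*m+2*e+3 = 2*(m+1)+2*e+1 by ring, show 1+(2*m+1) = 2*(m+1) by ring, f_eo]
      have := Nat.zero_le (17^m*5^e)
      rw [pow_succ]; nlinarith
    · rw [show 1+(2*m+1)+(2*e+2) = 2*m+2*(e+1)+2 by ring, f_oo,
        show 2*m+1+(2*e+2) = 2*m+2*e+3 by ring, f_oe,
        show 2*m+2*(e+1)+2 = 2*(m+1)+2*(e+1) by ring, show 1+(2*m+1) = 2*(m+1) by ring, f_ee]
      have := Nat.zero_le (17^m*5^e)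
      rw [pow_succ, pow_succ]; nlinarith
end

section
/- Let the edges of a finite complete graph be 2-colored with red and blue so that there is neither a red copy of K4^+ nor a blue copy of K4^+. Then every vertex has at most 8 red neighbors and at most 8 blue neighbors. -/
open Finset in
/-- `R(3,4) ≤ 9`: a triangle-free graph on 9 vertices has an independent set of size 4. -/
theorem ramsey_three_four (G : SimpleGraph (Fin 9)) [DecidableRel G.Adj]
    (hT : ∀ a b d, G.Adj a b → G.Adj a d → G.Adj b d → False) :
    ∃ a b d e, a ≠ b ∧ a ≠ d ∧ a ≠ e ∧ b ≠ d ∧ b ≠ e ∧ d ≠ e ∧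
      ¬ G.Adj a b ∧ ¬ G.Adj a d ∧ ¬ G.Adj a e ∧ ¬ G.Adj b d ∧ ¬ G.Adj b e ∧ ¬ G.Adj d e := by
  by_contra hF
  have hF' : ∀ a b d e, a ≠ b → a ≠ d → a ≠ e → b ≠ d → b ≠ e → d ≠ e →
      ¬ G.Adj a b → ¬ G.Adj a d → ¬ G.Adj a e → ¬ G.Adj b d → ¬ G.Adj b e → ¬ G.Adj d e →
      False := by
    intro a b d e h1 h2 h3 h4 h5 h6 g1 g2 g3 g4 g5 g6
    exact hF ⟨a, b, d, e, h1, h2, h3, h4, h5, h6, g1, g2, g3, g4, g5, g6⟩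
  -- red degree at most 3
  have hle : ∀ v, G.degree v ≤ 3 := by
    intro v
    by_contra h
    obtain ⟨s, hs, hc⟩ := exists_subset_card_eq (s := G.neighborFinset v) (n := 4)
      (by rw [G.card_neighborFinset_eq_degree]; omega)
    obtain ⟨a, b, d, e, h1, h2, h3, h4, h5, h6, rfl⟩ := card_eq_four.1 hc
    have m : ∀ x ∈ ({a, b, d, e} : Finset (Fin 9)), G.Adj v x := fun x hx => by
      simpa using hs hx
    have ma := m a (by simp)
    have mb := m b (by simp)
    have md := m d (by simp)
    have me := m e (by simp)
    exact hF' a b d e h1 h2 h3 h4 h5 h6 (hT v a b ma mb) (hT v a d ma md) (hT v a e ma me)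
      (hT v b d mb md) (hT v b e mb me) (hT v d e md me)
  -- red degree at least 3
  have hge : ∀ v, 3 ≤ G.degree v := by
    intro v
    by_contra h
    have hS : 6 ≤ (univ.filter fun u => u ≠ v ∧ ¬ G.Adj v u).card := by
      have e : (univ.filter fun u => u ≠ v ∧ ¬ G.Adj v u)
          = univ \ insert v (G.neighborFinset v) := by
        ext u; simp
      rw [e, card_sdiff_of_subset (subset_univ _)]
      have := card_insert_le v (G.neighborFinset v)
      rw [G.card_neighborFinset_eq_degree] at this
      simp only [card_univ, Fintype.card_fin]
      omega
    set S := univ.filter fun u => u ≠ v ∧ ¬ G.Adj v u with hSd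
    obtain ⟨u, hu⟩ : S.Nonempty := card_pos.1 (by omega)
    have hE : 5 ≤ (S.erase u).card := by rw [card_erase_of_mem hu]; omega
    have hsplit := card_filter_add_card_filter_not (s := S.erase u) (fun x => G.Adj u x)
    have memS : ∀ x ∈ S, x ≠ v ∧ ¬ G.Adj v x := fun x hx => by simpa [hSd] using hx
    obtain ⟨huv, hvu⟩ := memS u hu
    rcases (by omega : 3 ≤ ((S.erase u).filter fun x => G.Adj u x).card ∨
        3 ≤ ((S.erase u).filter fun x => ¬ G.Adj u x).card) with h3 | h3
    · obtain ⟨s, hs, hc⟩ := exists_subset_card_eq h3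
      obtain ⟨a, b, d, h1, h2, h3, rfl⟩ := card_eq_three.1 hc
      have m : ∀ x ∈ ({a, b, d} : Finset (Fin 9)), G.Adj u x ∧ x ≠ v ∧ ¬ G.Adj v x :=
        fun x hx => by
          have := mem_filter.1 (hs hx)
          exact ⟨this.2, memS x (mem_of_mem_erase this.1)⟩
      obtain ⟨a1, a2, a3⟩ := m a (by simp)
      obtain ⟨b1, b2, b3⟩ := m b (by simp)
      obtain ⟨d1, d2, d3⟩ := m d (by simp)
      exact hF' v a b d a2.symm b2.symm d2.symm h1 h2 h3 a3 b3 d3 (hT u a b a1 b1)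
        (hT u a d a1 d1) (hT u b d b1 d1)
    · obtain ⟨s, hs, hc⟩ := exists_subset_card_eq h3
      obtain ⟨a, b, d, h1, h2, h3, rfl⟩ := card_eq_three.1 hc
      have m : ∀ x ∈ ({a, b, d} : Finset (Fin 9)),
          ¬ G.Adj u x ∧ u ≠ x ∧ x ≠ v ∧ ¬ G.Adj v x :=
        fun x hx => by
          have := mem_filter.1 (hs hx)
          exact ⟨this.2, (ne_of_mem_erase this.1).symm, memS x (mem_of_mem_erase this.1)⟩
      obtain ⟨a1, a0, a2, a3⟩ := m a (by simp)
      obtain ⟨b1, b0, b2, b3⟩ := m b (by simp)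
      obtain ⟨d1, d0, d2, d3⟩ := m d (by simp)
      have key : ∀ x y, x ≠ y → u ≠ x → u ≠ y → x ≠ v → y ≠ v → ¬ G.Adj u x → ¬ G.Adj u y →
          ¬ G.Adj v x → ¬ G.Adj v y → G.Adj x y := by
        intro x y hxy p1 p2 p3 p4 p5 p6 p7 p8
        by_contra hn
        exact hF' v u x y huv.symm p3.symm p4.symm p1 p2 hxy hvu p7 p8 p5 p6 hn
      exact hT a b d (key a b h1 a0 b0 a2 b2 a1 b1 a3 b3) (key a d h2 a0 d0 a2 d2 a1 d1 a3 d3)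
        (key b d h3 b0 d0 b2 d2 b1 d1 b3 d3)
  have hs := G.sum_degrees_eq_twice_card_edges
  have hd : ∀ v, G.degree v = 3 := fun v => le_antisymm (hle v) (hge v)
  simp only [hd, sum_const, card_univ, Fintype.card_fin, smul_eq_mul] at hs
  omega

open Finset in
/-- Degree bound in an arbitrary colour `i`, where `j` is the other colour. -/
theorem mono_degree_bound {n : ℕ} (c : Fin n → Fin n → Bool) (hsym : IsSym c) (i j : Bool)
    (hij : ∀ b : Bool, b ≠ i ↔ b = j)
    (hi : ¬ HasMonoK4plus c i) (hj : ¬ HasMonoK4plus c j) (v : Fin n) :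
    (Finset.univ.filter fun u : Fin n => u ≠ v ∧ c v u = i).card ≤ 8 := by
  by_contra h
  set N := Finset.univ.filter fun u : Fin n => u ≠ v ∧ c v u = i with hN
  have memN : ∀ x ∈ N, x ≠ v ∧ c v x = i := fun x hx => by simpa [hN] using hx
  -- no triangle of colour `i` inside `N`
  have hT : ∀ a ∈ N, ∀ b ∈ N, ∀ d ∈ N, a ≠ b → a ≠ d → b ≠ d →
      c a b = i → c a d = i → c b d = i → False := by
    intro a ha b hb d hd h1 h2 h3 g1 g2 g3
    obtain ⟨e, he, hn⟩ := exists_mem_notMem_of_card_lt_card (s := {a, b, d}) (t := N)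
      (lt_of_le_of_lt card_le_three (by omega))
    simp only [mem_insert, mem_singleton, not_or] at hn
    obtain ⟨n1, n2, n3⟩ := hn
    exact hi ⟨v, a, b, d, e, (memN a ha).1.symm, (memN b hb).1.symm, (memN d hd).1.symm,
      (memN e he).1.symm, h1, h2, Ne.symm n1, h3, Ne.symm n2, Ne.symm n3, (memN a ha).2,
      (memN b hb).2, (memN d hd).2, (memN e he).2, g1, g2, g3⟩
  obtain ⟨s, hsN, hs⟩ := exists_subset_card_eq (s := N) (n := 9) (by omega)
  let f := s.orderEmbOfFin hs
  have hf : ∀ x, f x ∈ N := fun x => hsN (s.orderEmbOfFin_mem hs x)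
  have finj : ∀ {x y}, x ≠ y → f x ≠ f y := fun hxy hh => hxy (f.injective hh)
  let G : SimpleGraph (Fin 9) :=
    { Adj := fun x y => x ≠ y ∧ c (f x) (f y) = i
      symm := ⟨fun x y hxy => ⟨hxy.1.symm, by rw [hsym]; exact hxy.2⟩⟩
      loopless := ⟨fun x hx => hx.1 rfl⟩ }
  have : DecidableRel G.Adj := Classical.decRel _
  obtain ⟨a, b, d, e, h1, h2, h3, h4, h5, h6, g1, g2, g3, g4, g5, g6⟩ :=
    ramsey_three_four G (fun a b d p q r => hT _ (hf a) _ (hf b) _ (hf d) (finj p.1) (finj q.1)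
      (finj r.1) p.2 q.2 r.2)
  have conv : ∀ x y, x ≠ y → ¬ G.Adj x y → c (f x) (f y) = j := fun x y hxy hn =>
    (hij _).1 fun hh => hn ⟨hxy, hh⟩
  replace g1 := conv _ _ h1 g1
  replace g2 := conv _ _ h2 g2
  replace g3 := conv _ _ h3 g3
  replace g4 := conv _ _ h4 g4
  replace g5 := conv _ _ h5 g5
  replace g6 := conv _ _ h6 g6
  -- remaining vertices of `N`
  set M := N \ {f a, f b, f d, f e} with hM
  have hMc : 5 ≤ M.card := by
    have := le_card_sdiff {f a, f b, f d, f e} N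
    rw [← hM] at this
    have h4 : ({f a, f b, f d, f e} : Finset (Fin n)).card ≤ 4 := card_le_four
    omega
  have memM : ∀ x ∈ M, x ∈ N ∧ f a ≠ x ∧ c (f a) x = i := by
    intro x hx
    simp only [hM, mem_sdiff, mem_insert, mem_singleton, not_or] at hx
    obtain ⟨hx, n1, n2, n3, n4⟩ := hx
    refine ⟨hx, Ne.symm n1, ?_⟩
    by_contra hh
    exact hj ⟨f a, f b, f d, f e, x, finj h1, finj h2, finj h3, Ne.symm n1, finj h4, finj h5,
      Ne.symm n2, finj h6, Ne.symm n3, Ne.symm n4, g1, g2, g3, (hij _).1 hh, g4, g5, g6⟩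
  have hMj : ∀ x ∈ M, ∀ y ∈ M, x ≠ y → c x y = j := by
    intro x hx y hy hxy
    refine (hij _).1 fun hh => ?_
    obtain ⟨x1, x2, x3⟩ := memM x hx
    obtain ⟨y1, y2, y3⟩ := memM y hy
    exact hT _ (hf a) x x1 y y1 x2 y2 hxy x3 y3 hh
  obtain ⟨t, htM, ht⟩ := exists_subset_card_eq hMc
  let k := t.orderEmbOfFin ht
  have hk : ∀ x, k x ∈ M := fun x => htM (t.orderEmbOfFin_mem ht x)
  have kinj : ∀ {x y}, x ≠ y → k x ≠ k y := fun hxy hh => hxy (k.injective hh)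
  have kj : ∀ {x y}, x ≠ y → c (k x) (k y) = j := fun hxy => hMj _ (hk _) _ (hk _) (kinj hxy)
  refine hj ⟨k 0, k 1, k 2, k 3, k 4, ?_, ?_, ?_, ?_, ?_, ?_, ?_, ?_, ?_, ?_, ?_, ?_, ?_, ?_, ?_,
    ?_, ?_⟩ <;> first | exact kinj (by decide) | exact kj (by decide)

theorem red_blue_degree_bound {n : ℕ} (c : Fin n → Fin n → Bool) (hsym : IsSym c)
    (hred : ¬ HasMonoK4plus c true) (hblue : ¬ HasMonoK4plus c false) :
    ∀ v : Fin n,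
      (Finset.univ.filter fun u : Fin n => u ≠ v ∧ c v u = true).card ≤ 8 ∧
      (Finset.univ.filter fun u : Fin n => u ≠ v ∧ c v u = false).card ≤ 8 := by
  intro v
  exact ⟨mono_degree_bound c hsym true false (by decide) hred hblue v,
    mono_degree_bound c hsym false true (by decide) hblue hred v⟩
end

section
/- Let k ≥ 1, 0 ≤ s ≤ k, and n ≥ 1 be integers. Suppose there exists a Gallai coloring of the complete graph on n vertices with colors from {1,...,k} containing no monochromatic copy of K4^+ in any color i ∈ {1,...,s} and no monochromatic copy of K3 in any color i ∈ {s+1,...,k}. Then there exists a Gallai coloring of the complete graph on 17n vertices with colors from {1,...,k+2} containing no monochromatic copy of K4^+ in any color i ∈ {1,...,s} ∪ {k+1, k+2} and no monochromatic copy of K3 in any color i ∈ {s+1,...,k}. -/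
/-- Nonzero quadratic residues modulo 17. -/
def qr17 (x : Fin 17) : Bool :=
  decide (x.val ∈ [1, 2, 4, 8, 9, 13, 15, 16])

theorem qr17_symm : ∀ x y : Fin 17, qr17 (x - y) = qr17 (y - x) := by decide

set_option maxRecDepth 100000 in
set_option maxHeartbeats 4000000 in
theorem qr17_aux : ∀ t : Bool, ∀ x : Fin 17, x ≠ 0 → qr17 x = t →
    ∀ y : Fin 17, y ≠ 0 → qr17 y = t → x ≠ y → qr17 (x - y) = t →
    ∀ z : Fin 17, z ≠ 0 → qr17 z = t → x ≠ z → qr17 (x - z) = t → y ≠ z →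
      qr17 (y - z) ≠ t := by decide +kernel

theorem qr17_noK4 (t : Bool) (x a b d : Fin 17) (hxa : x ≠ a) (hxb : x ≠ b) (hxd : x ≠ d)
    (hab : a ≠ b) (had : a ≠ d) (hbd : b ≠ d)
    (h1 : qr17 (x - a) = t) (h2 : qr17 (x - b) = t) (h3 : qr17 (x - d) = t)
    (h4 : qr17 (a - b) = t) (h5 : qr17 (a - d) = t) (h6 : qr17 (b - d) = t) : False := by
  have e : ∀ p q : Fin 17, (x - p) - (x - q) = q - p := fun p q => by abel
  have ne : ∀ p q : Fin 17, p ≠ q → x - p ≠ x - q := fun p q h h' => h (sub_right_injective h')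
  refine qr17_aux t (x - a) (sub_ne_zero.2 hxa) h1 (x - b) (sub_ne_zero.2 hxb) h2 (ne _ _ hab) ?_
    (x - d) (sub_ne_zero.2 hxd) h3 (ne _ _ had) ?_ (ne _ _ hbd) ?_
  · rw [e, qr17_symm, h4]
  · rw [e, qr17_symm, h5]
  · rw [e, qr17_symm, h6]

theorem blowup_K17 (k s n : ℕ) (hk : 1 ≤ k) (hs : s ≤ k) (hn : 1 ≤ n)
    (h : ∃ c : Fin n → Fin n → ℕ, IsSym c ∧
      (∀ u v : Fin n, u ≠ v → c u v ∈ Finset.Icc 1 k) ∧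
      NoRainbowTriangle c ∧
      (∀ i ∈ Finset.Icc 1 s, ¬ HasMonoK4plus c i) ∧
      (∀ i ∈ Finset.Icc (s + 1) k, ¬ HasMonoK3 c i)) :
    ∃ c : Fin (17 * n) → Fin (17 * n) → ℕ, IsSym c ∧
      (∀ u v : Fin (17 * n), u ≠ v → c u v ∈ Finset.Icc 1 (k + 2)) ∧
      NoRainbowTriangle c ∧
      (∀ i ∈ (Finset.Icc 1 s ∪ {k + 1, k + 2} : Finset ℕ), ¬ HasMonoK4plus c i) ∧
      (∀ i ∈ (Finset.Icc (s + 1) k : Finset ℕ), ¬ HasMonoK3 c i) := by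
  obtain ⟨c, hsym, hrange, hgal, h4, h3⟩ := h
  let f : Fin (17 * n) → Fin 17 := fun u => (finProdFinEquiv.symm u).1
  let g : Fin (17 * n) → Fin n := fun u => (finProdFinEquiv.symm u).2
  have hfg : ∀ u v, u ≠ v → f u = f v → g u ≠ g v := fun u v huv h1 h2 =>
    huv (finProdFinEquiv.symm.injective (Prod.ext h1 h2))
  obtain ⟨C, hC⟩ : ∃ C : Fin (17 * n) → Fin (17 * n) → ℕ, ∀ u v, C u v =
      if f u = f v then c (g u) (g v) else if qr17 (f u - f v) = true then k + 1 else k + 2 :=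
    ⟨_, fun _ _ => rfl⟩
  clear_value f g
  have hin : ∀ u v, f u = f v → C u v = c (g u) (g v) := fun u v h => by rw [hC, if_pos h]
  have hout : ∀ u v, f u ≠ f v → C u v = if qr17 (f u - f v) = true then k + 1 else k + 2 :=
    fun u v h => by rw [hC, if_neg h]
  have hCs : IsSym C := by
    intro u v
    rw [hC, hC, qr17_symm (f u) (f v), hsym (g u) (g v)]
    simp only [eq_comm]
  have hbig : ∀ u v, f u ≠ f v → k < C u v := by
    intro u v h
    rw [hout u v h]
    split_ifs <;> omega
  -- small colour edges stay inside a block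
  have hsmall : ∀ u v i, i ≤ k → C u v = i → f u = f v := by
    intro u v i hi h
    by_contra hne
    have := hbig u v hne
    omega
  have hlarge : ∀ u v i, k < i → u ≠ v → C u v = i → f u ≠ f v := by
    intro u v i hi hne h hf
    rw [hin u v hf] at h
    have := Finset.mem_Icc.1 (hrange _ _ (hfg u v hne hf))
    omega
  have htwo : ∀ (t : Bool) u v, f u ≠ f v → C u v = (if t = true then k + 1 else k + 2) →
      qr17 (f u - f v) = t := by
    intro t u v h h'
    rw [hout u v h] at h'
    cases t <;> cases hq : qr17 (f u - f v) <;> simp [hq] at h' ⊢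
  have hnew : ∀ t : Bool, ¬ HasMonoK4plus C (if t = true then k + 1 else k + 2) := by
    rintro t ⟨x, a, b, d, e, hxa, hxb, hxd, -, hab, had, -, hbd, -, -, e1, e2, e3, -, e4, e5, e6⟩
    have hk' : k < (if t = true then k + 1 else k + 2) := by split_ifs <;> omega
    have n1 := hlarge _ _ _ hk' hxa e1
    have n2 := hlarge _ _ _ hk' hxb e2
    have n3 := hlarge _ _ _ hk' hxd e3
    have n4 := hlarge _ _ _ hk' hab e4
    have n5 := hlarge _ _ _ hk' had e5
    have n6 := hlarge _ _ _ hk' hbd e6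
    exact qr17_noK4 t _ _ _ _ n1 n2 n3 n4 n5 n6 (htwo t _ _ n1 e1) (htwo t _ _ n2 e2)
      (htwo t _ _ n3 e3) (htwo t _ _ n4 e4) (htwo t _ _ n5 e5) (htwo t _ _ n6 e6)
  refine ⟨C, hCs, ?_, ?_, ?_, ?_⟩
  · intro u v huv
    rw [Finset.mem_Icc]
    by_cases hf : f u = f v
    · have := Finset.mem_Icc.1 (hrange _ _ (hfg u v huv hf))
      rw [hin u v hf]
      omega
    · rw [hout u v hf]
      split_ifs <;> omega
  · intro u v w huv huw hvw
    by_cases h1 : f u = f v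
    · by_cases h2 : f u = f w
      · have h5 : f v = f w := h1.symm.trans h2
        rw [hin _ _ h1, hin _ _ h2, hin _ _ h5]
        exact hgal _ _ _ (hfg _ _ huv h1) (hfg _ _ huw h2) (hfg _ _ hvw h5)
      · have h5 : f v ≠ f w := fun h => h2 (h1.trans h)
        right; right
        rw [hout _ _ h2, hout _ _ h5, h1]
    · by_cases h2 : f u = f w
      · right; left
        have h5 : f v ≠ f w := fun h => h1 (h2.trans h.symm)
        rw [hCs u v, hout _ _ (Ne.symm h1), hout _ _ h5, h2]
      · by_cases h5 : f v = f w
        · left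
          rw [hout _ _ h1, hout _ _ h2, h5]
        · rw [hout _ _ h1, hout _ _ h2, hout _ _ h5]
          split_ifs <;> simp
  · intro i hi
    simp only [Finset.mem_union, Finset.mem_insert, Finset.mem_singleton] at hi
    rcases hi with hi | rfl | rfl
    · have hik : i ≤ k := (Finset.mem_Icc.1 hi).2.trans hs
      rintro ⟨x, a, b, d, e, hxa, hxb, hxd, hxe, hab, had, hae, hbd, hbe, hde,
        e1, e2, e3, e4, e5, e6, e7⟩
      have n1 := hsmall _ _ _ hik e1
      have n2 := hsmall _ _ _ hik e2
      have n3 := hsmall _ _ _ hik e3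
      have n4 := hsmall _ _ _ hik e4
      have n5 := n1.symm.trans n2
      have n6 := n1.symm.trans n3
      have n7 := n2.symm.trans n3
      rw [hin _ _ n1] at e1
      rw [hin _ _ n2] at e2
      rw [hin _ _ n3] at e3
      rw [hin _ _ n4] at e4
      rw [hin _ _ n5] at e5
      rw [hin _ _ n6] at e6
      rw [hin _ _ n7] at e7
      exact h4 i hi ⟨g x, g a, g b, g d, g e, hfg _ _ hxa n1, hfg _ _ hxb n2, hfg _ _ hxd n3,
        hfg _ _ hxe n4, hfg _ _ hab n5, hfg _ _ had n6, hfg _ _ hae (n1.symm.trans n4),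
        hfg _ _ hbd n7, hfg _ _ hbe (n2.symm.trans n4), hfg _ _ hde (n3.symm.trans n4),
        e1, e2, e3, e4, e5, e6, e7⟩
    · simpa using hnew true
    · simpa using hnew false
  · rintro i hi ⟨a, b, d, hab, had, hbd, e1, e2, e3⟩
    have hik : i ≤ k := (Finset.mem_Icc.1 hi).2
    have n1 := hsmall _ _ _ hik e1
    have n2 := hsmall _ _ _ hik e2
    have n3 := hsmall _ _ _ hik e3
    rw [hin _ _ n1] at e1
    rw [hin _ _ n2] at e2
    rw [hin _ _ n3] at e3
    exact h3 i hi ⟨g a, g b, g d, hfg _ _ hab n1, hfg _ _ had n2, hfg _ _ hbd n3, e1, e2, e3⟩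
end
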